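/- Let α, β ∈ ℝ with α > −1, β > −1, (α + β + 6)αβ ≤ 6 and αβ ≤ 6. Then for every f ∈ 𝒮 with logarithmic coefficients γ_n, the inequality ∑_{n=1}^∞ (n²/((n+α)(n+β))) |γ_n|² ≤ ∑_{n=1}^∞ 1/((n+α)(n+β)) holds; the inequality is strict unless f(z) = z/(1−e^{iθ}z)² for some θ ∈ ℝ. -/

import Mathlib

/-!
Write `Φ_N = ∑_{k ≤ N} (N + 1 - k) (k |γ_k|² - 1 / k)` and `w_k = k / ((k + α) (k + β))`. The claimed
difference of the two sides is `∑ w_k (k |γ_k|² - 1 / k)`, and summing by parts twice (`abel_twice`)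
turns it, up to a truncation that disappears in the limit, into `∑ (Δ² w)_N Φ_N`. The hypotheses on
`α, β` say that `w` is convex: `(Δ² w)_N` has the sign of
`N (N + 1) (N + 2) - α β (3 N + 3 + α + β)`, which is nonnegative for `N = 1` by assumption and
positive for `N ≥ 2` (`wt2_nonneg`, `wt2_pos`). So the inequality follows from Milin's inequality
`Φ_N ≤ 0` (`milin`).

Milin's inequality is proved by de Branges' method, with a discrete chain instead of Löwner's
differential equation. After dilation and scaling, `f` is a bounded univalent function
`z exp (-v z)` with `Re v ≥ 0`; such functions form the class `InV u`, where `u = v 0` measures the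
size of the derivative at `0`. A non-trivial member of the class factors non-trivially as a
composition (`InV.factor`: its image is enclosed in a larger simply connected proper subdomain of
the disc, which is then mapped onto the disc by the Riemann mapping theorem), and by compactness
inner factors with arbitrarily small parameter `s` can be split off (`InV.peel`). Splitting one off
changes the weighted functional `Phi` by a term that is nonpositive up to `O(s²)` (`one_step`):
to first order the change is linear in the inner factor, so by the Poisson formula (`averaging`) it
suffices to check the kernels `(1 + κ z) / (1 - κ z)`, where it is de Branges' sum of squares
(`kernel_nonneg`). Iterating gives `chain_bound` and `milin_of_weights` for every solution of de
Branges' weight system.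

The weights for Milin's inequality are Weinstein's: `Λ_k (q)` is the coefficient of `u ^ k` in
`U_n (1 - q + q (u + u⁻¹) / 2)`, with `U_n` the Chebyshev polynomial of the second kind. This is the
trace of the `n`-th symmetric power of a product of `R` and `Rᵀ` with diagonal matrices
`diag(u^{1/2}, u^{-1/2})` in between, for a rotation `R`, so its coefficients are sums of squares of
entries of the symmetric power of `R` (`milinL_nonneg_of_lt`).

For the equality case, equality forces `Φ_2 = Φ_3 = 0`, since `(Δ² w)_2` and `(Δ² w)_3` are positive.
A second solution of the weight system with `N = 3` (`milin_three`) then forces `|γ₁| = 1`, and the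
equality case of the area theorem for `1 / √(f (z²))` identifies `f` (`koebe_of_norm_one`).
-/

open Complex Metric Real

/-- The class `𝒮` of normalized univalent (analytic and injective) functions
on the unit disk. -/
def InClassS (f : ℂ → ℂ) : Prop :=
  AnalyticOnNhd ℂ f (ball (0 : ℂ) 1) ∧ Set.InjOn f (ball (0 : ℂ) 1) ∧
    f 0 = 0 ∧ deriv f 0 = 1

/-- `γ` are the logarithmic coefficients of `f`: there is an analytic branch `g`
of `log (f z / z)` on the unit disk with `g 0 = 0` whose Taylor coefficients at `0`
are `2 * γ n` for `n ≥ 1`. -/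
def IsLogCoeffs (f : ℂ → ℂ) (γ : ℕ → ℂ) : Prop :=
  ∃ g : ℂ → ℂ, AnalyticOnNhd ℂ g (ball (0 : ℂ) 1) ∧ g 0 = 0 ∧
    (∀ z ∈ ball (0 : ℂ) 1, z ≠ 0 → Complex.exp (g z) = f z / z) ∧
    ∀ n : ℕ, 1 ≤ n → iteratedDeriv n g 0 = (n.factorial : ℂ) * (2 * γ n)

/-- `f` coincides on the unit disk with a rotation `z / (1 - e^{iθ} z)^2`
of the Koebe function. -/
def IsKoebeRotation (f : ℂ → ℂ) : Prop :=
  ∃ θ : ℝ, Set.EqOn f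
    (fun z => z / (1 - Complex.exp (θ * Complex.I) * z) ^ 2) (ball (0 : ℂ) 1)

/-! ### Normal families -/

/-- Montel's theorem for sequences. -/
theorem montel {U : Set ℂ} (hU : IsOpen U) (F : ℕ → ℂ → ℂ)
    (hF : ∀ n, DifferentiableOn ℂ (F n) U)
    (hb : ∀ K ⊆ U, IsCompact K → ∃ M, ∀ n, ∀ z ∈ K, ‖F n z‖ ≤ M) :
    ∃ φ : ℕ → ℕ, StrictMono φ ∧ ∃ f : ℂ → ℂ,
      TendstoLocallyUniformlyOn (fun n => F (φ n)) f Filter.atTop U := by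
  have hdata : ∀ x : U, ∃ r > 0, ∃ M, ∃ L, ∀ n, ‖F n x‖ ≤ M ∧
      ∀ y ∈ ball (x : ℂ) r, ‖F n y - F n x‖ ≤ L * ‖y - x‖ := by
    intro x
    obtain ⟨R, hR, hRU⟩ := Metric.nhds_basis_closedBall.mem_iff.1 (hU.mem_nhds x.2)
    obtain ⟨M, hM⟩ := hb _ hRU (isCompact_closedBall _ _)
    refine ⟨R/2, by positivity, M, M/(R/2), fun n => ⟨hM n x (mem_closedBall_self hR.le), ?_⟩⟩
    intro y hy
    refine Convex.norm_image_sub_le_of_norm_deriv_le (s := ball (x:ℂ) (R/2)) ?_ ?_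
      (convex_ball _ _) (mem_ball_self (by positivity)) hy
    · intro z hz
      refine (hF n).differentiableAt (hU.mem_nhds (hRU ?_))
      exact (ball_subset_closedBall.trans (closedBall_subset_closedBall (by linarith))) hz
    · intro z hz
      have hsub : closedBall z (R/2) ⊆ closedBall (x:ℂ) R := by
        apply closedBall_subset_closedBall'
        have := mem_ball.1 hz
        linarith
      refine Complex.norm_deriv_le_of_forall_mem_sphere_norm_le (by positivity) ?_ ?_
      · refine DifferentiableOn.diffContOnCl ?_
        refine (hF n).mono ?_
        rw [closure_ball _ (by positivity)]
        exact hsub.trans hRU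
      · intro w hw
        exact hM n w (hsub (sphere_subset_closedBall hw))
  choose r hr M L hML using hdata
  let S : Set C(U, ℂ) := {g | ∀ x : U, ‖g x‖ ≤ M x ∧
      ∀ y ∈ ball x (r x), ‖g y - g x‖ ≤ L x * ‖(y : ℂ) - x‖}
  let T : Set (U → ℂ) := {g | ∀ x : U, ‖g x‖ ≤ M x ∧
      ∀ y ∈ ball x (r x), ‖g y - g x‖ ≤ L x * ‖(y : ℂ) - x‖}
  have hcont : ∀ x : U, Filter.Tendsto (fun y : U => L x * ‖(y : ℂ) - x‖) (nhds x) (nhds 0) := by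
    intro x
    have : Continuous (fun y : U => L x * ‖(y : ℂ) - x‖) := by fun_prop
    simpa using this.tendsto x
  have hTc : ∀ g ∈ T, Continuous g := by
    intro g hg
    rw [continuous_iff_continuousAt]
    intro x
    rw [ContinuousAt, tendsto_iff_norm_sub_tendsto_zero]
    refine squeeze_zero' (Filter.Eventually.of_forall fun _ => norm_nonneg _) ?_ (hcont x)
    filter_upwards [ball_mem_nhds x (hr x)] with y hy using (hg x).2 y hy
  have hTS : ContinuousMap.toFun '' S = T := by
    ext g
    constructor
    · rintro ⟨h, hh, rfl⟩; exact hh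
    · intro hg
      exact ⟨⟨g, hTc g hg⟩, hg, rfl⟩
  have hTcomp : IsCompact T := by
    refine IsCompact.of_isClosed_subset
      (isCompact_univ_pi (s := fun x : U => closedBall (0:ℂ) (M x))
        fun x => isCompact_closedBall _ _) ?_ ?_
    · simp only [T, Set.ofPred_forall, Set.ofPred_and]
      refine isClosed_iInter fun x => IsClosed.inter ?_ (isClosed_iInter fun y =>
        isClosed_iInter fun hy => ?_)
      · exact isClosed_le (by fun_prop) (by fun_prop)
      · exact isClosed_le (by fun_prop) (by fun_prop)
    · intro g hg x _
      simpa using (hg x).1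
  have hSe : Equicontinuous (fun x : S => ⇑(x : C(U, ℂ))) := by
    intro x
    rw [Metric.equicontinuousAt_iff_right]
    intro ε hε
    filter_upwards [ball_mem_nhds x (hr x), (hcont x).eventually (gt_mem_nhds hε)] with y hy hy2 g
    rw [dist_comm, dist_eq_norm]
    exact lt_of_le_of_lt ((g.2 x).2 y hy) hy2
  have hS : IsCompact S := ArzelaAscoli.isCompact_of_equicontinuous S (hTS ▸ hTcomp) hSe
  have : LocallyCompactSpace U := hU.locallyCompactSpace
  have : SigmaCompactSpace U := inferInstance
  let G : ℕ → C(U, ℂ) := fun n => ⟨fun x => F n x, (hF n).continuousOn.domRestrict⟩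
  have hG : ∀ n, G n ∈ S := fun n x => ⟨(hML x n).1, fun y hy => (hML x n).2 y hy⟩
  obtain ⟨g, -, φ, hφ, hlim⟩ := hS.isSeqCompact hG
  classical
  refine ⟨φ, hφ, fun z => if h : z ∈ U then g ⟨z, h⟩ else 0, ?_⟩
  have h1 := ContinuousMap.tendsto_iff_tendstoLocallyUniformly.1 hlim
  rw [tendstoLocallyUniformlyOn_iff_tendstoLocallyUniformly_comp_coe]
  have h2 : ((fun z => if h : z ∈ U then g ⟨z, h⟩ else 0) ∘ Subtype.val : U → ℂ) = ⇑g := by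
    ext x
    simp
  rw [h2]
  exact h1

/-! ### Hurwitz's theorem -/

/-- Hurwitz's theorem: a nonconstant locally uniform limit of injective holomorphic functions
is injective. -/
theorem hurwitz {U : Set ℂ} (hU : IsOpen U) (hUc : IsPreconnected U) (F : ℕ → ℂ → ℂ) (f : ℂ → ℂ)
    (hF : ∀ n, DifferentiableOn ℂ (F n) U) (hi : ∀ n, Set.InjOn (F n) U)
    (hlim : TendstoLocallyUniformlyOn F f Filter.atTop U)
    {z₀ : ℂ} (hz₀ : z₀ ∈ U) (hd : deriv f z₀ ≠ 0) : Set.InjOn f U := by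
  have hfd : DifferentiableOn ℂ f U :=
    hlim.differentiableOn (Filter.Eventually.of_forall hF) hU
  intro a ha b hb hab
  by_contra hne
  have han : AnalyticOnNhd ℂ (fun z => f z - f a) U :=
    (hfd.sub_const _).analyticOnNhd hU
  have hnz : ∀ᶠ z in nhdsWithin b {b}ᶜ, f z - f a ≠ 0 := by
    rcases (han b hb).eventually_eq_zero_or_eventually_ne_zero with h | h
    · exfalso
      have h0 := han.eqOn_zero_of_preconnected_of_eventuallyEq_zero hUc hb h
      apply hd
      have : f =ᶠ[nhds z₀] fun _ => f a := by
        filter_upwards [hU.mem_nhds hz₀] with z hz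
        exact sub_eq_zero.1 (h0 hz)
      rw [this.deriv_eq]; simp
    · exact h
  rw [eventually_nhdsWithin_iff, Metric.eventually_nhds_iff_ball] at hnz
  obtain ⟨ε, hε, hnz⟩ := hnz
  obtain ⟨R, hR, hRU⟩ := Metric.nhds_basis_closedBall.mem_iff.1 (hU.mem_nhds hb)
  have hdab : 0 < dist a b := dist_pos.2 hne
  obtain ⟨r, hr, hr1⟩ : ∃ r, 0 < r ∧ r < min (min ε R) (dist a b) :=
    exists_between (lt_min (lt_min hε hR) hdab)
  have hrε : r < ε := lt_of_lt_of_le hr1 ((min_le_left _ _).trans (min_le_left _ _))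
  have hrR : r < R := lt_of_lt_of_le hr1 ((min_le_left _ _).trans (min_le_right _ _))
  have hrd : r < dist a b := lt_of_lt_of_le hr1 (min_le_right _ _)
  have hKU : closedBall b r ⊆ U := (closedBall_subset_closedBall hrR.le).trans hRU
  obtain ⟨w, hw, hmin⟩ := (isCompact_sphere b r).exists_isMinOn
    (NormedSpace.sphere_nonempty.2 hr.le)
    ((hfd.continuousOn.mono (sphere_subset_closedBall.trans hKU)).sub continuousOn_const).norm
      (f := fun z => ‖f z - f a‖)
  set m := ‖f w - f a‖ with hm
  have hmpos : 0 < m := by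
    refine norm_pos_iff.2 (hnz w ?_ ?_)
    · exact mem_ball.2 ((mem_sphere.1 hw).trans_lt hrε)
    · rintro rfl
      simp at hw; exact hr.ne hw
  have hKa : IsCompact (insert a (closedBall b r)) := (isCompact_closedBall b r).insert a
  have hun := (tendstoLocallyUniformlyOn_iff_forall_isCompact hU).1 hlim _
    (Set.insert_subset ha hKU) hKa
  rw [Metric.tendstoUniformlyOn_iff] at hun
  obtain ⟨n, hn⟩ := (hun (m / 16) (by positivity)).exists
  have hna := hn a (Set.mem_insert _ _)
  have hnb := hn b (Set.mem_insert_of_mem _ (mem_closedBall_self hr.le))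
  simp only [dist_eq_norm] at hna hnb hn
  have hball := DiffContOnCl.ball_subset_image_closedBall (f := F n) (z₀ := b) (r := r)
    (ε := m / 2) ?_ hr ?_ ?_
  · have : F n a ∈ ball (F n b) (m / 2 / 2) := by
      rw [mem_ball, dist_eq_norm]
      have e : F n a - F n b = (f b - F n b) - (f a - F n a) := by rw [hab]; ring
      rw [e]
      linarith [norm_sub_le (f b - F n b) (f a - F n a)]
    obtain ⟨z, hz, hza⟩ := hball this
    have := hi n (hKU hz) ha hza
    rw [this] at hz
    exact absurd (mem_closedBall.1 hz) (not_le.2 hrd)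
  · refine DifferentiableOn.diffContOnCl ((hF n).mono ?_)
    rwa [closure_ball _ hr.ne']
  · intro z hz
    have h1 : m ≤ ‖f z - f a‖ := hmin hz
    have h2 := hn z (Set.mem_insert_of_mem _ (sphere_subset_closedBall hz))
    have e : f z - f a = (F n z - F n b) + (f z - F n z) - (f b - F n b) := by rw [hab]; ring
    rw [e] at h1
    have h3 := norm_sub_le ((F n z - F n b) + (f z - F n z)) (f b - F n b)
    have h4 := norm_add_le (F n z - F n b) (f z - F n z)
    linarith
  · refine Filter.Eventually.frequently (f := nhdsWithin b {b}ᶜ) ?_ |>.filter_mono nhdsWithin_le_nhds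
    filter_upwards [self_mem_nhdsWithin, mem_nhdsWithin_of_mem_nhds (hU.mem_nhds hb)] with z hz hzU h
    exact hz (hi n hzU hb h)

/-! ### Polynomial hulls and approximation by polynomials -/

/-- The polynomial hull of a set. -/
def polyHull (L : Set ℂ) : Set ℂ :=
  {z | ∀ (P : Polynomial ℂ) (M : ℝ), (∀ w ∈ L, ‖P.eval w‖ ≤ M) → ‖P.eval z‖ ≤ M}

theorem subset_polyHull (L : Set ℂ) : L ⊆ polyHull L := fun z hz _ _ h => h z hz

theorem polyHull_mono {L L' : Set ℂ} (h : L ⊆ L') : polyHull L ⊆ polyHull L' :=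
  fun _ hz P M hM => hz P M fun w hw => hM w (h hw)

theorem polyHull_idem (L : Set ℂ) : polyHull (polyHull L) ⊆ polyHull L :=
  fun _ hz P M hM => hz P M fun _ hw => hw P M hM

theorem isClosed_polyHull (L : Set ℂ) : IsClosed (polyHull L) := by
  simp only [polyHull, Set.ofPred_forall]
  exact isClosed_iInter fun P => isClosed_iInter fun M => isClosed_iInter fun _ =>
    isClosed_le P.continuous.norm continuous_const

theorem polyHull_subset_closedBall {L : Set ℂ} {R : ℝ} (h : L ⊆ closedBall 0 R) :
    polyHull L ⊆ closedBall 0 R := by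
  intro z hz
  have := hz Polynomial.X R (by intro w hw; simpa using h hw)
  simpa using this

theorem isCompact_polyHull {L : Set ℂ} (hL : IsCompact L) : IsCompact (polyHull L) := by
  obtain ⟨R, hR⟩ := hL.isBounded.subset_closedBall 0
  exact (isCompact_closedBall 0 R).of_isClosed_subset (isClosed_polyHull L)
    (polyHull_subset_closedBall hR)

/-- A point off the hull is separated from the hull by a polynomial normalized at the point. -/
theorem exists_separating {L : Set ℂ} (hL : L.Nonempty) {b : ℂ}
    (hb : b ∉ polyHull L) : ∃ P : Polynomial ℂ, ∃ θ : ℝ, 0 ≤ θ ∧ θ < 1 ∧ P.eval b = 1 ∧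
      ∀ w ∈ polyHull L, ‖P.eval w‖ ≤ θ := by
  simp only [polyHull, Set.mem_ofPred_eq, not_forall, not_le] at hb
  obtain ⟨P, M, hM, hPb⟩ := hb
  obtain ⟨w₀, hw₀⟩ := hL
  have hM0 : 0 ≤ M := (norm_nonneg _).trans (hM w₀ hw₀)
  have hPpos : 0 < ‖P.eval b‖ := hM0.trans_lt hPb
  refine ⟨Polynomial.C (P.eval b)⁻¹ * P, M / ‖P.eval b‖, by positivity,
    (div_lt_one hPpos).2 hPb, ?_, ?_⟩
  · simp [norm_pos_iff.1 hPpos]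
  · intro w hw
    have := hw P M hM
    simp only [Polynomial.eval_mul, Polynomial.eval_C, norm_mul, norm_inv]
    rw [div_eq_inv_mul]
    gcongr

/-- The polynomials `(1 - P ^ m) / (b - X)` when `P b = 1`. -/
theorem exists_quotient {P : Polynomial ℂ} {b : ℂ} (hP : P.eval b = 1) (m : ℕ) :
    ∃ Q : Polynomial ℂ, ∀ w, (b - w) * Q.eval w = 1 - (P.eval w) ^ m := by
  have : (Polynomial.X - Polynomial.C b) ∣ (P ^ m - 1) := by
    rw [Polynomial.dvd_iff_isRoot]
    simp [hP]
  obtain ⟨Q, hQ⟩ := this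
  refine ⟨Q, fun w => ?_⟩
  have := congrArg (Polynomial.eval w) hQ
  simp only [Polynomial.eval_sub, Polynomial.eval_pow, Polynomial.eval_one, Polynomial.eval_mul,
    Polynomial.eval_X, Polynomial.eval_C] at this
  linear_combination this

/-- Uniform approximability by polynomials on `K`. -/
def PA (K : Set ℂ) (F : ℂ → ℂ) : Prop :=
  ∀ ε > 0, ∃ P : Polynomial ℂ, ∀ z ∈ K, ‖F z - P.eval z‖ < ε

theorem PA.poly (K : Set ℂ) (P : Polynomial ℂ) : PA K (fun z => P.eval z) :=
  fun ε hε => ⟨P, fun z _ => by simpa using hε⟩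

theorem PA.const (K : Set ℂ) (c : ℂ) : PA K (fun _ => c) := by
  simpa using PA.poly K (Polynomial.C c)

theorem PA.congr {K : Set ℂ} {F G : ℂ → ℂ} (hF : PA K F) (h : ∀ z ∈ K, G z = F z) : PA K G := by
  intro ε hε
  obtain ⟨P, hP⟩ := hF ε hε
  exact ⟨P, fun z hz => by rw [h z hz]; exact hP z hz⟩

theorem PA.mono {K K' : Set ℂ} {F : ℂ → ℂ} (hF : PA K' F) (h : K ⊆ K') : PA K F := by
  intro ε hε
  obtain ⟨P, hP⟩ := hF ε hε
  exact ⟨P, fun z hz => hP z (h hz)⟩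

theorem PA.add {K : Set ℂ} {F G : ℂ → ℂ} (hF : PA K F) (hG : PA K G) :
    PA K (fun z => F z + G z) := by
  intro ε hε
  obtain ⟨P, hP⟩ := hF (ε / 2) (by positivity)
  obtain ⟨Q, hQ⟩ := hG (ε / 2) (by positivity)
  refine ⟨P + Q, fun z hz => ?_⟩
  have e : F z + G z - (P + Q).eval z = (F z - P.eval z) + (G z - Q.eval z) := by
    simp; ring
  rw [e]
  linarith [norm_add_le (F z - P.eval z) (G z - Q.eval z), hP z hz, hQ z hz]

theorem PA.limit {K : Set ℂ} {F : ℂ → ℂ}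
    (h : ∀ ε > 0, ∃ G, PA K G ∧ ∀ z ∈ K, ‖F z - G z‖ < ε) : PA K F := by
  intro ε hε
  obtain ⟨G, hG, hFG⟩ := h (ε / 2) (by positivity)
  obtain ⟨Q, hQ⟩ := hG (ε / 2) (by positivity)
  refine ⟨Q, fun z hz => ?_⟩
  have := norm_add_le (F z - G z) (G z - Q.eval z)
  rw [sub_add_sub_cancel] at this
  linarith [hFG z hz, hQ z hz]

theorem poly_bdd {K : Set ℂ} (hK : IsCompact K) (P : Polynomial ℂ) :
    ∃ B, 0 ≤ B ∧ ∀ z ∈ K, ‖P.eval z‖ ≤ B := by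
  obtain ⟨B, hB⟩ := hK.exists_bound_of_continuousOn P.continuous.continuousOn
  exact ⟨max B 0, le_max_right _ _, fun z hz => (hB z hz).trans (le_max_left _ _)⟩

theorem PA.bdd {K : Set ℂ} (hK : IsCompact K) {F : ℂ → ℂ} (hF : PA K F) :
    ∃ B, 0 ≤ B ∧ ∀ z ∈ K, ‖F z‖ ≤ B := by
  obtain ⟨P, hP⟩ := hF 1 one_pos
  obtain ⟨B, hB0, hB⟩ := poly_bdd hK P
  refine ⟨B + 1, by positivity, fun z hz => ?_⟩
  have := norm_add_le (F z - P.eval z) (P.eval z)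
  rw [sub_add_cancel] at this
  linarith [hP z hz, hB z hz]

theorem PA.mul {K : Set ℂ} (hK : IsCompact K) {F G : ℂ → ℂ} (hF : PA K F) (hG : PA K G) :
    PA K (fun z => F z * G z) := by
  intro ε hε
  obtain ⟨A, hA0, hA⟩ := hF.bdd hK
  obtain ⟨Q, hQ⟩ := hG (ε / (2 * (A + 1))) (by positivity)
  obtain ⟨B, hB0, hB⟩ := poly_bdd hK Q
  obtain ⟨P, hP⟩ := hF (ε / (2 * (B + 1))) (by positivity)
  refine ⟨P * Q, fun z hz => ?_⟩
  have e : F z * G z - (P * Q).eval z = F z * (G z - Q.eval z) + (F z - P.eval z) * Q.eval z := by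
    simp; ring
  rw [e]
  have h1 : ‖F z * (G z - Q.eval z)‖ < ε / 2 := by
    rw [norm_mul]
    calc ‖F z‖ * ‖G z - Q.eval z‖ ≤ A * (ε / (2 * (A + 1))) := by
          gcongr
          · exact hA z hz
          · exact (hQ z hz).le
      _ < (A + 1) * (ε / (2 * (A + 1))) := by
          apply mul_lt_mul_of_pos_right _ (by positivity); linarith
      _ = ε / 2 := by field_simp
  have h2 : ‖(F z - P.eval z) * Q.eval z‖ < ε / 2 := by
    rw [norm_mul]
    calc ‖F z - P.eval z‖ * ‖Q.eval z‖ ≤ (ε / (2 * (B + 1))) * B := by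
          gcongr
          · exact (hP z hz).le
          · exact hB z hz
      _ < (ε / (2 * (B + 1))) * (B + 1) := by
          apply mul_lt_mul_of_pos_left _ (by positivity); linarith
      _ = ε / 2 := by field_simp
  linarith [norm_add_le (F z * (G z - Q.eval z)) ((F z - P.eval z) * Q.eval z)]

theorem PA.pow {K : Set ℂ} (hK : IsCompact K) {F : ℂ → ℂ} (hF : PA K F) (n : ℕ) :
    PA K (fun z => F z ^ n) := by
  induction n with
  | zero => simpa using PA.const K 1
  | succ n ih => simpa [pow_succ] using ih.mul hK hF

theorem PA.sum {K : Set ℂ} {F : ℕ → ℂ → ℂ} (n : ℕ) (hF : ∀ i, PA K (F i)) :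
    PA K (fun z => ∑ i ∈ Finset.range n, F i z) := by
  induction n with
  | zero => simpa using PA.const K 0
  | succ n ih => simpa [Finset.sum_range_succ] using ih.add (hF n)

theorem PA.exp {K : Set ℂ} (hK : IsCompact K) {F : ℂ → ℂ} (hF : PA K F) :
    PA K (fun z => Complex.exp (F z)) := by
  obtain ⟨B, hB0, hB⟩ := hF.bdd hK
  obtain ⟨N, hN⟩ := exists_nat_gt (2 * B)
  have hNpos : (0:ℝ) < N := by linarith
  have hN0 : (N : ℂ) ≠ 0 := by
    have : N ≠ 0 := by rintro rfl; simp at hNpos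
    exact_mod_cast this
  have h1 : PA K (fun z => Complex.exp ((N : ℂ)⁻¹ * F z)) := by
    apply PA.limit
    intro ε hε
    have ht : Filter.Tendsto (fun n : ℕ => (1 / 2 : ℝ) ^ n * Real.exp 1) Filter.atTop (nhds 0) := by
      simpa using (tendsto_pow_atTop_nhds_zero_of_lt_one (by norm_num : (0:ℝ) ≤ 1/2)
        (by norm_num)).mul_const (Real.exp 1)
    obtain ⟨n, hn⟩ := (ht.eventually (gt_mem_nhds hε)).exists
    refine ⟨fun z => ∑ m ∈ Finset.range n, ((N : ℂ)⁻¹ * F z) ^ m * ((m.factorial : ℂ)⁻¹), ?_, ?_⟩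
    · exact PA.sum n fun i => ((((PA.const K _).mul hK hF).pow hK i).mul hK (PA.const K _))
    · intro z hz
      have hx : ‖(N : ℂ)⁻¹ * F z‖ ≤ 1 / 2 := by
        rw [norm_mul, norm_inv, Complex.norm_natCast, ← div_eq_inv_mul, div_le_iff₀ hNpos]
        linarith [hB z hz]
      have := Complex.norm_exp_sub_sum_le_norm_mul_exp ((N : ℂ)⁻¹ * F z) n
      simp only [div_eq_mul_inv] at this
      refine this.trans_lt (lt_of_le_of_lt ?_ hn)
      gcongr
      linarith
  refine (h1.pow hK N).congr fun z _ => ?_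
  rw [← Complex.exp_nat_mul, mul_inv_cancel_left₀ hN0]

theorem PA.inv_sub {L : Set ℂ} (hL : IsCompact L) {b : ℂ} (hb : b ∉ polyHull L) :
    PA (polyHull L) (fun w => (b - w)⁻¹) := by
  rcases L.eq_empty_or_nonempty with rfl | hne
  · have he : polyHull (∅ : Set ℂ) ⊆ closedBall 0 (-1) :=
      polyHull_subset_closedBall (Set.empty_subset _)
    rw [closedBall_eq_empty.2 (by norm_num)] at he
    exact fun ε _ => ⟨0, fun z hz => absurd (he hz) (Set.notMem_empty z)⟩
  obtain ⟨P, θ, hθ0, hθ1, hPb, hP⟩ := exists_separating hne hb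
  have hKne : (polyHull L).Nonempty := hne.mono (subset_polyHull L)
  have hd : 0 < infDist b (polyHull L) :=
    ((isClosed_polyHull L).notMem_iff_infDist_pos hKne).1 hb
  set d := infDist b (polyHull L)
  intro ε hε
  have ht : Filter.Tendsto (fun n : ℕ => θ ^ n / d) Filter.atTop (nhds 0) := by
    simpa using (tendsto_pow_atTop_nhds_zero_of_lt_one hθ0 hθ1).div_const d
  obtain ⟨m, hm⟩ := (ht.eventually (gt_mem_nhds hε)).exists
  obtain ⟨Q, hQ⟩ := exists_quotient hPb m
  refine ⟨Q, fun w hw => ?_⟩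
  have hdw : d ≤ ‖b - w‖ := by rw [← dist_eq_norm]; exact infDist_le_dist_of_mem hw
  have hne' : b - w ≠ 0 := norm_pos_iff.1 (hd.trans_le hdw)
  have e : (b - w)⁻¹ - Q.eval w = (P.eval w) ^ m / (b - w) := by
    rw [eq_div_iff hne', sub_mul, inv_mul_cancel₀ hne']
    linear_combination -(hQ w)
  rw [e, norm_div, norm_pow]
  refine lt_of_le_of_lt ?_ hm
  gcongr
  exact hP w hw

/-- Evaluating a polynomial without zeros on a hull, its inverse is approximable. -/
theorem PA.inv_poly {L : Set ℂ} (hL : IsCompact L) (P : Polynomial ℂ)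
    (hP : ∀ z ∈ polyHull L, P.eval z ≠ 0) : PA (polyHull L) (fun w => (P.eval w)⁻¹) := by
  have hK := isCompact_polyHull hL
  have key : ∀ s : Multiset ℂ, (∀ b ∈ s, b ∉ polyHull L) →
      PA (polyHull L) (fun w => ((s.map fun b => (w - b)).prod)⁻¹) := by
    intro s
    induction s using Multiset.induction_on with
    | empty => intro _; simpa using PA.const _ 1
    | cons b s ih =>
      intro hs
      have h1 := ih fun c hc => hs c (Multiset.mem_cons_of_mem hc)
      have h2 := PA.inv_sub hL (hs b (Multiset.mem_cons_self b s))
      refine (((PA.const _ (-1)).mul hK h2).mul hK h1).congr fun z _ => ?_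
      simp only [Multiset.map_cons, Multiset.prod_cons, mul_inv]
      rw [← neg_sub b z, inv_neg]; ring
  rcases eq_or_ne P 0 with rfl | hP0
  · simpa using PA.const _ 0
  have hs := IsAlgClosed.splits P
  refine ((PA.const _ (P.leadingCoeff)⁻¹).mul hK (key P.roots ?_)).congr fun z _ => ?_
  · intro b hb hbK
    exact hP b hbK ((Polynomial.mem_roots hP0).1 hb)
  · rw [← mul_inv]
    congr 1
    conv_lhs => rw [hs.eq_prod_roots]
    rw [Polynomial.eval_mul, Polynomial.eval_C, Polynomial.eval_multiset_prod, Multiset.map_map]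
    simp

theorem PA.continuousOn {K : Set ℂ} {F : ℂ → ℂ} (hF : PA K F) : ContinuousOn F K := by
  choose P hP using hF
  have : TendstoUniformlyOn (fun (n : ℕ) z => (P (1 / ((n:ℝ) + 1)) (by positivity)).eval z) F
      Filter.atTop K := by
    rw [Metric.tendstoUniformlyOn_iff]
    intro ε hε
    filter_upwards [(tendsto_one_div_add_atTop_nhds_zero_nat (𝕜 := ℝ)).eventually
      (gt_mem_nhds hε)] with n hn z hz
    rw [dist_eq_norm]
    exact (hP _ _ z hz).trans hn
  exact this.continuousOn (Filter.Frequently.of_forall fun n => (Polynomial.continuous _).continuousOn)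

theorem PA.inv {L : Set ℂ} (hL : IsCompact L) {F : ℂ → ℂ} (hF : PA (polyHull L) F)
    (h0 : ∀ z ∈ polyHull L, F z ≠ 0) : PA (polyHull L) (fun z => (F z)⁻¹) := by
  have hK := isCompact_polyHull hL
  rcases (polyHull L).eq_empty_or_nonempty with he | hne
  · rw [he]; intro ε hε; exact ⟨0, by simp⟩
  obtain ⟨w, hw, hmin⟩ := hK.exists_isMinOn hne hF.continuousOn.norm
  set m := ‖F w‖ with hm
  have hmpos : 0 < m := norm_pos_iff.2 (h0 w hw)
  apply PA.limit
  intro ε hε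
  obtain ⟨P, hP⟩ := hF (min (m / 2) (ε * (m * (m / 2)))) (by positivity)
  have hlow : ∀ z ∈ polyHull L, m ≤ ‖F z‖ := fun z hz => hmin hz
  have hPlow : ∀ z ∈ polyHull L, m / 2 ≤ ‖P.eval z‖ := by
    intro z hz
    have h1 := (hP z hz).trans_le (min_le_left _ _)
    have h2 := norm_add_le (F z - P.eval z) (P.eval z)
    rw [sub_add_cancel] at h2
    linarith [hlow z hz]
  have hPne : ∀ z ∈ polyHull L, P.eval z ≠ 0 := fun z hz =>
    norm_pos_iff.1 (lt_of_lt_of_le (by positivity) (hPlow z hz))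
  refine ⟨fun z => (P.eval z)⁻¹, PA.inv_poly hL P hPne, fun z hz => ?_⟩
  rw [inv_sub_inv (h0 z hz) (hPne z hz), norm_div, norm_mul, norm_sub_rev,
    div_lt_iff₀ (mul_pos (norm_pos_iff.2 (h0 z hz)) (norm_pos_iff.2 (hPne z hz)))]
  refine ((hP z hz).trans_le (min_le_right _ _)).trans_le ?_
  gcongr
  · exact hlow z hz
  · exact hPlow z hz

/-! ### Runge open sets -/

/-- Translates of a polynomial are polynomials, so a thickening of `L` in `L'` passes to hulls. -/
theorem polyHull_subset_interior {L L' : Set ℂ} (hL : IsCompact L) (h : L ⊆ interior L') :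
    polyHull L ⊆ interior (polyHull L') := by
  obtain ⟨δ, hδ, hsub⟩ := hL.exists_thickening_subset_open isOpen_interior h
  intro z hz
  rw [mem_interior_iff_mem_nhds]
  filter_upwards [ball_mem_nhds z hδ] with y hy P M hM
  have := hz (P.comp (Polynomial.X + Polynomial.C (y - z))) M (by
    intro w hw
    simp only [Polynomial.eval_comp, Polynomial.eval_add, Polynomial.eval_X, Polynomial.eval_C]
    refine hM _ (interior_subset (hsub ?_))
    rw [mem_thickening_iff]
    refine ⟨w, hw, ?_⟩
    rw [dist_eq_norm, add_sub_cancel_left, ← dist_eq_norm]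
    exact hy)
  simpa using this

/-- The hull adds only an open set: near a point of the hull off `L`, a point outside the hull would
give polynomials `(1 - P ^ m) / (b' - X)` violating the hull inequality. -/
theorem isOpen_polyHull_diff {L : Set ℂ} (hL : IsCompact L) (hne : L.Nonempty) :
    IsOpen (polyHull L \ L) := by
  rw [isOpen_iff_mem_nhds]
  rintro b ⟨hb, hbL⟩
  have hd : 0 < infDist b L := (hL.isClosed.notMem_iff_infDist_pos hne).1 hbL
  set d := infDist b L with hdd
  filter_upwards [ball_mem_nhds b (show 0 < d / 16 by positivity)] with b' hb'
  have hbb : ‖b' - b‖ < d / 16 := by rw [← dist_eq_norm]; exact hb'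
  have hdist : ∀ w ∈ L, d / 2 ≤ ‖b' - w‖ := by
    intro w hw
    have h1 : d ≤ ‖b - w‖ := by rw [← dist_eq_norm]; exact infDist_le_dist_of_mem hw
    have h2 := norm_sub_le (b' - w) (b' - b)
    rw [show b' - w - (b' - b) = b - w by ring] at h2
    linarith
  refine ⟨?_, fun hw => ?_⟩
  · by_contra hn
    obtain ⟨P, θ, hθ0, hθ1, hPb, hP⟩ := exists_separating hne hn
    have ht := tendsto_pow_atTop_nhds_zero_of_lt_one hθ0 hθ1
    obtain ⟨m, hm⟩ := (ht.eventually (gt_mem_nhds (show (0:ℝ) < 1/2 by norm_num))).exists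
    obtain ⟨Q, hQ⟩ := exists_quotient hPb m
    have hpow : ∀ w ∈ polyHull L, ‖P.eval w ^ m‖ ≤ 1 / 2 := by
      intro w hw
      rw [norm_pow]
      exact (pow_le_pow_left₀ (norm_nonneg _) (hP w hw) m).trans hm.le
    have hQL : ‖Q.eval b‖ ≤ 4 / d := by
      refine hb Q _ fun w hw => ?_
      have h1 := hpow w (subset_polyHull L hw)
      have h2 := congrArg norm (hQ w)
      rw [norm_mul] at h2
      have h3 := norm_sub_le 1 (P.eval w ^ m)
      rw [norm_one] at h3
      rw [le_div_iff₀ hd]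
      have h4 := hdist w hw
      nlinarith [norm_nonneg (Q.eval w)]
    have h2 := congrArg norm (hQ b)
    rw [norm_mul] at h2
    have h3 := norm_add_le (1 - P.eval b ^ m) (P.eval b ^ m)
    rw [sub_add_cancel, norm_one] at h3
    have h5 := hpow b hb
    have h6 : 1 / 2 ≤ (d / 16) * (4 / d) := by
      calc (1:ℝ) / 2 ≤ ‖b' - b‖ * ‖Q.eval b‖ := by linarith
        _ ≤ _ := by gcongr
    have h7 : (d / 16) * (4 / d) = 1 / 4 := by field_simp; norm_num
    linarith
  · have := hdist b' hw
    simp at this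
    linarith

/-- A clopen compact subset of the plane is empty. -/
theorem clopen_compact_empty {E : Set ℂ} (ho : IsOpen E) (hc : IsCompact E) : E = ∅ := by
  rcases isClopen_iff.1 ⟨hc.isClosed, ho⟩ with h | h
  · exact h
  · exfalso
    rw [h] at hc
    exact noncompact_univ ℂ hc

/-- Open sets containing the polynomial hulls of their compact subsets. -/
structure RungeOpen (Ω : Set ℂ) : Prop where
  isOpen : IsOpen Ω
  hull : ∀ K ⊆ Ω, IsCompact K → polyHull K ⊆ Ω

/-- Components of Runge open sets are Runge: the part of the hull of a compact subset lying in other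
components is compact and open, hence empty. -/
theorem RungeOpen.component {Ω : Set ℂ} (h : RungeOpen Ω) (x : ℂ) :
    RungeOpen (connectedComponentIn Ω x) := by
  have hU : IsOpen (connectedComponentIn Ω x) := h.isOpen.connectedComponentIn
  refine ⟨hU, fun K hK hKc => ?_⟩
  rcases K.eq_empty_or_nonempty with rfl | hne
  · have he : polyHull (∅ : Set ℂ) ⊆ closedBall 0 (-1) :=
      polyHull_subset_closedBall (Set.empty_subset _)
    rw [closedBall_eq_empty.2 (by norm_num)] at he
    exact he.trans (Set.empty_subset _)
  have hKΩ : polyHull K ⊆ Ω := h.hull K (hK.trans (connectedComponentIn_subset _ _)) hKc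
  have hV : IsOpen (Ω \ connectedComponentIn Ω x) := by
    rw [isOpen_iff_mem_nhds]
    rintro y ⟨hy, hyx⟩
    filter_upwards [(h.isOpen.connectedComponentIn (x := y)).mem_nhds
      (mem_connectedComponentIn hy)] with w hw
    refine ⟨connectedComponentIn_subset _ _ hw, fun hwx => hyx ?_⟩
    rw [connectedComponentIn_eq hwx, ← connectedComponentIn_eq hw]
    exact mem_connectedComponentIn hy
  have hE : polyHull K \ connectedComponentIn Ω x = ∅ := by
    apply clopen_compact_empty
    · have : polyHull K \ connectedComponentIn Ω x
          = (polyHull K \ K) ∩ (Ω \ connectedComponentIn Ω x) := by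
        ext z
        constructor
        · rintro ⟨h1, h2⟩
          exact ⟨⟨h1, fun h3 => h2 (hK h3)⟩, hKΩ h1, h2⟩
        · rintro ⟨⟨h1, _⟩, _, h2⟩
          exact ⟨h1, h2⟩
      rw [this]
      exact (isOpen_polyHull_diff hKc hne).inter hV
    · exact (isCompact_polyHull hKc).diff hU
  exact Set.sdiff_eq_empty.1 hE

/-- Functions approximable by polynomials, uniformly on compact subsets of `Ω`. -/
def PAO (Ω : Set ℂ) (F : ℂ → ℂ) : Prop := ∀ K ⊆ Ω, IsCompact K → PA K F

theorem PAO.congr {Ω : Set ℂ} {F G : ℂ → ℂ} (hF : PAO Ω F) (h : ∀ z ∈ Ω, G z = F z) : PAO Ω G :=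
  fun K hK hKc => (hF K hK hKc).congr fun z hz => h z (hK hz)

theorem PAO.const (Ω : Set ℂ) (c : ℂ) : PAO Ω (fun _ => c) := fun K _ _ => PA.const K c

theorem PAO.id (Ω : Set ℂ) : PAO Ω (fun z => z) := fun K _ _ => by
  simpa using PA.poly K Polynomial.X

theorem PAO.add {Ω : Set ℂ} {F G : ℂ → ℂ} (hF : PAO Ω F) (hG : PAO Ω G) :
    PAO Ω (fun z => F z + G z) := fun K hK hKc => (hF K hK hKc).add (hG K hK hKc)

theorem PAO.mul {Ω : Set ℂ} {F G : ℂ → ℂ} (hF : PAO Ω F) (hG : PAO Ω G) :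
    PAO Ω (fun z => F z * G z) := fun K hK hKc => (hF K hK hKc).mul hKc (hG K hK hKc)

theorem PAO.exp {Ω : Set ℂ} {F : ℂ → ℂ} (hF : PAO Ω F) :
    PAO Ω (fun z => Complex.exp (F z)) := fun K hK hKc => (hF K hK hKc).exp hKc

theorem PAO.inv {Ω : Set ℂ} (hΩ : RungeOpen Ω) {F : ℂ → ℂ} (hF : PAO Ω F)
    (h0 : ∀ z ∈ Ω, F z ≠ 0) : PAO Ω (fun z => (F z)⁻¹) := fun K hK hKc =>
  (PA.inv hKc (hF _ (hΩ.hull K hK hKc) (isCompact_polyHull hKc))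
    fun z hz => h0 z (hΩ.hull K hK hKc hz)).mono (subset_polyHull K)

theorem PAO.limit {Ω : Set ℂ} (hΩ : IsOpen Ω) {F : ℕ → ℂ → ℂ} {f : ℂ → ℂ}
    (hF : ∀ n, PAO Ω (F n)) (hl : TendstoLocallyUniformlyOn F f Filter.atTop Ω) : PAO Ω f := by
  intro K hK hKc
  apply PA.limit
  intro ε hε
  have := (tendstoLocallyUniformlyOn_iff_forall_isCompact hΩ).1 hl K hK hKc
  obtain ⟨n, hn⟩ := (Metric.tendstoUniformlyOn_iff.1 this ε hε).exists
  exact ⟨F n, hF n K hK hKc, fun z hz => by rw [← dist_eq_norm]; exact hn z hz⟩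

theorem PAO.exists_seq {Ω : Set ℂ} (hΩ : IsOpen Ω) {F : ℂ → ℂ} (hF : PAO Ω F) :
    ∃ P : ℕ → Polynomial ℂ,
      TendstoLocallyUniformlyOn (fun n z => (P n).eval z) F Filter.atTop Ω := by
  have : LocallyCompactSpace Ω := hΩ.locallyCompactSpace
  let E : CompactExhaustion Ω := default
  have hc : ∀ n, PA ((↑) '' (E n) : Set ℂ) F := fun n =>
    hF _ (by rintro _ ⟨x, -, rfl⟩; exact x.2) ((E.isCompact n).image continuous_subtype_val)
  choose P hP using fun n : ℕ => hc n (1 / ((n:ℝ) + 1)) (by positivity)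
  refine ⟨P, ?_⟩
  rw [tendstoLocallyUniformlyOn_iff_forall_isCompact hΩ]
  intro K hK hKc
  have hK' : IsCompact ((↑) ⁻¹' K : Set Ω) :=
    Topology.IsInducing.subtypeVal.isCompact_preimage' hKc (by simpa using hK)
  obtain ⟨N, hN⟩ := E.exists_superset_of_isCompact hK'
  rw [Metric.tendstoUniformlyOn_iff]
  intro ε hε
  filter_upwards [(tendsto_one_div_add_atTop_nhds_zero_nat (𝕜 := ℝ)).eventually
    (gt_mem_nhds hε), Filter.eventually_ge_atTop N] with n hn hnN z hz
  rw [dist_eq_norm]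
  exact (hP n z ⟨⟨z, hK hz⟩, E.subset hnN (hN hz), rfl⟩).trans hn

theorem PAO.differentiableOn {Ω : Set ℂ} (hΩ : IsOpen Ω) {F : ℂ → ℂ} (hF : PAO Ω F) :
    DifferentiableOn ℂ F Ω := by
  obtain ⟨P, hP⟩ := hF.exists_seq hΩ
  exact hP.differentiableOn (Filter.Eventually.of_forall fun n => (P n).differentiable.differentiableOn) hΩ

theorem PAO.deriv {Ω : Set ℂ} (hΩ : IsOpen Ω) {F : ℂ → ℂ} (hF : PAO Ω F) :
    PAO Ω (deriv F) := by
  obtain ⟨P, hP⟩ := hF.exists_seq hΩ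
  refine PAO.limit hΩ ?_ (hP.deriv (Filter.Eventually.of_forall
    fun n => (P n).differentiable.differentiableOn) hΩ)
  intro n K _ _
  refine (PA.poly K (P n).derivative).congr fun z _ => ?_
  simp

/-! ### Primitives, logarithms and square roots on Runge domains -/

theorem poly_primitive (P : Polynomial ℂ) : ∃ Q : Polynomial ℂ, Q.derivative = P := by
  induction P using Polynomial.induction_on' with
  | add p q hp hq =>
    obtain ⟨a, rfl⟩ := hp
    obtain ⟨b, rfl⟩ := hq
    exact ⟨a + b, by simp⟩
  | monomial n a =>
    refine ⟨Polynomial.monomial (n + 1) (a / (n + 1)), ?_⟩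
    rw [Polynomial.derivative_monomial]
    have : (n : ℂ) + 1 ≠ 0 := by exact_mod_cast n.succ_ne_zero
    simp [this]

/-- On a connected open set, functions approximable by polynomials have primitives of the same
kind. -/
theorem PAO.primitive {Ω : Set ℂ} (hΩ : IsOpen Ω) (hc : IsPreconnected Ω) {h : ℂ → ℂ}
    (hh : PAO Ω h) {z₀ : ℂ} (hz₀ : z₀ ∈ Ω) :
    ∃ H : ℂ → ℂ, PAO Ω H ∧ ∀ z ∈ Ω, HasDerivAt H (h z) z := by
  obtain ⟨P, hP⟩ := hh.exists_seq hΩ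
  -- polynomial primitives normalized at `z₀`
  have hprim : ∀ n, ∃ Q : Polynomial ℂ, Q.derivative = P n ∧ Q.eval z₀ = 0 := by
    intro n
    obtain ⟨Q, hQ⟩ := poly_primitive (P n)
    exact ⟨Q - Polynomial.C (Q.eval z₀), by simp [hQ], by simp⟩
  choose Q hQ hQ0 using hprim
  -- increments of the primitives are uniformly Cauchy near every point
  have hloc : ∀ x ∈ Ω, ∃ r > 0, ball x r ⊆ Ω ∧
      UniformCauchySeqOn (fun n z => (Q n).eval z - (Q n).eval x) Filter.atTop (ball x r) := by
    intro x hx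
    obtain ⟨R, hR, hRU⟩ := Metric.nhds_basis_closedBall.mem_iff.1 (hΩ.mem_nhds hx)
    refine ⟨R, hR, ball_subset_closedBall.trans hRU, ?_⟩
    have hu := (tendstoLocallyUniformlyOn_iff_forall_isCompact hΩ).1 hP _ hRU
      (isCompact_closedBall _ _)
    have hu' := hu.uniformCauchySeqOn
    rw [Metric.uniformCauchySeqOn_iff] at hu' ⊢
    intro ε hε
    obtain ⟨N, hN⟩ := hu' (ε / (2 * R)) (by positivity)
    refine ⟨N, fun m hm n hn z hz => ?_⟩
    have hb := Convex.norm_image_sub_le_of_norm_deriv_le (𝕜 := ℂ)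
      (f := fun z => (Q m - Q n).eval z) (s := ball x R) (C := ε / (2 * R)) (x := x) (y := z)
      (fun w _ => (Q m - Q n).differentiableAt) (fun w hw => by
        rw [Polynomial.deriv, Polynomial.derivative_sub, hQ, hQ, Polynomial.eval_sub,
          ← dist_eq_norm]
        exact (hN m hm n hn w (ball_subset_closedBall hw)).le)
      (convex_ball _ _) (mem_ball_self hR) hz
    rw [dist_eq_norm]
    have e : (Q m).eval z - (Q m).eval x - ((Q n).eval z - (Q n).eval x)
        = (Q m - Q n).eval z - (Q m - Q n).eval x := by simp; ring
    rw [e]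
    have hzx : ‖z - x‖ < R := by rw [← dist_eq_norm]; exact hz
    calc _ ≤ ε / (2 * R) * ‖z - x‖ := hb
      _ ≤ ε / (2 * R) * R := by gcongr
      _ = ε / 2 := by field_simp
      _ < ε := by linarith
  have hpt : ∀ x ∈ Ω, ∃ r > 0, ball x r ⊆ Ω ∧ ∀ y ∈ ball x r,
      CauchySeq (fun n => (Q n).eval y - (Q n).eval x) := by
    intro x hx
    obtain ⟨r, hr, h1, h2⟩ := hloc x hx
    exact ⟨r, hr, h1, fun y hy => h2.cauchySeq hy⟩
  -- the set of points of convergence is clopen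
  have hA : ∀ x ∈ Ω, CauchySeq (fun n => (Q n).eval x) := by
    have ho1 : IsOpen {x ∈ Ω | CauchySeq (fun n => (Q n).eval x)} := by
      rw [isOpen_iff_mem_nhds]
      rintro x ⟨hx, hxc⟩
      obtain ⟨r, hr, h1, h2⟩ := hpt x hx
      filter_upwards [ball_mem_nhds x hr] with y hy
      refine ⟨h1 hy, ?_⟩
      convert (h2 y hy).add hxc using 1
      ext n; simp
    have ho2 : IsOpen {x ∈ Ω | ¬ CauchySeq (fun n => (Q n).eval x)} := by
      rw [isOpen_iff_mem_nhds]
      rintro x ⟨hx, hxc⟩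
      obtain ⟨r, hr, h1, h2⟩ := hpt x hx
      filter_upwards [ball_mem_nhds x hr] with y hy
      refine ⟨h1 hy, fun hyc => hxc ?_⟩
      convert hyc.add (h2 y hy).neg using 1
      ext n; simp
    have hsub := hc.subset_left_of_subset_union ho1 ho2
      (Set.disjoint_left.2 fun x h1 h2 => h2.2 h1.2)
      (fun x hx => by
        by_cases h : CauchySeq (fun n => (Q n).eval x)
        · exact Or.inl ⟨hx, h⟩
        · exact Or.inr ⟨hx, h⟩)
      ⟨z₀, hz₀, hz₀, by simpa [hQ0] using cauchySeq_const (0:ℂ)⟩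
    exact fun x hx => (hsub hx).2
  have hlim : ∀ x, ∃ l, x ∈ Ω → Filter.Tendsto (fun n => (Q n).eval x) Filter.atTop (nhds l) := by
    intro x
    by_cases hx : x ∈ Ω
    · obtain ⟨l, hl⟩ := cauchySeq_tendsto_of_complete (hA x hx)
      exact ⟨l, fun _ => hl⟩
    · exact ⟨0, fun h => absurd h hx⟩
  choose H hH using hlim
  have hLU : TendstoLocallyUniformlyOn (fun n z => (Q n).eval z) H Filter.atTop Ω := by
    rw [tendstoLocallyUniformlyOn_iff_forall_tendsto]
    intro x hx
    obtain ⟨r, hr, h1, h2⟩ := hloc x hx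
    have h3 : UniformCauchySeqOn (fun n z => (Q n).eval z) Filter.atTop (ball x r) := by
      rw [Metric.uniformCauchySeqOn_iff] at h2 ⊢
      intro ε hε
      obtain ⟨N1, hN1⟩ := h2 (ε / 2) (by positivity)
      obtain ⟨N2, hN2⟩ := Metric.cauchySeq_iff.1 (hA x hx) (ε / 2) (by positivity)
      refine ⟨max N1 N2, fun m hm n hn z hz => ?_⟩
      have a1 := hN1 m (le_of_max_le_left hm) n (le_of_max_le_left hn) z hz
      have a2 := hN2 m (le_of_max_le_right hm) n (le_of_max_le_right hn)
      rw [dist_eq_norm] at a1 a2 ⊢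
      have e : (Q m).eval z - (Q n).eval z = ((Q m).eval z - (Q m).eval x -
        ((Q n).eval z - (Q n).eval x)) + ((Q m).eval x - (Q n).eval x) := by ring
      rw [e]
      exact (norm_add_le _ _).trans_lt (by linarith)
    have h4 : TendstoUniformlyOn (fun n z => (Q n).eval z) H Filter.atTop (ball x r) :=
      h3.tendstoUniformlyOn_of_tendsto fun y hy => hH y (h1 hy)
    have h5 := tendstoUniformlyOn_iff_tendsto.1 h4
    refine h5.mono_left (Filter.prod_mono le_rfl ?_)
    rw [hΩ.nhdsWithin_eq hx]
    exact Filter.le_principal_iff.2 (ball_mem_nhds x hr)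
  have hPAO : PAO Ω H := PAO.limit hΩ (fun n K _ _ => PA.poly K (Q n)) hLU
  refine ⟨H, hPAO, fun z hz => ?_⟩
  have hd := hLU.deriv (Filter.Eventually.of_forall
    fun n => (Q n).differentiable.differentiableOn) hΩ
  have e1 := hd.tendsto_at hz
  have e2 := hP.tendsto_at hz
  have e3 : ∀ n, (_root_.deriv ∘ fun n z => (Q n).eval z) n z = (P n).eval z := by
    intro n; simp [hQ]
  simp only [e3] at e1
  rw [← tendsto_nhds_unique e1 e2]
  exact ((hPAO.differentiableOn hΩ).differentiableAt (hΩ.mem_nhds hz)).hasDerivAt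

/-- Integrate the logarithmic derivative, which is approximable as `F` has no zeros. -/
theorem PAO.log {Ω : Set ℂ} (hΩ : RungeOpen Ω) (hc : IsPreconnected Ω) {F : ℂ → ℂ}
    (hF : PAO Ω F) (h0 : ∀ z ∈ Ω, F z ≠ 0) {z₀ : ℂ} (hz₀ : z₀ ∈ Ω) :
    ∃ H : ℂ → ℂ, PAO Ω H ∧ ∀ z ∈ Ω, Complex.exp (H z) = F z := by
  have hFd := hF.differentiableOn hΩ.isOpen
  obtain ⟨H, hH, hHd⟩ := ((hF.deriv hΩ.isOpen).mul (hF.inv hΩ h0)).primitive hΩ.isOpen hc hz₀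
  have hder : ∀ z ∈ Ω, HasDerivAt (fun z => F z * Complex.exp (-H z)) 0 z := by
    intro z hz
    have h1 := (hFd.differentiableAt (hΩ.isOpen.mem_nhds hz)).hasDerivAt
    refine HasDerivAt.congr_deriv (h1.mul ((hHd z hz).neg.cexp)) ?_
    have := h0 z hz
    field_simp
    simp
  obtain ⟨c, hcc⟩ := hΩ.isOpen.exists_is_const_of_deriv_eq_zero hc
    (fun z hz => (hder z hz).differentiableAt.differentiableWithinAt)
    (fun z hz => (hder z hz).deriv)
  have hFc : ∀ z ∈ Ω, F z = c * Complex.exp (H z) := by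
    intro z hz
    rw [← hcc z hz, mul_assoc, ← Complex.exp_add]
    simp
  have hc0 : c ≠ 0 := by
    rintro rfl
    exact h0 z₀ hz₀ (by simp [hFc z₀ hz₀])
  refine ⟨fun z => H z + Complex.log c, hH.add (PAO.const _ _), fun z hz => ?_⟩
  rw [Complex.exp_add, Complex.exp_log hc0, hFc z hz, mul_comm]

theorem PAO.sqrt {Ω : Set ℂ} (hΩ : RungeOpen Ω) (hc : IsPreconnected Ω) {F : ℂ → ℂ}
    (hF : PAO Ω F) (h0 : ∀ z ∈ Ω, F z ≠ 0) {z₀ : ℂ} (hz₀ : z₀ ∈ Ω) :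
    ∃ H : ℂ → ℂ, PAO Ω H ∧ ∀ z ∈ Ω, H z ^ 2 = F z := by
  obtain ⟨H, hH, hHF⟩ := hF.log hΩ hc h0 hz₀
  refine ⟨fun z => Complex.exp ((1 / 2) * H z), ((PAO.const _ _).mul hH).exp, fun z hz => ?_⟩
  rw [← Complex.exp_nat_mul, ← hHF z hz]
  congr 1
  push_cast; ring

/-! ### The Riemann mapping theorem for Runge domains -/

theorem inj_isOpen_image {Ω : Set ℂ} (hΩ : IsOpen Ω) {F : ℂ → ℂ}
    (hF : DifferentiableOn ℂ F Ω) (hi : Set.InjOn F Ω) {s : Set ℂ} (hs : s ⊆ Ω) (hso : IsOpen s) :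
    IsOpen (F '' s) := by
  rw [isOpen_iff_mem_nhds]
  rintro _ ⟨z, hz, rfl⟩
  have han : AnalyticAt ℂ F z := hF.analyticAt (hΩ.mem_nhds (hs hz))
  rcases han.eventually_constant_or_nhds_le_map_nhds with h | h
  · exfalso
    have h2 : ∀ᶠ w in nhdsWithin z {z}ᶜ, False := by
      filter_upwards [mem_nhdsWithin_of_mem_nhds h, self_mem_nhdsWithin,
        mem_nhdsWithin_of_mem_nhds (hΩ.mem_nhds (hs hz))] with w hw hwz hwΩ
      exact hwz (hi hwΩ (hs hz) hw)
    exact (NormedField.nhdsNE_neBot z).ne (by simpa using h2)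
  · exact h (Filter.image_mem_map (hso.mem_nhds hz))

/-- The inverse of an injective holomorphic function is holomorphic. -/
theorem inj_inverse {Ω : Set ℂ} (hΩ : IsOpen Ω) {F ψ : ℂ → ℂ}
    (hF : DifferentiableOn ℂ F Ω) (hi : Set.InjOn F Ω) (hψ : ∀ z ∈ Ω, ψ (F z) = z) :
    DifferentiableOn ℂ ψ (F '' Ω) := by
  have hcont : ∀ z ∈ Ω, ContinuousAt ψ (F z) := by
    intro z hz
    rw [ContinuousAt, hψ z hz]
    intro s hs
    rw [Filter.mem_map]
    obtain ⟨t, hts, hto, hzt⟩ := _root_.mem_nhds_iff.1 (Filter.inter_mem hs (hΩ.mem_nhds hz))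
    refine Filter.mem_of_superset ((inj_isOpen_image hΩ hF hi (fun x hx => (hts hx).2) hto).mem_nhds
      ⟨z, hzt, rfl⟩) ?_
    rintro _ ⟨w, hw, rfl⟩
    rw [Set.mem_preimage, hψ w (hts hw).2]
    exact (hts hw).1
  have himg := inj_isOpen_image hΩ hF hi subset_rfl hΩ
  have hreg : ∀ z ∈ Ω, deriv F z ≠ 0 → DifferentiableAt ℂ ψ (F z) := by
    intro z hz hd
    have h1 : HasDerivAt F (deriv F z) (ψ (F z)) := by
      rw [hψ z hz]; exact (hF.differentiableAt (hΩ.mem_nhds hz)).hasDerivAt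
    refine (HasDerivAt.of_local_left_inverse (hcont z hz) h1 hd ?_).differentiableAt
    filter_upwards [himg.mem_nhds ⟨z, hz, rfl⟩]
    rintro _ ⟨w, hw, rfl⟩
    rw [hψ w hw]
  rintro _ ⟨z, hz, rfl⟩
  refine DifferentiableAt.differentiableWithinAt ?_
  have han : AnalyticAt ℂ (deriv F) z := (hF.analyticAt (hΩ.mem_nhds hz)).deriv
  have hne : ∀ᶠ w in nhdsWithin z {z}ᶜ, deriv F w ≠ 0 := by
    rcases han.eventually_eq_zero_or_eventually_ne_zero with h | h
    · exfalso
      obtain ⟨r, hr, hr2⟩ := Metric.eventually_nhds_iff_ball.1 (h.and (hΩ.mem_nhds hz))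
      obtain ⟨c, hc⟩ := isOpen_ball.exists_is_const_of_deriv_eq_zero
        (convex_ball z r).isPreconnected (f := F)
        (hF.mono fun w hw => (hr2 w hw).2) fun w hw => (hr2 w hw).1
      have hw : z + (r / 2 : ℝ) ∈ ball z r := by
        simp [abs_of_pos hr]; linarith
      have := hi (hr2 _ hw).2 hz (by rw [hc _ hw, hc z (mem_ball_self hr)])
      simp at this; linarith
    · exact h
  obtain ⟨t, hts, hto, hzt⟩ := _root_.mem_nhds_iff.1
    (Filter.inter_mem (eventually_nhdsWithin_iff.1 hne) (hΩ.mem_nhds hz))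
  have hFt : IsOpen (F '' t) := inj_isOpen_image hΩ hF hi (fun x hx => (hts hx).2) hto
  have hmem : F '' t ∈ nhds (F z) := hFt.mem_nhds ⟨z, hzt, rfl⟩
  refine ((Complex.differentiableOn_compl_singleton_and_continuousAt_iff hmem).1
    ⟨?_, hcont z hz⟩).differentiableAt hmem
  rintro _ ⟨⟨w, hw, rfl⟩, hwz⟩
  refine (hreg w (hts hw).2 ((hts hw).1 ?_)).differentiableWithinAt
  rintro rfl
  exact hwz rfl

theorem inj_deriv_ne_zero {Ω : Set ℂ} (hΩ : IsOpen Ω) {F : ℂ → ℂ}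
    (hF : DifferentiableOn ℂ F Ω) (hi : Set.InjOn F Ω) {z : ℂ} (hz : z ∈ Ω) : deriv F z ≠ 0 := by
  have hψ : ∀ z ∈ Ω, Function.invFunOn F Ω (F z) = z := fun z hz => hi.leftInvOn_invFunOn hz
  have h1 := (inj_inverse hΩ hF hi hψ).differentiableAt
    ((inj_isOpen_image hΩ hF hi subset_rfl hΩ).mem_nhds ⟨z, hz, rfl⟩)
  have h2 := h1.hasDerivAt.comp z (hF.differentiableAt (hΩ.mem_nhds hz)).hasDerivAt
  have h3 : HasDerivAt (Function.invFunOn F Ω ∘ F) 1 z := by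
    refine (hasDerivAt_id z).congr_of_eventuallyEq ?_
    filter_upwards [hΩ.mem_nhds hz] with w hw using hψ w hw
  intro h0
  have := h2.unique h3
  simp [h0] at this

/-- The disc automorphism taking `c` to `0`. -/
noncomputable def moebius (c w : ℂ) : ℂ := (w - c) * (1 - (starRingEnd ℂ) c * w)⁻¹

theorem moebius_den {c w : ℂ} (hc : ‖c‖ < 1) (hw : ‖w‖ < 1) : 1 - (starRingEnd ℂ) c * w ≠ 0 := by
  intro h
  have h1 : ‖(starRingEnd ℂ) c * w‖ = 1 := by rw [← sub_eq_zero.1 h]; simp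
  rw [norm_mul, Complex.norm_conj] at h1
  nlinarith [norm_nonneg c, norm_nonneg w]

theorem moebius_norm {c w : ℂ} (hc : ‖c‖ < 1) (hw : ‖w‖ < 1) : ‖moebius c w‖ < 1 := by
  have hd := norm_pos_iff.2 (moebius_den hc hw)
  rw [moebius, norm_mul, norm_inv, ← div_eq_mul_inv, div_lt_one hd]
  apply lt_of_pow_lt_pow_left₀ 2 hd.le
  have h1 : ‖w‖ ^ 2 < 1 := by nlinarith [norm_nonneg w]
  have h2 : ‖c‖ ^ 2 < 1 := by nlinarith [norm_nonneg c]
  rw [← Complex.normSq_eq_norm_sq, Complex.normSq_apply] at h1 h2 ⊢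
  rw [← Complex.normSq_eq_norm_sq, Complex.normSq_apply]
  simp only [sub_re, sub_im, one_re, one_im, mul_re, mul_im, conj_re, conj_im]
  nlinarith [mul_pos (sub_pos.2 h1) (sub_pos.2 h2)]

theorem moebius_inj {c w w' : ℂ} (hc : ‖c‖ < 1) (hw : ‖w‖ < 1) (hw' : ‖w'‖ < 1)
    (h : moebius c w = moebius c w') : w = w' := by
  have h1 := moebius_den hc hw
  have h2 := moebius_den hc hw'
  rw [moebius, moebius, ← div_eq_mul_inv, ← div_eq_mul_inv, div_eq_div_iff h1 h2] at h
  have h3 := moebius_den hc hc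
  have : (w - w') * (1 - (starRingEnd ℂ) c * c) = 0 := by linear_combination h
  rcases mul_eq_zero.1 this with h | h
  · exact sub_eq_zero.1 h
  · exact absurd h h3

theorem moebius_hasDerivAt {c w : ℂ} (hc : ‖c‖ < 1) (hw : ‖w‖ < 1) :
    HasDerivAt (moebius c) ((1 - (starRingEnd ℂ) c * c) / (1 - (starRingEnd ℂ) c * w) ^ 2) w := by
  have h1 := moebius_den hc hw
  have h2 : HasDerivAt (fun w => 1 - (starRingEnd ℂ) c * w) (-(starRingEnd ℂ) c) w := by
    simpa using ((hasDerivAt_id w).const_mul ((starRingEnd ℂ) c)).const_sub 1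
  refine (((hasDerivAt_id w).sub_const c).fun_mul (h2.fun_inv h1)).congr_deriv ?_
  simp only [id]
  field_simp
  ring

theorem PAO.moebius {Ω : Set ℂ} (hΩ : RungeOpen Ω) {F : ℂ → ℂ} (hF : PAO Ω F) {c : ℂ}
    (hc : ‖c‖ < 1) (hm : ∀ z ∈ Ω, ‖F z‖ < 1) : PAO Ω (fun z => _root_.moebius c (F z)) := by
  have h1 : PAO Ω (fun z => F z - c) := by
    simpa [sub_eq_add_neg] using hF.add (PAO.const Ω (-c))
  have h2 : PAO Ω (fun z => 1 - (starRingEnd ℂ) c * F z) := by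
    simpa [sub_eq_add_neg] using
      (PAO.const Ω 1).add ((PAO.const Ω (-(starRingEnd ℂ) c)).mul hF)
  exact h1.mul (h2.inv hΩ fun z hz => moebius_den hc (hm z hz))

theorem conj_mul_self_norm (c : ℂ) : (starRingEnd ℂ) c * c = ((‖c‖ ^ 2 : ℝ) : ℂ) := by
  rw [← Complex.normSq_eq_conj_mul_self, Complex.normSq_eq_norm_sq]

/-- The Riemann mapping theorem for bounded connected Runge open sets. -/
theorem riemann_map {Ω : Set ℂ} (hΩ : RungeOpen Ω) (hc : IsPreconnected Ω) (h0 : (0:ℂ) ∈ Ω)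
    (hb : Ω ⊆ ball 0 1) :
    ∃ G : ℂ → ℂ, DifferentiableOn ℂ G Ω ∧ Set.InjOn G Ω ∧ G '' Ω = ball 0 1 ∧ G 0 = 0 := by
  let 𝓖 : Set (ℂ → ℂ) := {G | PAO Ω G ∧ Set.InjOn G Ω ∧ Set.MapsTo G Ω (ball 0 1) ∧ G 0 = 0}
  have hid : (fun z => z) ∈ 𝓖 := ⟨PAO.id Ω, fun _ _ _ _ h => h, hb, rfl⟩
  obtain ⟨ρ, hρ, hρΩ⟩ := Metric.mem_nhds_iff.1 (hΩ.isOpen.mem_nhds h0)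
  have hbdd : ∀ G ∈ 𝓖, ‖deriv G 0‖ ≤ 1 / ρ := by
    rintro G ⟨h1, h2, h3, h4⟩
    refine Complex.norm_deriv_le_div_of_mapsTo_ball
      ((h1.differentiableOn hΩ.isOpen).mono hρΩ) ?_ hρ
    rw [h4]
    exact fun z hz => ball_subset_closedBall (h3 (hρΩ hz))
  let D : Set ℝ := (fun G : ℂ → ℂ => ‖deriv G 0‖) '' 𝓖
  have hDne : D.Nonempty := ⟨_, _, hid, rfl⟩
  have hDb : BddAbove D := ⟨1 / ρ, by rintro _ ⟨G, hG, rfl⟩; exact hbdd G hG⟩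
  obtain ⟨u, -, hu, huD⟩ := exists_seq_tendsto_sSup hDne hDb
  choose Gs hGs hGu using huD
  obtain ⟨φ, hφ, G, hlim⟩ := montel hΩ.isOpen Gs (fun n => (hGs n).1.differentiableOn hΩ.isOpen)
    (fun K hK _ => ⟨1, fun n z hz => by
      have := (hGs n).2.2.1 (hK hz)
      rw [mem_ball_zero_iff] at this; exact this.le⟩)
  have hGP : PAO Ω G := PAO.limit hΩ.isOpen (fun n => (hGs (φ n)).1) hlim
  have hGd := hGP.differentiableOn hΩ.isOpen
  have hS : ‖deriv G 0‖ = sSup D := by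
    have h1 := (hlim.deriv (Filter.Eventually.of_forall fun n =>
      (hGs (φ n)).1.differentiableOn hΩ.isOpen) hΩ.isOpen).tendsto_at h0
    have h2 : Filter.Tendsto (fun n => u (φ n)) Filter.atTop (nhds (sSup D)) :=
      hu.comp hφ.tendsto_atTop
    refine tendsto_nhds_unique h1.norm (h2.congr fun n => ?_)
    exact (hGu (φ n)).symm
  have hS1 : 1 ≤ sSup D := le_csSup hDb ⟨_, hid, by simp⟩
  have hG'0 : deriv G 0 ≠ 0 := by
    rw [← norm_pos_iff, hS]; linarith
  have hGi : Set.InjOn G Ω := hurwitz hΩ.isOpen hc _ G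
    (fun n => (hGs (φ n)).1.differentiableOn hΩ.isOpen) (fun n => (hGs (φ n)).2.1) hlim h0 hG'0
  have hG0 : G 0 = 0 := by
    refine tendsto_nhds_unique (hlim.tendsto_at h0) ?_
    simp [(hGs _).2.2.2]
  have hGm : Set.MapsTo G Ω (ball 0 1) := by
    have h1 : G '' Ω ⊆ closedBall 0 1 := by
      rintro _ ⟨z, hz, rfl⟩
      rw [mem_closedBall_zero_iff]
      refine le_of_tendsto (hlim.tendsto_at hz).norm (Filter.Eventually.of_forall fun n => ?_)
      have := (hGs (φ n)).2.2.1 hz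
      rw [mem_ball_zero_iff] at this; exact this.le
    have h2 := interior_maximal h1 (inj_isOpen_image hΩ.isOpen hGd hGi subset_rfl hΩ.isOpen)
    rw [interior_closedBall _ one_ne_zero] at h2
    exact fun z hz => h2 ⟨z, hz, rfl⟩
  refine ⟨G, hGd, hGi, ?_, hG0⟩
  apply Set.Subset.antisymm (Set.mapsTo_iff_image_subset.1 hGm)
  intro c hcb
  by_contra hcn
  -- the square root trick
  have hc1 : ‖c‖ < 1 := mem_ball_zero_iff.1 hcb
  have hG1 : ∀ z ∈ Ω, ‖G z‖ < 1 := fun z hz => mem_ball_zero_iff.1 (hGm hz)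
  have hFP := hGP.moebius hΩ hc1 hG1
  obtain ⟨H, hHP, hH⟩ := hFP.sqrt hΩ hc (fun z hz h => by
    rcases mul_eq_zero.1 h with h | h
    · exact hcn ⟨z, hz, sub_eq_zero.1 h⟩
    · exact inv_ne_zero (moebius_den hc1 (hG1 z hz)) h) h0
  have hH1 : ∀ z ∈ Ω, ‖H z‖ < 1 := by
    intro z hz
    have h1 := moebius_norm hc1 (hG1 z hz)
    rw [← hH z hz, norm_pow] at h1
    exact (pow_lt_one_iff_of_nonneg (norm_nonneg _) two_ne_zero).1 h1
  set e := H 0 with he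
  have he1 : ‖e‖ < 1 := hH1 0 h0
  have hec : e ^ 2 = -c := by
    rw [he, hH 0 h0, hG0]; simp [_root_.moebius]
  have hc0 : c ≠ 0 := by
    rintro rfl; exact hcn ⟨0, h0, hG0⟩
  have he0 : e ≠ 0 := by
    intro h; rw [h] at hec; apply hc0; simpa using hec.symm
  have hmem : (fun z => _root_.moebius e (H z)) ∈ 𝓖 := by
    refine ⟨hHP.moebius hΩ he1 hH1, ?_, ?_, ?_⟩
    · intro z hz z' hz' h
      have h1 := moebius_inj he1 (hH1 z hz) (hH1 z' hz') h
      have h2 := hH z hz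
      rw [h1, hH z' hz'] at h2
      exact (hGi hz' hz (moebius_inj hc1 (hG1 z' hz') (hG1 z hz) h2)).symm
    · intro z hz
      exact mem_ball_zero_iff.2 (moebius_norm he1 (hH1 z hz))
    · simp [_root_.moebius, he]
  have hle := le_csSup hDb ⟨_, hmem, rfl⟩
  have hHd : HasDerivAt H (deriv H 0) 0 :=
    ((hHP.differentiableOn hΩ.isOpen).differentiableAt (hΩ.isOpen.mem_nhds h0)).hasDerivAt
  have hGd0 : HasDerivAt G (deriv G 0) 0 :=
    (hGd.differentiableAt (hΩ.isOpen.mem_nhds h0)).hasDerivAt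
  have hd1 := (moebius_hasDerivAt he1 (hH1 0 h0)).comp (0:ℂ) hHd
  have hd2 := (moebius_hasDerivAt hc1 (hG1 0 h0)).comp (0:ℂ) hGd0
  have hd3 : HasDerivAt (fun z => H z ^ 2) (2 * e * deriv H 0) 0 := by
    exact (hHd.fun_pow 2).congr_deriv (by simp [he])
  have hd4 : 2 * e * deriv H 0 = (1 - (starRingEnd ℂ) c * c) * deriv G 0 := by
    have h1 := hd2.congr_of_eventuallyEq (f₁ := fun z => H z ^ 2) (by
      filter_upwards [hΩ.isOpen.mem_nhds h0] with z hz using hH z hz)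
    have := hd3.unique h1
    rw [this, hG0]; simp
  have hd5 : deriv (fun z => _root_.moebius e (H z)) 0
      = deriv H 0 / (1 - (starRingEnd ℂ) e * e) := by
    rw [show (fun z => _root_.moebius e (H z)) = _root_.moebius e ∘ H from rfl, hd1.deriv, ← he]
    have := moebius_den he1 he1
    field_simp
  beta_reduce at hle
  rw [hd5, ← hS] at hle
  have hn4 := congrArg norm hd4
  have hcn2 : ‖c‖ = ‖e‖ ^ 2 := by rw [← norm_neg, ← hec, norm_pow]
  rw [conj_mul_self_norm] at hn4 hle
  rw [← Complex.ofReal_one, ← Complex.ofReal_sub] at hn4 hle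
  rw [norm_div, Complex.norm_real, Real.norm_eq_abs] at hle
  rw [norm_mul, norm_mul, norm_mul, Complex.norm_real, Real.norm_eq_abs, hcn2] at hn4
  have hx0 : 0 < ‖e‖ := norm_pos_iff.2 he0
  set x := ‖e‖
  have hx2 : 0 < 1 - x ^ 2 := by nlinarith
  rw [abs_of_pos hx2, div_le_iff₀ hx2] at hle
  rw [abs_of_pos (by nlinarith [sq_nonneg x])] at hn4
  have hgp : 0 < ‖deriv G 0‖ := norm_pos_iff.2 hG'0
  simp only [Complex.norm_ofNat] at hn4
  have h9 : (1 - (x^2)^2) * ‖deriv G 0‖ ≤ 2 * x * (‖deriv G 0‖ * (1 - x ^ 2)) := by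
    rw [← hn4]; gcongr
  have : 0 < ‖deriv G 0‖ * (1 - x ^ 2) * (1 - x) ^ 2 := by
    have : 0 < 1 - x := by linarith
    positivity
  nlinarith

/-! ### Bounded univalent functions -/

/-- `v` represents the univalent self-map `z ↦ z * exp (-v z)` of the disc, whose derivative at `0`
is `exp (-u)`. -/
structure InV (u : ℝ) (v : ℂ → ℂ) : Prop where
  diff : DifferentiableOn ℂ v (ball 0 1)
  re_nonneg : ∀ z ∈ ball (0:ℂ) 1, 0 ≤ (v z).re
  zero : v 0 = u
  inj : Set.InjOn (fun z => z * Complex.exp (-v z)) (ball 0 1)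

/-- The bounded univalent function attached to `v`. -/
noncomputable def vMap (v : ℂ → ℂ) (z : ℂ) : ℂ := z * Complex.exp (-v z)

theorem zero_mem_disc : (0:ℂ) ∈ ball (0:ℂ) 1 := mem_ball_self one_pos

theorem InV.norm_le {u : ℝ} {v : ℂ → ℂ} (h : InV u v) {z : ℂ} (hz : z ∈ ball (0:ℂ) 1) :
    ‖vMap v z‖ ≤ ‖z‖ := by
  rw [vMap, norm_mul, Complex.norm_exp]
  have := h.re_nonneg z hz
  have h1 : Real.exp (-v z).re ≤ 1 := Real.exp_le_one_iff.2 (by simpa using this)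
  nlinarith [norm_nonneg z]

theorem InV.mapsTo {u : ℝ} {v : ℂ → ℂ} (h : InV u v) :
    Set.MapsTo (vMap v) (ball (0:ℂ) 1) (ball (0:ℂ) 1) := fun _ hz =>
  mem_ball_zero_iff.2 ((h.norm_le hz).trans_lt (mem_ball_zero_iff.1 hz))

theorem vMap_zero (v : ℂ → ℂ) : vMap v 0 = 0 := by simp [vMap]

theorem InV.vMap_diff {u : ℝ} {v : ℂ → ℂ} (h : InV u v) :
    DifferentiableOn ℂ (vMap v) (ball (0:ℂ) 1) :=
  differentiableOn_id.mul h.diff.neg.cexp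

theorem InV.hasDerivAt {u : ℝ} {v : ℂ → ℂ} (h : InV u v) :
    HasDerivAt (vMap v) (Real.exp (-u) : ℝ) 0 := by
  have h1 := (h.diff.differentiableAt (isOpen_ball.mem_nhds zero_mem_disc)).hasDerivAt
  refine ((hasDerivAt_id (0:ℂ)).fun_mul h1.fun_neg.cexp).congr_deriv ?_
  simp [h.zero]

/-- A holomorphic function on the disc with nonnegative real part, vanishing at `0`, is zero. -/
theorem eq_zero_of_re_nonneg {v : ℂ → ℂ} (hd : DifferentiableOn ℂ v (ball 0 1))
    (hre : ∀ z ∈ ball (0:ℂ) 1, 0 ≤ (v z).re) (h0 : v 0 = 0) :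
    ∀ z ∈ ball (0:ℂ) 1, v z = 0 := by
  intro z hz
  have hz1 : ‖z‖ < 1 := mem_ball_zero_iff.1 hz
  have key : ∀ M > 0, ‖v z‖ ≤ M * (2 * ‖z‖ / (1 - ‖z‖)) := by
    intro M hM
    have := Complex.borelCaratheodory_zero (f := fun z => -v z) hM hd.neg
      (fun w hw => by
        change (-v w).re ≤ M
        rw [Complex.neg_re]
        linarith [hre w hw]) one_pos hz (by simp [h0])
    rw [norm_neg] at this
    refine this.trans (le_of_eq ?_)
    ring
  have h1 : Filter.Tendsto (fun M : ℝ => M * (2 * ‖z‖ / (1 - ‖z‖))) (nhdsWithin 0 (Set.Ioi 0))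
      (nhds 0) := by
    have : Continuous (fun M : ℝ => M * (2 * ‖z‖ / (1 - ‖z‖))) := by fun_prop
    simpa using (this.tendsto 0).mono_left nhdsWithin_le_nhds
  have h2 : ‖v z‖ ≤ 0 := ge_of_tendsto h1 (by
    filter_upwards [self_mem_nhdsWithin] with M hM using key M hM)
  exact norm_le_zero_iff.1 h2

theorem InV.eq_zero {v : ℂ → ℂ} (h : InV 0 v) : ∀ z ∈ ball (0:ℂ) 1, v z = 0 :=
  eq_zero_of_re_nonneg h.diff h.re_nonneg (by simpa using h.zero)

theorem exp_eq_one_unique {d : ℂ → ℂ} (hd : DifferentiableOn ℂ d (ball 0 1))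
    (he : ∀ z ∈ ball (0:ℂ) 1, Complex.exp (d z) = 1) (h0 : d 0 = 0) :
    ∀ z ∈ ball (0:ℂ) 1, d z = 0 := by
  intro z hz
  obtain ⟨c, hc⟩ := isOpen_ball.exists_is_const_of_deriv_eq_zero
    (convex_ball (0:ℂ) 1).isPreconnected hd (fun w hw => by
      have h1 := (hd.differentiableAt (isOpen_ball.mem_nhds hw)).hasDerivAt.cexp
      have h2 : HasDerivAt (fun z => Complex.exp (d z)) 0 w := by
        refine (hasDerivAt_const w (1:ℂ)).congr_of_eventuallyEq ?_
        filter_upwards [isOpen_ball.mem_nhds hw] with y hy using he y hy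
      have h3 := h1.unique h2
      rw [he w hw, one_mul] at h3
      exact h3)
  rw [hc z hz, ← hc 0 zero_mem_disc, h0]

/-- Logarithms of zero-free functions on the disc. -/
theorem disc_log {h : ℂ → ℂ} (hd : DifferentiableOn ℂ h (ball 0 1))
    (hne : ∀ z ∈ ball (0:ℂ) 1, h z ≠ 0) {l : ℂ} (hl : Complex.exp l = h 0) :
    ∃ L : ℂ → ℂ, DifferentiableOn ℂ L (ball 0 1) ∧ L 0 = l ∧
      ∀ z ∈ ball (0:ℂ) 1, Complex.exp (L z) = h z := by
  have hq : DifferentiableOn ℂ (fun z => deriv h z / h z) (ball 0 1) :=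
    (hd.deriv isOpen_ball).div hd hne
  obtain ⟨H, hH⟩ := hq.isExactOn_ball
  have hder : ∀ z ∈ ball (0:ℂ) 1, HasDerivAt (fun z => h z * Complex.exp (-H z)) 0 z := by
    intro z hz
    have h1 := (hd.differentiableAt (isOpen_ball.mem_nhds hz)).hasDerivAt
    refine (h1.fun_mul (hH z hz).fun_neg.cexp).congr_deriv ?_
    have := hne z hz
    field_simp
    simp
  obtain ⟨c, hcc⟩ := isOpen_ball.exists_is_const_of_deriv_eq_zero
    (convex_ball (0:ℂ) 1).isPreconnected
    (fun z hz => (hder z hz).differentiableAt.differentiableWithinAt)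
    (fun z hz => (hder z hz).deriv)
  refine ⟨fun z => H z - H 0 + l, ?_, by simp, fun z hz => ?_⟩
  · exact fun z hz => ((hH z hz).differentiableAt.sub_const _ |>.add_const _).differentiableWithinAt
  · have h1 := hcc z hz
    rw [← hcc 0 zero_mem_disc, Complex.exp_neg, Complex.exp_neg, ← div_eq_mul_inv,
      ← div_eq_mul_inv, div_eq_div_iff (Complex.exp_ne_zero _) (Complex.exp_ne_zero _)] at h1
    rw [Complex.exp_add, Complex.exp_sub, hl]
    have := Complex.exp_ne_zero (H 0)
    field_simp
    linear_combination -h1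

/-- Every univalent self-map of the disc fixing `0`, with positive derivative there, comes from
`InV`. -/
theorem toInV {ω : ℂ → ℂ} (hd : DifferentiableOn ℂ ω (ball 0 1)) (hi : Set.InjOn ω (ball 0 1))
    (hm : Set.MapsTo ω (ball 0 1) (ball 0 1)) (h0 : ω 0 = 0) {u : ℝ}
    (hu : deriv ω 0 = (Real.exp (-u) : ℝ)) :
    ∃ v, InV u v ∧ ∀ z ∈ ball (0:ℂ) 1, ω z = vMap v z := by
  have hds : DifferentiableOn ℂ (dslope ω 0) (ball 0 1) :=
    (Complex.differentiableOn_dslope (isOpen_ball.mem_nhds zero_mem_disc)).2 hd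
  have hω : ∀ z, ω z = z * dslope ω 0 z := by
    intro z
    have := sub_smul_dslope ω 0 z
    simpa [h0] using this.symm
  have hne : ∀ z ∈ ball (0:ℂ) 1, dslope ω 0 z ≠ 0 := by
    intro z hz h
    rcases eq_or_ne z 0 with rfl | hz0
    · rw [dslope_same, hu] at h
      exact (Real.exp_pos _).ne' (by exact_mod_cast h)
    · have : ω z = ω 0 := by rw [hω z, h, h0, mul_zero]
      exact hz0 (hi hz zero_mem_disc this)
  obtain ⟨L, hL, hL0, hLe⟩ := disc_log hds hne (l := -(u:ℂ)) (by
    rw [dslope_same, hu]; push_cast; rfl)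
  have hv : ∀ z ∈ ball (0:ℂ) 1, ω z = vMap (fun z => -L z) z := by
    intro z hz
    rw [vMap, neg_neg, hLe z hz, ← hω]
  refine ⟨fun z => -L z, ⟨hL.neg, ?_, by simp [hL0], ?_⟩, hv⟩
  · intro z hz
    have h1 : ‖dslope ω 0 z‖ ≤ 1 / 1 :=
      Complex.norm_dslope_le_div_of_mapsTo_ball hd
        (by rw [h0]; exact fun w hw => ball_subset_closedBall (hm hw)) hz
    rw [← hLe z hz, Complex.norm_exp, div_one, Real.exp_le_one_iff] at h1
    simpa using h1
  · intro z hz w hw h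
    refine hi hz hw ?_
    rw [hv z hz, hv w hw]; exact h

/-- `v = v₁ ∘ ω + v₂` on the disc, where `ω` is the map of `v₂`: the map of `v` is the composition
of the maps of `v₁` and `v₂`. -/
def VComp (v v₁ v₂ : ℂ → ℂ) : Prop := ∀ z ∈ ball (0:ℂ) 1, v z = v₁ (vMap v₂ z) + v₂ z

theorem VComp.map {v v₁ v₂ : ℂ → ℂ} (h : VComp v v₁ v₂) {z : ℂ} (hz : z ∈ ball (0:ℂ) 1) :
    vMap v z = vMap v₁ (vMap v₂ z) := by
  rw [vMap, h z hz, neg_add, Complex.exp_add]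
  conv_rhs => rw [vMap]
  rw [vMap]; ring

theorem VComp.inV {v v₁ v₂ : ℂ → ℂ} {u₁ u₂ : ℝ} (h : VComp v v₁ v₂) (h₁ : InV u₁ v₁)
    (h₂ : InV u₂ v₂) : InV (u₁ + u₂) v := by
  refine ⟨?_, ?_, ?_, ?_⟩
  · refine DifferentiableOn.congr ?_ h
    exact (h₁.diff.comp h₂.vMap_diff h₂.mapsTo).add h₂.diff
  · intro z hz
    rw [h z hz, Complex.add_re]
    exact add_nonneg (h₁.re_nonneg _ (h₂.mapsTo hz)) (h₂.re_nonneg z hz)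
  · rw [h 0 zero_mem_disc, vMap_zero, h₁.zero, h₂.zero]; push_cast; rfl
  · intro z hz w hw hzw
    have e : vMap v₁ (vMap v₂ z) = vMap v₁ (vMap v₂ w) := by
      rw [← h.map hz, ← h.map hw]; exact hzw
    exact h₂.inj hz hw (h₁.inj (h₂.mapsTo hz) (h₂.mapsTo hw) e)

theorem VComp.of_map {v v₁ v₂ : ℂ → ℂ} {u u₁ u₂ : ℝ} (h : InV u v) (h₁ : InV u₁ v₁)
    (h₂ : InV u₂ v₂) (hu : u = u₁ + u₂)
    (he : ∀ z ∈ ball (0:ℂ) 1, vMap v z = vMap v₁ (vMap v₂ z)) : VComp v v₁ v₂ := by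
  have hd : DifferentiableOn ℂ (fun z => v₁ (vMap v₂ z) + v₂ z - v z) (ball 0 1) :=
    ((h₁.diff.comp h₂.vMap_diff h₂.mapsTo).add h₂.diff).sub h.diff
  have h00 : v₁ (vMap v₂ 0) + v₂ 0 - v 0 = 0 := by
    rw [vMap_zero, h₁.zero, h₂.zero, h.zero, hu]; push_cast; ring
  have key := exp_eq_one_unique hd (fun z hz => by
    rcases eq_or_ne z 0 with rfl | hz0
    · rw [h00, Complex.exp_zero]
    · have e := he z hz
      have e2 : vMap v₁ (vMap v₂ z) = z * (Complex.exp (-v₁ (vMap v₂ z)) * Complex.exp (-v₂ z)) := by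
        conv_lhs => rw [vMap]
        conv_lhs => enter [1]; rw [vMap]
        ring
      rw [e2, vMap] at e
      have e3 := mul_left_cancel₀ hz0 e
      rw [Complex.exp_sub, Complex.exp_add]
      rw [Complex.exp_neg, Complex.exp_neg, Complex.exp_neg] at e3
      have a1 := Complex.exp_ne_zero (v z)
      have a2 := Complex.exp_ne_zero (v₁ (vMap v₂ z))
      have a3 := Complex.exp_ne_zero (v₂ z)
      field_simp at e3 ⊢
      exact e3) h00
  intro z hz
  exact (sub_eq_zero.1 (key z hz)).symm

/-! ### Factorization of bounded univalent functions -/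

theorem annulus_preconnected {r : ℝ} (h1 : 0 < r) :
    IsPreconnected {z : ℂ | z ∈ ball (0:ℂ) 1 ∧ z ∉ closedBall (0:ℂ) r} := by
  have h : {z : ℂ | z ∈ ball (0:ℂ) 1 ∧ z ∉ closedBall (0:ℂ) r} =
      (fun p : ℝ × ℝ => (p.1 : ℂ) * Complex.exp (p.2 * I)) '' (Set.Ioo r 1 ×ˢ Set.univ) := by
    ext z
    simp only [Set.mem_ofPred_eq, mem_ball_zero_iff, mem_closedBall_zero_iff, not_le, Set.mem_image,
      Set.mem_prod, Set.mem_Ioo, Set.mem_univ, and_true, Prod.exists]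
    constructor
    · rintro ⟨hz1, hz2⟩
      exact ⟨‖z‖, arg z, ⟨hz2, hz1⟩, Complex.norm_mul_exp_arg_mul_I z⟩
    · rintro ⟨a, b, ⟨ha, hb⟩, rfl⟩
      rw [norm_mul, Complex.norm_exp_ofReal_mul_I, mul_one, Complex.norm_real, Real.norm_eq_abs,
        abs_of_pos (h1.trans ha)]
      exact ⟨hb, ha⟩
  rw [h]
  refine (isPreconnected_Ioo.prod isPreconnected_univ).image _ ?_
  fun_prop

/-- Strictly between the image of a univalent self-map of the disc omitting `a` and the disc itself
there is a Runge domain. It is a component of the union of the polynomial hulls of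
`χ (closedBall 0 r) ∪ closedBall 0 (r ρ)` for `r < 1`, with `|a| < ρ < 1`. -/
theorem exists_intermediate {χ : ℂ → ℂ} (hd : DifferentiableOn ℂ χ (ball 0 1))
    (hi : Set.InjOn χ (ball 0 1)) (hle : ∀ z ∈ ball (0:ℂ) 1, ‖χ z‖ ≤ ‖z‖)
    {a : ℂ} (ha : ‖a‖ < 1) (haχ : a ∉ χ '' ball 0 1) :
    ∃ Ω, RungeOpen Ω ∧ IsPreconnected Ω ∧ Ω ⊆ ball 0 1 ∧ Ω ≠ ball 0 1 ∧ χ '' ball 0 1 ⊆ Ω ∧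
      (0:ℂ) ∈ Ω ∧ a ∈ Ω := by
  have hχ0 : χ 0 = 0 := norm_le_zero_iff.1 (by simpa using hle 0 zero_mem_disc)
  obtain ⟨ρ, hρa, hρ1⟩ := exists_between ha
  have hρ0 : 0 < ρ := (norm_nonneg a).trans_lt hρa
  have hcb : ∀ {r : ℝ}, r < 1 → closedBall (0:ℂ) r ⊆ ball 0 1 := fun hr =>
    closedBall_subset_ball hr
  let L : ℝ → Set ℂ := fun r => χ '' closedBall 0 r ∪ closedBall 0 (r * ρ)
  have hLc : ∀ r < 1, IsCompact (L r) := fun r hr =>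
    ((isCompact_closedBall _ _).image_of_continuousOn (hd.continuousOn.mono (hcb hr))).union
      (isCompact_closedBall _ _)
  have hLne : ∀ r, 0 < r → (L r).Nonempty := fun r hr =>
    ⟨0, Or.inr (mem_closedBall_self (by positivity))⟩
  have hLint : ∀ r r', 0 < r → r < r' → r' < 1 → L r ⊆ interior (L r') := by
    intro r r' hr hrr hr'
    have ho : IsOpen (χ '' ball 0 r') :=
      inj_isOpen_image isOpen_ball hd hi (ball_subset_ball hr'.le) isOpen_ball
    rintro z (hz | hz)
    · refine interior_maximal (Set.subset_union_of_subset_left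
        (Set.image_mono ball_subset_closedBall) _) ho ?_
      exact Set.image_mono (closedBall_subset_ball hrr) hz
    · refine interior_maximal (Set.subset_union_of_subset_right
        ball_subset_closedBall _) isOpen_ball ?_
      exact closedBall_subset_ball (by nlinarith) hz
  have hLsub : ∀ r, 0 < r → r < 1 → L r ⊆ closedBall 0 r := by
    rintro r hr hr1 z (⟨w, hw, rfl⟩ | hz)
    · rw [mem_closedBall_zero_iff]
      exact (hle w (hcb hr1 hw)).trans (mem_closedBall_zero_iff.1 hw)
    · exact closedBall_subset_closedBall (by nlinarith) hz
  have hKint : ∀ r r', 0 < r → r < r' → r' < 1 →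
      polyHull (L r) ⊆ interior (polyHull (L r')) := fun r r' h1 h2 h3 =>
    polyHull_subset_interior (hLc r (h2.trans h3)) (hLint r r' h1 h2 h3)
  have hKmono : ∀ r r', 0 < r → r ≤ r' → r' < 1 → polyHull (L r) ⊆ polyHull (L r') := by
    intro r r' h1 h2 h3
    rcases h2.eq_or_lt with rfl | h
    · exact subset_rfl
    · exact (hKint r r' h1 h h3).trans interior_subset
  let Ω₀ : Set ℂ := ⋃ r : Set.Ioo (0:ℝ) 1, interior (polyHull (L r))
  have hΩ₀ : ∀ r, 0 < r → r < 1 → polyHull (L r) ⊆ Ω₀ := by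
    intro r h1 h2 z hz
    obtain ⟨r', h3, h4⟩ := exists_between h2
    exact Set.mem_iUnion.2 ⟨⟨r', h1.trans h3, h4⟩, hKint r r' h1 h3 h4 hz⟩
  have hcomp : ∀ K ⊆ Ω₀, IsCompact K → ∃ r, 0 < r ∧ r < 1 ∧ K ⊆ polyHull (L r) := by
    intro K hK hKc
    have : Nonempty (Set.Ioo (0:ℝ) 1) := ⟨⟨1/2, by norm_num, by norm_num⟩⟩
    obtain ⟨r, hr⟩ := hKc.elim_directed_cover (fun r : Set.Ioo (0:ℝ) 1 => interior (polyHull (L r)))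
      (fun _ => isOpen_interior) hK (fun r s => by
        refine ⟨max r s, ?_, ?_⟩
        · exact interior_mono (hKmono _ _ r.2.1 (le_max_left _ _) (max r s).2.2)
        · exact interior_mono (hKmono _ _ s.2.1 (le_max_right _ _) (max r s).2.2))
    exact ⟨r, r.2.1, r.2.2, hr.trans interior_subset⟩
  have hR : RungeOpen Ω₀ := by
    refine ⟨isOpen_iUnion fun _ => isOpen_interior, fun K hK hKc => ?_⟩
    obtain ⟨r, h1, h2, h3⟩ := hcomp K hK hKc
    exact ((polyHull_mono h3).trans (polyHull_idem _)).trans (hΩ₀ r h1 h2)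
  have hsub1 : Ω₀ ⊆ ball 0 1 := by
    intro z hz
    obtain ⟨r, hr⟩ := Set.mem_iUnion.1 hz
    exact closedBall_subset_ball r.2.2
      (polyHull_subset_closedBall (hLsub r r.2.1 r.2.2) (interior_subset hr))
  have hχΩ : χ '' ball 0 1 ⊆ Ω₀ := by
    rintro _ ⟨z, hz, rfl⟩
    obtain ⟨r, h1, h2⟩ := exists_between (mem_ball_zero_iff.1 hz)
    exact hΩ₀ r ((norm_nonneg z).trans_lt h1) h2
      (subset_polyHull _ (Or.inl ⟨z, mem_closedBall_zero_iff.2 h1.le, rfl⟩))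
  have hρΩ : ball 0 ρ ⊆ Ω₀ := by
    intro z hz
    have hz' : ‖z‖ / ρ < 1 := (div_lt_one hρ0).2 (mem_ball_zero_iff.1 hz)
    obtain ⟨r, h1, h2⟩ := exists_between hz'
    refine hΩ₀ r ((by positivity : 0 ≤ ‖z‖ / ρ).trans_lt h1) h2 (subset_polyHull _ (Or.inr ?_))
    rw [mem_closedBall_zero_iff]
    exact ((div_lt_iff₀ hρ0).1 h1).le
  have hne : Ω₀ ≠ ball 0 1 := by
    -- If the hulls exhausted the disc, one of them would contain `closedBall 0 ρ`. The connected
    -- set `χ '' A` is then inside or outside the hull of `L r`; accordingly, the hull or the part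
    -- `Y` of it off the image of `closedBall 0 r` is compact and open, hence empty.
    intro heq
    obtain ⟨r, h1, h2, h3⟩ := hcomp (closedBall 0 ρ)
      (heq ▸ closedBall_subset_ball hρ1) (isCompact_closedBall _ _)
    have hKc := isCompact_polyHull (hLc r h2)
    have hχc : IsCompact (χ '' closedBall 0 r) :=
      (isCompact_closedBall _ _).image_of_continuousOn (hd.continuousOn.mono (hcb h2))
    have hχK : χ '' closedBall 0 r ⊆ polyHull (L r) :=
      Set.subset_union_left.trans (subset_polyHull _)
    have hχo : IsOpen (χ '' ball 0 1) := inj_isOpen_image isOpen_ball hd hi subset_rfl isOpen_ball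
    set Y := polyHull (L r) \ χ '' closedBall 0 r with hY
    have hYo : IsOpen Y := by
      have : Y = (polyHull (L r) \ L r) ∪ (ball 0 ρ \ χ '' closedBall 0 r) := by
        ext z
        constructor
        · rintro ⟨hz1, hz2⟩
          by_cases hzL : z ∈ L r
          · refine Or.inr ⟨?_, hz2⟩
            rcases hzL with h | h
            · exact absurd h hz2
            · exact closedBall_subset_ball (by nlinarith) h
          · exact Or.inl ⟨hz1, hzL⟩
        · rintro (⟨hz1, hz2⟩ | ⟨hz1, hz2⟩)
          · exact ⟨hz1, fun h => hz2 (Or.inl h)⟩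
          · exact ⟨h3 (ball_subset_closedBall hz1), hz2⟩
      rw [this]
      exact (isOpen_polyHull_diff (hLc r h2) (hLne r h1)).union
        (isOpen_ball.sdiff hχc.isClosed)
    let A : Set ℂ := {z | z ∈ ball (0:ℂ) 1 ∧ z ∉ closedBall (0:ℂ) r}
    have hA : IsPreconnected A := annulus_preconnected h1
    have hN : IsPreconnected (χ '' A) := hA.image _ (hd.continuousOn.mono fun z hz => hz.1)
    have hNd : ∀ z ∈ A, χ z ∉ χ '' closedBall 0 r := by
      rintro z hz ⟨w, hw, hwz⟩
      have := hi (hcb h2 hw) hz.1 hwz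
      exact hz.2 (this ▸ hw)
    have hsplit : χ '' ball 0 1 ⊆ χ '' closedBall 0 r ∪ χ '' A := by
      rintro _ ⟨z, hz, rfl⟩
      by_cases h : z ∈ closedBall (0:ℂ) r
      · exact Or.inl ⟨z, h, rfl⟩
      · exact Or.inr ⟨z, ⟨hz, h⟩, rfl⟩
    by_cases hmeet : (χ '' A ∩ Y).Nonempty
    · have hNY : χ '' A ⊆ Y := hN.subset_left_of_subset_union hYo hKc.isClosed.isOpen_compl
        (Set.disjoint_left.2 fun x h1 h2 => h2 h1.1) (by
          rintro _ ⟨z, hz, rfl⟩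
          by_cases h : χ z ∈ polyHull (L r)
          · exact Or.inl ⟨h, hNd z hz⟩
          · exact Or.inr h) hmeet
      have hKo : IsOpen (polyHull (L r)) := by
        have : polyHull (L r) = Y ∪ χ '' ball 0 1 := by
          apply Set.Subset.antisymm
          · intro z hz
            by_cases h : z ∈ χ '' closedBall 0 r
            · exact Or.inr (Set.image_mono (hcb h2) h)
            · exact Or.inl ⟨hz, h⟩
          · rintro z (h | h)
            · exact h.1
            · rcases hsplit h with h | h
              · exact hχK h
              · exact (hNY h).1
        rw [this]; exact hYo.union hχo
      have := clopen_compact_empty hKo hKc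
      exact ((hLne r h1).mono (subset_polyHull _)).ne_empty this
    · have hYc : IsCompact Y := by
        refine hKc.of_isClosed_subset ?_ Set.sdiff_subset
        have : Yᶜ = (polyHull (L r))ᶜ ∪ χ '' ball 0 1 := by
          ext z
          constructor
          · intro hz
            by_cases h : z ∈ polyHull (L r)
            · right
              by_contra h'
              exact hz ⟨h, fun h'' => h' (Set.image_mono (hcb h2) h'')⟩
            · exact Or.inl h
          · rintro (h | h) hz
            · exact h hz.1
            · rcases hsplit h with h | h
              · exact hz.2 h
              · exact hmeet ⟨z, h, hz⟩
        rw [← isOpen_compl_iff, this]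
        exact hKc.isClosed.isOpen_compl.union hχo
      have := clopen_compact_empty hYo hYc
      have haY : a ∈ Y := ⟨h3 (mem_closedBall_zero_iff.2 hρa.le),
        fun h => haχ (Set.image_mono (hcb h2) h)⟩
      rw [this] at haY
      exact haY
  refine ⟨connectedComponentIn Ω₀ 0, hR.component 0, isPreconnected_connectedComponentIn,
    (connectedComponentIn_subset _ _).trans hsub1, fun h => hne ?_, ?_, ?_, ?_⟩
  · exact Set.Subset.antisymm hsub1 (h ▸ connectedComponentIn_subset _ _)
  · exact ((convex_ball (0:ℂ) 1).isPreconnected.image _ hd.continuousOn).subset_connectedComponentIn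
      ⟨0, zero_mem_disc, hχ0⟩ hχΩ
  · exact mem_connectedComponentIn (hρΩ (mem_ball_self hρ0))
  · exact (convex_ball (0:ℂ) ρ).isPreconnected.subset_connectedComponentIn
      (mem_ball_self hρ0) hρΩ (mem_ball_zero_iff.2 hρa)

theorem InV.nonneg {u : ℝ} {v : ℂ → ℂ} (h : InV u v) : 0 ≤ u := by
  simpa [h.zero] using h.re_nonneg 0 zero_mem_disc

/-- By the Schwarz lemma for the inverse map, only the identity is onto. -/
theorem InV.not_surj {u : ℝ} {v : ℂ → ℂ} (h : InV u v) (hu : 0 < u) :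
    ∃ a : ℂ, ‖a‖ < 1 ∧ a ∉ vMap v '' ball 0 1 := by
  by_contra! hc
  have hsub : vMap v '' ball 0 1 = ball 0 1 := by
    apply Set.Subset.antisymm
    · rintro _ ⟨z, hz, rfl⟩; exact h.mapsTo hz
    · exact fun a ha => hc a (mem_ball_zero_iff.1 ha)
  have hinj : Set.InjOn (vMap v) (ball 0 1) := h.inj
  have hψ : ∀ z ∈ ball (0:ℂ) 1, Function.invFunOn (vMap v) (ball 0 1) (vMap v z) = z :=
    fun z hz => hinj.leftInvOn_invFunOn hz
  set ψ := Function.invFunOn (vMap v) (ball 0 1) with hψd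
  have hd := inj_inverse isOpen_ball h.vMap_diff hinj hψ
  rw [hsub] at hd
  have hm : Set.MapsTo ψ (ball 0 1) (ball 0 1) := by
    intro w hw
    obtain ⟨z, hz, rfl⟩ := hc w (mem_ball_zero_iff.1 hw)
    rw [hψ z hz]; exact hz
  have hψ0 : ψ 0 = 0 := by
    have := hψ 0 zero_mem_disc
    rwa [vMap_zero] at this
  have h1 := (hd.differentiableAt (isOpen_ball.mem_nhds zero_mem_disc)).hasDerivAt
  have h2 : HasDerivAt (fun z => ψ (vMap v z)) (deriv ψ 0 * (Real.exp (-u) : ℝ)) 0 := by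
    refine HasDerivAt.comp (h₂ := ψ) (h := vMap v) 0 ?_ h.hasDerivAt
    rw [vMap_zero]; exact h1
  have h3 : HasDerivAt (fun z => ψ (vMap v z)) 1 0 := by
    refine (hasDerivAt_id (0:ℂ)).congr_of_eventuallyEq ?_
    filter_upwards [isOpen_ball.mem_nhds zero_mem_disc] with z hz using hψ z hz
  have h4 := h2.unique h3
  have h5 : ‖deriv ψ 0‖ ≤ 1 :=
    Complex.norm_deriv_le_one_of_mapsTo_ball hd
      (by rw [hψ0]; exact fun w hw => ball_subset_closedBall (hm hw)) one_pos
  have h6 : ‖deriv ψ 0‖ * Real.exp (-u) = 1 := by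
    have := congrArg norm h4
    rwa [norm_mul, Complex.norm_real, Real.norm_eq_abs, abs_of_pos (Real.exp_pos _), norm_one] at this
  have h7 : Real.exp (-u) < 1 := by rw [Real.exp_lt_one_iff]; linarith
  nlinarith [Real.exp_pos (-u), norm_nonneg (deriv ψ 0)]

/-- Every non-trivial bounded univalent function is a non-trivial composition. -/
theorem InV.factor {u : ℝ} {v : ℂ → ℂ} (h : InV u v) (hu : 0 < u) :
    ∃ u₁ u₂ v₁ v₂, 0 < u₁ ∧ 0 < u₂ ∧ u = u₁ + u₂ ∧ InV u₁ v₁ ∧ InV u₂ v₂ ∧ VComp v v₁ v₂ := by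
  obtain ⟨a, ha, haχ⟩ := h.not_surj hu
  have hinj : Set.InjOn (vMap v) (ball 0 1) := h.inj
  obtain ⟨Ω, hR, hc, hb, hne, hχΩ, h0, haΩ⟩ := exists_intermediate h.vMap_diff hinj
    (fun z hz => h.norm_le hz) ha haχ
  obtain ⟨G₀, hG₀d, hG₀i, hG₀s, hG₀0⟩ := riemann_map hR hc h0 hb
  have hder := inj_deriv_ne_zero hR.isOpen hG₀d hG₀i h0
  set d := deriv G₀ 0 with hdd
  have hdpos : 0 < ‖d‖ := norm_pos_iff.2 hder
  let κ : ℂ := ‖d‖ / d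
  have hκ : ‖κ‖ = 1 := by simp [κ, hdpos.ne']
  have hκ0 : κ ≠ 0 := by intro h; rw [h] at hκ; simp at hκ
  let G : ℂ → ℂ := fun z => κ * G₀ z
  have hGd : DifferentiableOn ℂ G Ω := hG₀d.const_mul κ
  have hGi : Set.InjOn G Ω := fun x hx y hy hxy => hG₀i hx hy (mul_left_cancel₀ hκ0 hxy)
  have hGm : ∀ z ∈ Ω, G z ∈ ball (0:ℂ) 1 := by
    intro z hz
    have : G₀ z ∈ ball (0:ℂ) 1 := hG₀s ▸ ⟨z, hz, rfl⟩
    rw [mem_ball_zero_iff] at this ⊢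
    simpa [G, hκ] using this
  have hGs : G '' Ω = ball 0 1 := by
    apply Set.Subset.antisymm
    · rintro _ ⟨z, hz, rfl⟩; exact hGm z hz
    · intro w hw
      have : κ⁻¹ * w ∈ ball (0:ℂ) 1 := by
        rw [mem_ball_zero_iff] at hw ⊢
        simpa [hκ] using hw
      rw [← hG₀s] at this
      obtain ⟨z, hz, hzw⟩ := this
      refine ⟨z, hz, ?_⟩
      change κ * G₀ z = w
      rw [hzw, mul_inv_cancel_left₀ hκ0]
  have hG0 : G 0 = 0 := by simp [G, hG₀0]
  have hGder : HasDerivAt G (‖d‖ : ℂ) 0 := by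
    refine ((hG₀d.differentiableAt (hR.isOpen.mem_nhds h0)).hasDerivAt.const_mul κ).congr_deriv ?_
    change ‖d‖ / d * d = _
    exact div_mul_cancel₀ _ hder
  have hψ : ∀ z ∈ Ω, Function.invFunOn G Ω (G z) = z := fun z hz => hGi.leftInvOn_invFunOn hz
  set ψ := Function.invFunOn G Ω with hψd
  have hψdiff := inj_inverse hR.isOpen hGd hGi hψ
  rw [hGs] at hψdiff
  have hψm : ∀ w ∈ ball (0:ℂ) 1, ψ w ∈ Ω := by
    intro w hw
    rw [← hGs] at hw
    obtain ⟨z, hz, rfl⟩ := hw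
    rw [hψ z hz]; exact hz
  have hGψ : ∀ w ∈ ball (0:ℂ) 1, G (ψ w) = w := by
    intro w hw
    rw [← hGs] at hw
    obtain ⟨z, hz, rfl⟩ := hw
    rw [hψ z hz]
  have hψ0 : ψ 0 = 0 := by
    have := hψ 0 h0
    rwa [hG0] at this
  have hψder : deriv ψ 0 = (Real.exp (-(Real.log ‖d‖)) : ℝ) := by
    have h1 := (hψdiff.differentiableAt (isOpen_ball.mem_nhds zero_mem_disc)).hasDerivAt
    have h2 : HasDerivAt (fun z => ψ (G z)) (deriv ψ 0 * ‖d‖) 0 := by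
      refine HasDerivAt.comp (h₂ := ψ) (h := G) 0 ?_ hGder
      rw [hG0]; exact h1
    have h3 : HasDerivAt (fun z => ψ (G z)) 1 0 := by
      refine (hasDerivAt_id (0:ℂ)).congr_of_eventuallyEq ?_
      filter_upwards [hR.isOpen.mem_nhds h0] with z hz using hψ z hz
    have h4 := h2.unique h3
    rw [Real.exp_neg, Real.exp_log hdpos]
    push_cast
    exact eq_inv_of_mul_eq_one_left h4
  have hψi : Set.InjOn ψ (ball 0 1) := by
    intro x hx y hy hxy
    rw [← hGψ x hx, ← hGψ y hy, hxy]
  obtain ⟨v₁, hv₁, hψv⟩ := toInV hψdiff hψi (fun w hw => hb (hψm w hw)) hψ0 hψder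
  have hχm : Set.MapsTo (vMap v) (ball 0 1) Ω := fun z hz => hχΩ ⟨z, hz, rfl⟩
  have hωd : DifferentiableOn ℂ (fun z => G (vMap v z)) (ball 0 1) := hGd.comp h.vMap_diff hχm
  have hωi : Set.InjOn (fun z => G (vMap v z)) (ball 0 1) := fun x hx y hy hxy =>
    hinj hx hy (hGi (hχm hx) (hχm hy) hxy)
  have hωder : deriv (fun z => G (vMap v z)) 0 =
      (Real.exp (-(u - Real.log ‖d‖)) : ℝ) := by
    have h2 : HasDerivAt (fun z => G (vMap v z)) (‖d‖ * (Real.exp (-u) : ℝ)) 0 := by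
      refine HasDerivAt.comp (h₂ := G) (h := vMap v) 0 ?_ h.hasDerivAt
      rw [vMap_zero]; exact hGder
    rw [h2.deriv, neg_sub, sub_eq_add_neg, Real.exp_add, Real.exp_log hdpos]
    push_cast; ring
  obtain ⟨v₂, hv₂, hωv⟩ := toInV hωd hωi (fun z hz => hGm _ (hχm hz))
    (by simp [vMap_zero, hG0]) hωder
  refine ⟨Real.log ‖d‖, u - Real.log ‖d‖, v₁, v₂, ?_, ?_, by ring, hv₁, hv₂, ?_⟩
  · refine lt_of_le_of_ne hv₁.nonneg fun he => hne ?_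
    rw [← he] at hv₁
    apply Set.Subset.antisymm hb
    intro z hz
    have := hψm z hz
    rwa [hψv z hz, vMap, hv₁.eq_zero z hz, neg_zero, Complex.exp_zero, mul_one] at this
  · refine lt_of_le_of_ne hv₂.nonneg fun he => haχ ?_
    rw [← he] at hv₂
    have hGa := hGm a haΩ
    refine ⟨G a, hGa, hGi (hχm hGa) haΩ ?_⟩
    have := hωv (G a) hGa
    rw [this, vMap, hv₂.eq_zero _ hGa, neg_zero, Complex.exp_zero, mul_one]
  · refine VComp.of_map h hv₁ hv₂ (by ring) fun z hz => ?_
    rw [← hωv z hz, ← hψv _ (hGm _ (hχm hz)), hψ _ (hχm hz)]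

/-! ### Compactness and short inner factors -/

/-- Borel–Carathéodory bound, giving the local boundedness needed for compactness. -/
theorem norm_sub_le_of_re_nonneg {v : ℂ → ℂ} {u T : ℝ} (hd : DifferentiableOn ℂ v (ball 0 1))
    (hre : ∀ z ∈ ball (0:ℂ) 1, 0 ≤ (v z).re) (h0 : v 0 = u) (hT : 0 < T) (huT : u ≤ T)
    {z : ℂ} (hz : z ∈ ball (0:ℂ) 1) : ‖v z - u‖ ≤ 2 * T * ‖z‖ / (1 - ‖z‖) := by
  have := Complex.borelCaratheodory_zero (f := fun z => -(v z - u)) hT (hd.sub_const _).neg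
      (fun w hw => by
        change (-(v w - u)).re ≤ T
        rw [Complex.neg_re, Complex.sub_re, Complex.ofReal_re]
        linarith [hre w hw]) one_pos hz (by simp [h0])
  rwa [norm_neg] at this

/-- Compactness of the union of the classes `InV u` with bounded `u`. -/
theorem InV.compact {T : ℝ} {us : ℕ → ℝ} {vs : ℕ → ℂ → ℂ} (h : ∀ n, InV (us n) (vs n))
    (hT : ∀ n, us n ≤ T) :
    ∃ φ : ℕ → ℕ, StrictMono φ ∧ ∃ u v, Filter.Tendsto (fun n => us (φ n)) Filter.atTop (nhds u) ∧
      InV u v ∧ TendstoLocallyUniformlyOn (fun n => vs (φ n)) v Filter.atTop (ball 0 1) := by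
  have hT0 : 0 ≤ T := (h 0).nonneg.trans (hT 0)
  obtain ⟨φ₁, hφ₁, v, hv⟩ := montel isOpen_ball vs (fun n => (h n).diff) (by
    intro K hK hKc
    obtain ⟨M, hM⟩ := hKc.exists_bound_of_continuousOn
      (f := fun z : ℂ => 2 * (T + 1) * ‖z‖ / (1 - ‖z‖) + T) (by
        refine ContinuousOn.add (ContinuousOn.div (by fun_prop) (by fun_prop) ?_) (by fun_prop)
        intro z hz
        have := mem_ball_zero_iff.1 (hK hz)
        linarith)
    refine ⟨M, fun n z hz => ?_⟩
    have h1 := norm_sub_le_of_re_nonneg (h n).diff (h n).re_nonneg (h n).zero (T := T + 1)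
      (by linarith) (by linarith [hT n]) (hK hz)
    have h2 : ‖vs n z‖ ≤ ‖vs n z - us n‖ + ‖((us n : ℝ) : ℂ)‖ := by
      simpa using norm_add_le (vs n z - us n) (us n : ℂ)
    rw [Complex.norm_real, Real.norm_eq_abs, abs_of_nonneg (h n).nonneg] at h2
    have h3 := (le_abs_self _).trans (hM z hz)
    linarith [hT n])
  obtain ⟨φ₂, hφ₂, f, hf⟩ := montel isOpen_ball (fun n => vMap (vs (φ₁ n)))
    (fun n => (h _).vMap_diff) (fun K hK _ => ⟨1, fun n z hz =>
      (((h _).norm_le (hK hz)).trans (mem_ball_zero_iff.1 (hK hz)).le)⟩)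
  have hv2 : TendstoLocallyUniformlyOn (fun n => vs (φ₁ (φ₂ n))) v Filter.atTop (ball 0 1) := by
    intro s hs x hx
    obtain ⟨t, ht, hh⟩ := hv s hs x hx
    exact ⟨t, ht, hφ₂.tendsto_atTop.eventually hh⟩
  have hpt : ∀ z ∈ ball (0:ℂ) 1, Filter.Tendsto (fun n => vs (φ₁ (φ₂ n)) z) Filter.atTop
      (nhds (v z)) := fun z hz => hv2.tendsto_at hz
  have hre : ∀ z ∈ ball (0:ℂ) 1, 0 ≤ (v z).re := fun z hz =>
    ge_of_tendsto' ((Complex.continuous_re.tendsto _).comp (hpt z hz))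
      fun n => (h _).re_nonneg z hz
  have hu : Filter.Tendsto (fun n => us (φ₁ (φ₂ n))) Filter.atTop (nhds (v 0).re) := by
    refine ((Complex.continuous_re.tendsto _).comp (hpt 0 zero_mem_disc)).congr fun n => ?_
    simp [(h _).zero]
  have hv0 : v 0 = ((v 0).re : ℝ) := by
    refine tendsto_nhds_unique (hpt 0 zero_mem_disc) ?_
    refine ((Complex.continuous_ofReal.tendsto _).comp hu).congr fun n => ?_
    simp [(h _).zero]
  have hvd : DifferentiableOn ℂ v (ball 0 1) :=
    hv2.differentiableOn (Filter.Eventually.of_forall fun n => (h _).diff) isOpen_ball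
  have hfv : Set.EqOn f (vMap v) (ball 0 1) := by
    intro z hz
    refine tendsto_nhds_unique (hf.tendsto_at hz) ?_
    have hc : Continuous fun w : ℂ => z * Complex.exp (-w) := by fun_prop
    exact (hc.tendsto _).comp (hpt z hz)
  have hder : HasDerivAt (vMap v) (Complex.exp (-v 0)) 0 := by
    have h1 := (hvd.differentiableAt (isOpen_ball.mem_nhds zero_mem_disc)).hasDerivAt
    refine ((hasDerivAt_id (0:ℂ)).fun_mul h1.fun_neg.cexp).congr_deriv ?_
    simp
  refine ⟨φ₁ ∘ φ₂, hφ₁.comp hφ₂, (v 0).re, v, hu, ⟨hvd, hre, hv0, ?_⟩, hv2⟩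
  exact hurwitz isOpen_ball (convex_ball (0:ℂ) 1).isPreconnected _ _ (fun n => (h _).vMap_diff)
    (fun n => (h _).inj) (hf.congr_right hfv) zero_mem_disc
    (by
      change deriv (vMap v) 0 ≠ 0
      rw [hder.deriv]; exact Complex.exp_ne_zero _)

theorem InV.zero_class : InV 0 (fun _ => 0) :=
  ⟨differentiableOn_const _, fun _ _ => by simp, by simp, fun x _ y _ h => by simpa using h⟩

/-- Arbitrarily short inner factors can be split off. -/
theorem InV.peel {u h : ℝ} {v : ℂ → ℂ} (hv : InV u v) (hu : 0 < u) (hh : 0 < h) :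
    ∃ s v₁ v₂, 0 < s ∧ s ≤ h ∧ InV (u - s) v₁ ∧ InV s v₂ ∧ VComp v v₁ v₂ := by
  by_contra! hcon
  -- a smallest inner factor exists by compactness, but it could be factored further
  let S : Set ℝ := {s | 0 < s ∧ ∃ v₁ v₂, InV (u - s) v₁ ∧ InV s v₂ ∧ VComp v v₁ v₂}
  have hSh : ∀ s ∈ S, h ≤ s := by
    rintro s ⟨hs, v₁, v₂, h1, h2, h3⟩
    by_contra! hlt
    exact hcon s v₁ v₂ hs hlt.le h1 h2 h3
  have huS : u ∈ S := ⟨hu, fun _ => 0, v, by rw [sub_self]; exact InV.zero_class, hv,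
    fun z _ => by simp⟩
  have hbdd : BddBelow S := ⟨h, hSh⟩
  obtain ⟨ss, -, hss, hsS⟩ := exists_seq_tendsto_sInf ⟨u, huS⟩ hbdd
  have hm : h ≤ sInf S := le_csInf ⟨u, huS⟩ hSh
  set m := sInf S with hmdef
  choose hs0 w₁ w₂ hw₁ hw₂ hw using hsS
  obtain ⟨φ, hφ, a₁, v₁, ha₁, hv₁, hl₁⟩ := InV.compact hw₁ (T := u)
    (fun n => by linarith [hs0 n])
  obtain ⟨φ', hφ', a₂, v₂, ha₂, hv₂, hl₂⟩ := InV.compact (fun n => hw₂ (φ n)) (T := u)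
    (fun n => by linarith [(hw₁ (φ n)).nonneg])
  have e2 : a₂ = m := tendsto_nhds_unique ha₂ ((hss.comp hφ.tendsto_atTop).comp hφ'.tendsto_atTop)
  have e1 : a₁ = u - m := tendsto_nhds_unique ha₁ (tendsto_const_nhds.sub (hss.comp hφ.tendsto_atTop))
  subst e2; subst e1
  have hcomp : VComp v v₁ v₂ := by
    intro z hz
    have t2 := hl₂.tendsto_at hz
    have hc : Continuous fun w : ℂ => z * Complex.exp (-w) := by fun_prop
    have t3 : Filter.Tendsto (fun n => vMap (w₂ (φ (φ' n))) z) Filter.atTop (nhds (vMap v₂ z)) :=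
      (hc.tendsto _).comp t2
    have hmem := hv₂.mapsTo hz
    have t4 : Filter.Tendsto (fun n => w₁ (φ (φ' n)) (vMap (w₂ (φ (φ' n))) z)) Filter.atTop
        (nhds (v₁ (vMap v₂ z))) := by
      refine tendsto_comp_of_locally_uniform_limit_within (s := ball 0 1)
        ((hv₁.diff.continuousOn _ hmem)) ?_ ?_
      · exact tendsto_nhdsWithin_of_tendsto_nhds_of_eventually_within _ t3
          (Filter.Eventually.of_forall fun n => (hw₂ _).mapsTo hz)
      · intro s hs
        obtain ⟨t, ht, hh⟩ := hl₁ s hs _ hmem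
        exact ⟨t, ht, hφ'.tendsto_atTop.eventually hh⟩
    refine tendsto_nhds_unique ?_ (t4.add t2)
    refine tendsto_const_nhds.congr fun n => ?_
    exact hw _ z hz
  obtain ⟨u₁, u₂, x₁, x₂, hu₁, hu₂, hu12, hx₁, hx₂, hx⟩ := hv₂.factor (hh.trans_le hm)
  have hc1 : VComp (fun z => v₁ (vMap x₁ z) + x₁ z) v₁ x₁ := fun z _ => rfl
  have hlast : u₂ ∈ S := by
    refine ⟨hu₂, fun z => v₁ (vMap x₁ z) + x₁ z, x₂, ?_, hx₂, ?_⟩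
    · have := hc1.inV hv₁ hx₁
      rwa [show u - m + u₁ = u - u₂ by linarith] at this
    · intro z hz
      simp only
      rw [hcomp z hz, hx z hz, hx.map hz]; ring
  have := csInf_le hbdd hlast
  linarith

/-! ### Taylor coefficients and averages over circles -/

/-- The `k`-th Taylor coefficient at the origin. -/
noncomputable def cf (v : ℂ → ℂ) (k : ℕ) : ℂ := iteratedDeriv k v 0 / k.factorial

theorem cf_zero (v : ℂ → ℂ) : cf v 0 = v 0 := by simp [cf]

theorem cf_congr {v w : ℂ → ℂ} (h : ∀ z ∈ ball (0:ℂ) 1, v z = w z) (k : ℕ) : cf v k = cf w k := by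
  rw [cf, cf, Filter.EventuallyEq.iteratedDeriv_eq]
  filter_upwards [isOpen_ball.mem_nhds zero_mem_disc] with z hz using h z hz

theorem contDiffAt_of_disc {v : ℂ → ℂ} (h : DifferentiableOn ℂ v (ball 0 1)) (k : ℕ) :
    ContDiffAt ℂ k v 0 :=
  (h.analyticAt (isOpen_ball.mem_nhds zero_mem_disc)).contDiffAt

theorem cf_add {v w : ℂ → ℂ} (hv : DifferentiableOn ℂ v (ball 0 1))
    (hw : DifferentiableOn ℂ w (ball 0 1)) (k : ℕ) :
    cf (fun z => v z + w z) k = cf v k + cf w k := by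
  rw [cf, iteratedDeriv_fun_add (contDiffAt_of_disc hv k) (contDiffAt_of_disc hw k), add_div]; rfl

theorem cf_sub {v w : ℂ → ℂ} (hv : DifferentiableOn ℂ v (ball 0 1))
    (hw : DifferentiableOn ℂ w (ball 0 1)) (k : ℕ) :
    cf (fun z => v z - w z) k = cf v k - cf w k := by
  rw [cf, iteratedDeriv_fun_sub (contDiffAt_of_disc hv k) (contDiffAt_of_disc hw k), sub_div]; rfl

theorem cf_mul {v w : ℂ → ℂ} (hv : DifferentiableOn ℂ v (ball 0 1))
    (hw : DifferentiableOn ℂ w (ball 0 1)) (k : ℕ) :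
    cf (fun z => v z * w z) k = ∑ i ∈ Finset.range (k + 1), cf v i * cf w (k - i) := by
  rw [cf, iteratedDeriv_fun_mul (contDiffAt_of_disc hv k) (contDiffAt_of_disc hw k), Finset.sum_div]
  refine Finset.sum_congr rfl fun i hi => ?_
  have hik : i ≤ k := Nat.lt_succ_iff.1 (Finset.mem_range.1 hi)
  have h := Nat.choose_mul_factorial_mul_factorial hik
  have h' : ((k.choose i : ℂ)) * i.factorial * (k - i).factorial = k.factorial := by
    exact_mod_cast h
  have a1 : (i.factorial : ℂ) ≠ 0 := by exact_mod_cast i.factorial_ne_zero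
  have a2 : ((k - i).factorial : ℂ) ≠ 0 := by exact_mod_cast (k - i).factorial_ne_zero
  have a3 : (k.factorial : ℂ) ≠ 0 := by exact_mod_cast k.factorial_ne_zero
  rw [cf, cf, ← h'] at *
  have a4 : (k.choose i : ℂ) ≠ 0 := left_ne_zero_of_mul (left_ne_zero_of_mul a3)
  field_simp

theorem cf_id (k : ℕ) : cf (fun z => z) k = if k = 1 then 1 else 0 := by
  match k with
  | 0 => simp [cf]
  | 1 => simp [cf]
  | k + 2 =>
    rw [cf, iteratedDeriv_succ', iteratedDeriv_succ']
    simp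

theorem cf_deriv (v : ℂ → ℂ) (k : ℕ) : cf (deriv v) k = (k + 1) * cf v (k + 1) := by
  rw [cf, cf, iteratedDeriv_succ', Nat.factorial_succ]
  have a3 : (k.factorial : ℂ) ≠ 0 := by exact_mod_cast k.factorial_ne_zero
  have a4 : ((k:ℂ) + 1) ≠ 0 := by exact_mod_cast k.succ_ne_zero
  push_cast
  field_simp

theorem cf_id_mul {v : ℂ → ℂ} (hv : DifferentiableOn ℂ v (ball 0 1)) (k : ℕ) :
    cf (fun z => z * v z) (k + 1) = cf v k := by
  rw [cf_mul (v := fun z => z) differentiableOn_id hv]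
  rw [Finset.sum_eq_single 1]
  · simp [cf_id]
  · intro i _ hi; simp [cf_id, hi]
  · intro h; simp at h

theorem cf_euler {v : ℂ → ℂ} (hv : DifferentiableOn ℂ v (ball 0 1)) (k : ℕ) :
    cf (fun z => z * deriv v z) k = k * cf v k := by
  match k with
  | 0 => simp [cf]
  | k + 1 => rw [cf_id_mul (hv.deriv isOpen_ball), cf_deriv]; push_cast; ring

theorem cf_bound {v : ℂ → ℂ} (hv : DifferentiableOn ℂ v (ball 0 1)) {B : ℝ}
    (hB : ∀ z : ℂ, ‖z‖ = 1 / 2 → ‖v z‖ ≤ B) (k : ℕ) : ‖cf v k‖ ≤ B * 2 ^ k := by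
  have hd : DiffContOnCl ℂ v (ball 0 (1 / 2)) := by
    refine DifferentiableOn.diffContOnCl ?_
    rw [closure_ball (0:ℂ) (by norm_num)]
    exact hv.mono (closedBall_subset_ball (by norm_num))
  have h := Complex.norm_iteratedDeriv_le_of_forall_mem_sphere_norm_le k (by norm_num) hd
    (fun z hz => hB z (mem_sphere_zero_iff_norm.1 hz))
  rw [cf, norm_div, Complex.norm_natCast]
  have a3 : (0:ℝ) < k.factorial := by exact_mod_cast k.factorial_pos
  rw [div_le_iff₀ a3]
  refine h.trans (le_of_eq ?_)
  rw [one_div, inv_pow, div_inv_eq_mul]; ring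

/-- Cauchy's formula for Taylor coefficients, as a circle average. -/
theorem cf_average {v : ℂ → ℂ} (hv : DifferentiableOn ℂ v (ball 0 1)) {r : ℝ} (hr : 0 < r)
    (hr1 : r < 1) (m : ℕ) : circleAverage (fun z => v z / z ^ m) 0 r = cf v m := by
  rw [circleAverage_eq_circleIntegral hr.ne']
  have h := DifferentiableOn.circleIntegral_one_div_sub_center_pow_smul hr m
    (hv.mono (closedBall_subset_ball hr1))
  have h2 : (∮ z in C((0:ℂ), r), (z - 0)⁻¹ • (v z / z ^ m)) =
      ∮ z in C((0:ℂ), r), (1 / (z - 0) ^ (m + 1)) • v z := by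
    refine circleIntegral.integral_congr hr.le fun z hz => ?_
    simp only [sub_zero, smul_eq_mul, pow_succ]
    rw [one_div, mul_inv, div_eq_mul_inv]; ring
  rw [h2, h, smul_eq_mul, smul_eq_mul, cf]
  have : (2 * (π:ℂ) * I) ≠ 0 := Complex.two_pi_I_ne_zero
  field_simp

theorem circleIntegrable_of_punctured {F : ℂ → ℂ} {r : ℝ} (hr : 0 < r)
    (hF : ContinuousOn F (sphere 0 r)) : CircleIntegrable F 0 r :=
  hF.circleIntegrable hr.le

/-- The Taylor coefficients of the kernel `(1 + κ z) / (1 - κ z)`. -/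
noncomputable def ker (κ : ℂ) (m : ℕ) : ℂ := if m = 0 then 1 else 2 * κ ^ m

theorem average_term {v : ℂ → ℂ} {s : ℝ} (hv : DifferentiableOn ℂ v (ball 0 1)) (h0 : v 0 = s)
    {r : ℝ} (hr : 0 < r) (hr1 : r < 1) (d : ℂ) (m : ℕ) :
    circleAverage (fun z => (v z).re * (d * ker (r / z) m).re) 0 r = (d * (r ^ m * cf v m)).re := by
  have hvc : ContinuousOn v (sphere 0 r) := hv.continuousOn.mono fun z hz => by
    rw [mem_sphere_zero_iff_norm] at hz
    rw [mem_ball_zero_iff]; linarith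
  have hne : ∀ z ∈ sphere (0:ℂ) r, z ≠ 0 := by
    rintro z hz rfl
    simp at hz; linarith
  rcases Nat.eq_zero_or_pos m with rfl | hm
  · have h1 : circleAverage (fun z => (v z).re * (d * ker (r / z) 0).re) 0 r =
        circleAverage (reCLM ∘ ((d.re) • fun z => v z / z ^ 0)) 0 r := by
      refine circleAverage_congr_sphere fun z _ => ?_
      simp [ker, mul_comm]
    rw [h1, ContinuousLinearMap.circleAverage_comp_comm, circleAverage_smul,
      cf_average hv hr hr1, cf_zero, h0]
    · simp
    · refine circleIntegrable_of_punctured hr ?_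
      simpa using hvc.const_smul d.re
  · have h1 : circleAverage (fun z => (v z).re * (d * ker (r / z) m).re) 0 r =
        circleAverage (reCLM ∘ fun z => (d * r ^ m) • (v z / z ^ m) +
          ((starRingEnd ℂ) d / r ^ m) • (z ^ m * v z / z ^ 0)) 0 r := by
      refine circleAverage_congr_sphere fun z hz => ?_
      rw [abs_of_pos hr] at hz
      have hz0 := hne z hz
      rw [mem_sphere_zero_iff_norm] at hz
      have hrc : (r:ℂ) ≠ 0 := by exact_mod_cast hr.ne'
      have hconj : (starRingEnd ℂ) (r / z) = z / r := by
        have : z * (starRingEnd ℂ) z = r * r := by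
          rw [Complex.mul_conj, Complex.normSq_eq_norm_sq, hz]; push_cast; ring
        have hzc : (starRingEnd ℂ) z ≠ 0 := by simpa using hz0
        rw [map_div₀, Complex.conj_ofReal, div_eq_div_iff hzc hrc, this]
      have key : ∀ a b : ℂ, a.re * (2 * b).re = (b * a + (starRingEnd ℂ) b * a).re := by
        intro a b; simp; ring
      simp only [ker, hm.ne', if_false, Function.comp]
      rw [show d * (2 * (r / z) ^ m) = 2 * (d * (r / z) ^ m) by ring, key, map_mul, map_pow, hconj]
      rw [reCLM_apply]
      congr 1
      simp only [smul_eq_mul, div_pow, pow_zero, div_one]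
      ring
    have i1 : CircleIntegrable (fun z => (d * r ^ m) • (v z / z ^ m)) 0 r := by
      refine circleIntegrable_of_punctured hr (ContinuousOn.fun_const_smul ?_ _)
      exact hvc.div (by fun_prop) fun z hz => pow_ne_zero _ (hne z hz)
    have i2 : CircleIntegrable (fun z => ((starRingEnd ℂ) d / r ^ m) • (z ^ m * v z / z ^ 0)) 0 r := by
      refine circleIntegrable_of_punctured hr (ContinuousOn.fun_const_smul ?_ _)
      simp only [pow_zero, div_one]
      exact ContinuousOn.mul (by fun_prop) hvc
    have i12 : CircleIntegrable (fun z => (d * r ^ m) • (v z / z ^ m) +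
        ((starRingEnd ℂ) d / r ^ m) • (z ^ m * v z / z ^ 0)) 0 r := i1.add i2
    rw [h1, ContinuousLinearMap.circleAverage_comp_comm _ i12, circleAverage_fun_add i1 i2,
      circleAverage_fun_smul, circleAverage_fun_smul, cf_average hv hr hr1,
      cf_average (v := fun z => z ^ m * v z) (by fun_prop) hr hr1, cf_zero]
    simp [hm.ne']
    ring

/-- A real-affine functional of the Taylor coefficients that is nonnegative on the kernels
`(1 + κ z) / (1 - κ z)` is nonnegative on all functions of nonnegative real part. -/
theorem averaging {v : ℂ → ℂ} {s : ℝ} (hv : DifferentiableOn ℂ v (ball 0 1))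
    (hre : ∀ z ∈ ball (0:ℂ) 1, 0 ≤ (v z).re) (h0 : v 0 = s) (c : ℝ) (d : ℕ → ℂ) (N : ℕ)
    (hk : ∀ κ : ℂ, ‖κ‖ = 1 → 0 ≤ c + (∑ m ∈ Finset.range (N + 1), d m * ker κ m).re) :
    0 ≤ s * c + (∑ m ∈ Finset.range (N + 1), d m * cf v m).re := by
  have key : ∀ r : ℝ, 0 < r → r < 1 →
      0 ≤ s * c + (∑ m ∈ Finset.range (N + 1), d m * (r ^ m * cf v m)).re := by
    intro r hr hr1
    have hvc : ContinuousOn v (sphere 0 r) := hv.continuousOn.mono fun z hz => by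
      rw [mem_sphere_zero_iff_norm] at hz
      rw [mem_ball_zero_iff]; linarith
    have hne : ∀ z ∈ sphere (0:ℂ) r, z ≠ 0 := by
      rintro z hz rfl
      simp at hz; linarith
    have hCI : ∀ (e : ℂ) (m : ℕ),
        CircleIntegrable (fun z => (v z).re * (e * ker (r / z) m).re) 0 r := by
      intro e m
      refine ContinuousOn.circleIntegrable hr.le ?_
      refine (Complex.continuous_re.comp_continuousOn hvc).mul
        (Complex.continuous_re.comp_continuousOn (continuousOn_const.mul ?_))
      unfold ker
      split_ifs
      · fun_prop
      · exact continuousOn_const.mul ((continuousOn_const.div continuousOn_id hne).pow m)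
    have h1 : 0 ≤ circleAverage (fun z => (v z).re * ((c:ℂ) * ker (r / z) 0).re +
        ∑ m ∈ Finset.range (N + 1), (v z).re * (d m * ker (r / z) m).re) 0 r := by
      refine circleAverage_nonneg_of_nonneg fun z hz => ?_
      rw [abs_of_pos hr, mem_sphere_zero_iff_norm] at hz
      have hκ : ‖(r:ℂ) / z‖ = 1 := by
        rw [norm_div, hz, Complex.norm_real, Real.norm_eq_abs, abs_of_pos hr, div_self hr.ne']
      have := mul_nonneg (hre z (by rw [mem_ball_zero_iff]; linarith)) (hk _ hκ)
      rw [Complex.re_sum, mul_add, Finset.mul_sum] at this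
      simpa [ker] using this
    rw [circleAverage_fun_add (hCI _ _), circleAverage_fun_sum (fun m _ => hCI _ _),
      average_term hv h0 hr hr1] at h1
    · rw [Finset.sum_congr rfl fun m _ => average_term hv h0 hr hr1 (d m) m] at h1
      rw [Complex.re_sum]
      simp only [pow_zero, one_mul, cf_zero, h0] at h1
      rw [← Complex.ofReal_mul, Complex.ofReal_re] at h1
      linarith
    · simpa [Finset.sum_fn] using CircleIntegrable.sum (Finset.range (N + 1)) (fun m _ => hCI (d m) m)
  have hc : Continuous fun r : ℝ =>
      s * c + (∑ m ∈ Finset.range (N + 1), d m * ((r:ℂ) ^ m * cf v m)).re := by fun_prop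
  have ht := (hc.tendsto 1).mono_left (nhdsWithin_le_nhds (s := Set.Iio 1))
  have h2 := ge_of_tendsto ht (b := 0) (by
    filter_upwards [Ioo_mem_nhdsLT (show (0:ℝ) < 1 by norm_num)] with r hr using key r hr.1 hr.2)
  simpa using h2

/-! ### Positivity in de Branges' argument -/

/-- The linear functional `p_{i+1} - ∑_{m ≤ i} e_{i-m} p_m` of the coefficients `p`. -/
noncomputable def xf (e p : ℕ → ℂ) (i : ℕ) : ℂ :=
  p (i + 1) - ∑ m ∈ Finset.range (i + 1), e (i - m) * p m

theorem xf_ker (e : ℕ → ℂ) {κ : ℂ} (hκ : κ ≠ 0) (i : ℕ) :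
    xf e (ker κ) i = κ ^ (i + 1) * (2 - (∑ j ∈ Finset.range (i + 1), e j * (κ⁻¹) ^ (j + 1)) -
      ∑ j ∈ Finset.range i, e j * (κ⁻¹) ^ (j + 1)) := by
  have h1 : ∑ m ∈ Finset.range (i + 1), e (i - m) * ker κ m =
      ∑ j ∈ Finset.range (i + 1), e j * ker κ (i - j) := by
    rw [← Finset.sum_range_reflect]
    refine Finset.sum_congr rfl fun j hj => ?_
    have : j ≤ i := Nat.lt_succ_iff.1 (Finset.mem_range.1 hj)
    rw [show i + 1 - 1 - j = i - j by omega, show i - (i - j) = j by omega]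
  have h2 : ∑ j ∈ Finset.range i, e j * ker κ (i - j) =
      ∑ j ∈ Finset.range i, 2 * κ ^ (i + 1) * (e j * (κ⁻¹) ^ (j + 1)) := by
    refine Finset.sum_congr rfl fun j hj => ?_
    have hj := Finset.mem_range.1 hj
    rw [ker, if_neg (by omega), inv_pow]
    have : κ ^ (i + 1) = κ ^ (i - j) * κ ^ (j + 1) := by rw [← pow_add]; congr 1; omega
    rw [this]
    field_simp
  rw [xf, h1, Finset.sum_range_succ, h2, ← Finset.mul_sum, Nat.sub_self, ker, ker,
    if_neg (by omega), if_pos rfl, Finset.sum_range_succ]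
  have : κ ^ (i + 1) * (e i * κ⁻¹ ^ (i + 1)) = e i := by
    rw [inv_pow]; field_simp
  linear_combination this

/-- Summation by parts in de Branges' argument: the quadratic form is a combination of squares. -/
theorem kernel_nonneg (N : ℕ) (t l : ℕ → ℝ) (ht : ∀ i, t i = t (i + 1) + l i + l (i + 1))
    (htN : t N = 0) (hlN : l N = 0) (hl : ∀ i, 0 ≤ l i) (e : ℕ → ℂ) (κ : ℂ) (hκ : ‖κ‖ = 1) :
    0 ≤ (∑ i ∈ Finset.range N, l i * (4 - ‖e i‖ ^ 2)) +
      (∑ i ∈ Finset.range N, (-2 * t i : ℝ) * (starRingEnd ℂ) (e i) * xf e (ker κ) i).re := by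
  have hκ0 : κ ≠ 0 := by rintro rfl; simp at hκ
  set B : ℕ → ℂ := fun i => ∑ j ∈ Finset.range i, e j * (κ⁻¹) ^ (j + 1) with hB
  have hB0 : B 0 = 0 := by simp [hB]
  have hBs : ∀ i, B (i + 1) = B i + e i * (κ⁻¹) ^ (i + 1) := fun i => Finset.sum_range_succ _ _
  have hkk : ∀ n : ℕ, (starRingEnd ℂ) ((κ⁻¹) ^ n) = κ ^ n := by
    intro n
    rw [map_pow, map_inv₀, ← Complex.inv_eq_conj hκ, inv_inv]
  have he : ∀ i, e i = (B (i + 1) - B i) * κ ^ (i + 1) := by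
    intro i; rw [hBs, inv_pow]; field_simp; ring
  have hen : ∀ i, ‖e i‖ ^ 2 = ‖B (i + 1) - B i‖ ^ 2 := by
    intro i; rw [he, norm_mul, norm_pow, hκ]; simp
  let Y : ℕ → ℝ := fun i => 2 * (B i).re - ‖B i‖ ^ 2
  have hx : ∀ i, ((starRingEnd ℂ) (e i) * xf e (ker κ) i).re = Y (i + 1) - Y i := by
    intro i
    rw [xf_ker e hκ0]
    have h1 : (starRingEnd ℂ) (e i) * κ ^ (i + 1) = (starRingEnd ℂ) (B (i + 1) - B i) := by
      rw [hBs, add_sub_cancel_left, map_mul, hkk]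
    change ((starRingEnd ℂ) (e i) * (κ ^ (i + 1) * (2 - B (i + 1) - B i))).re = _
    rw [← mul_assoc, h1]
    simp only [Y]
    rw [← Complex.normSq_eq_norm_sq, ← Complex.normSq_eq_norm_sq, Complex.normSq_apply,
      Complex.normSq_apply]
    simp
    ring
  have habel : ∀ n, ∑ i ∈ Finset.range n, t i * (Y (i + 1) - Y i) =
      (∑ i ∈ Finset.range n, l i * (Y (i + 1) + Y i)) + (t n + l n) * Y n := by
    intro n
    induction n with
    | zero => simp [Y, hB0]
    | succ n ih =>
      rw [Finset.sum_range_succ, Finset.sum_range_succ, ih, ht n]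
      ring
  have hre : (∑ i ∈ Finset.range N, (-2 * t i : ℝ) * (starRingEnd ℂ) (e i) * xf e (ker κ) i).re =
      -2 * ∑ i ∈ Finset.range N, l i * (Y (i + 1) + Y i) := by
    have := habel N
    rw [htN, hlN] at this
    simp only [add_zero, zero_mul] at this
    rw [← this, Complex.re_sum, Finset.mul_sum]
    refine Finset.sum_congr rfl fun i _ => ?_
    rw [mul_assoc, Complex.re_ofReal_mul, hx]; ring
  rw [hre, Finset.mul_sum, ← Finset.sum_add_distrib]
  refine Finset.sum_nonneg fun i _ => ?_
  have : l i * (4 - ‖e i‖ ^ 2) + -2 * (l i * (Y (i + 1) + Y i)) =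
      l i * ‖2 - B (i + 1) - B i‖ ^ 2 := by
    rw [hen]
    simp only [Y]
    simp only [← Complex.normSq_eq_norm_sq, Complex.normSq_apply]
    simp
    ring
  rw [this]
  exact mul_nonneg (hl i) (by positivity)

/-- De Branges' positivity for an arbitrary `v` of nonnegative real part, by averaging the case of
kernels. -/
theorem step_nonneg {v : ℂ → ℂ} {s : ℝ} (hv : DifferentiableOn ℂ v (ball 0 1))
    (hre : ∀ z ∈ ball (0:ℂ) 1, 0 ≤ (v z).re) (h0 : v 0 = s)
    (N : ℕ) (t l : ℕ → ℝ) (ht : ∀ i, t i = t (i + 1) + l i + l (i + 1))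
    (htN : t N = 0) (hlN : l N = 0) (hl : ∀ i, 0 ≤ l i) (e : ℕ → ℂ) :
    0 ≤ s * (∑ i ∈ Finset.range N, l i * (4 - ‖e i‖ ^ 2)) +
      (∑ i ∈ Finset.range N, (-2 * t i : ℝ) * (starRingEnd ℂ) (e i) * xf e (cf v) i).re := by
  let d : ℕ → ℂ := fun m => ∑ i ∈ Finset.range N, (-2 * t i : ℝ) * (starRingEnd ℂ) (e i) *
    ((if m = i + 1 then 1 else 0) - if m ∈ Finset.range (i + 1) then e (i - m) else 0)
  have hlin : ∀ p : ℕ → ℂ, ∑ m ∈ Finset.range (N + 1), d m * p m =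
      ∑ i ∈ Finset.range N, (-2 * t i : ℝ) * (starRingEnd ℂ) (e i) * xf e p i := by
    intro p
    simp only [d, Finset.sum_mul]
    rw [Finset.sum_comm]
    refine Finset.sum_congr rfl fun i hi => ?_
    have hi := Finset.mem_range.1 hi
    simp only [mul_assoc, ← Finset.mul_sum]
    congr 2
    simp only [sub_mul, Finset.sum_sub_distrib, ite_mul, one_mul, zero_mul]
    rw [Finset.sum_ite_eq' (Finset.range (N + 1)) (i + 1), if_pos (Finset.mem_range.2 (by omega)),
      ← Finset.sum_filter, xf]
    congr 1
    refine Finset.sum_congr ?_ fun _ _ => rfl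
    ext m; simp; omega
  have := averaging hv hre h0 (∑ i ∈ Finset.range N, l i * (4 - ‖e i‖ ^ 2)) d N (fun κ hκ => by
    rw [hlin]
    exact kernel_nonneg N t l ht htN hlN hl e κ hκ)
  rwa [hlin] at this

/-! ### First-order expansion of a composition -/

theorem deriv_bound {F : ℂ → ℂ} (hF : DifferentiableOn ℂ F (ball 0 1)) {R r M : ℝ} (hR : R < 1)
    (hr : r < R) (hM : ∀ z : ℂ, ‖z‖ ≤ R → ‖F z‖ ≤ M) {z : ℂ} (hz : ‖z‖ ≤ r) :
    ‖deriv F z‖ ≤ M / (R - r) := by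
  have hsub : closedBall z (R - r) ⊆ closedBall (0:ℂ) R := by
    intro w hw
    rw [mem_closedBall, dist_eq_norm] at hw
    rw [mem_closedBall_zero_iff]
    have := norm_add_le (w - z) z
    rw [sub_add_cancel] at this
    linarith
  refine Complex.norm_deriv_le_of_forall_mem_sphere_norm_le (by linarith) ?_ fun w hw =>
    hM w (mem_closedBall_zero_iff.1 (hsub (sphere_subset_closedBall hw)))
  refine DifferentiableOn.diffContOnCl ?_
  rw [closure_ball z (by linarith)]
  exact hF.mono (hsub.trans (closedBall_subset_ball hR))

theorem taylor_two {F : ℂ → ℂ} (hF : DifferentiableOn ℂ F (ball 0 1)) {M : ℝ}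
    (hM : ∀ z : ℂ, ‖z‖ ≤ 3 / 4 → ‖F z‖ ≤ M) {z w : ℂ} (hz : ‖z‖ ≤ 1 / 2) (hw : ‖w‖ ≤ 1 / 2) :
    ‖F w - F z - deriv F z * (w - z)‖ ≤ 64 * M * ‖w - z‖ ^ 2 := by
  have hM0 : 0 ≤ M := (norm_nonneg _).trans (hM 0 (by norm_num))
  have h1 : ∀ ζ : ℂ, ‖ζ‖ ≤ 5 / 8 → ‖deriv F ζ‖ ≤ 8 * M := fun ζ hζ =>
    (deriv_bound hF (by norm_num) (by norm_num) hM hζ).trans (by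
      rw [div_le_iff₀ (by norm_num)]; linarith)
  have hF' := hF.deriv isOpen_ball
  have h2 : ∀ ζ : ℂ, ‖ζ‖ ≤ 1 / 2 → ‖deriv (deriv F) ζ‖ ≤ 64 * M := fun ζ hζ =>
    (deriv_bound hF' (by norm_num) (by norm_num) h1 hζ).trans (by
      rw [div_le_iff₀ (by norm_num)]; linarith)
  have hb : ∀ ζ ∈ closedBall (0:ℂ) (1 / 2), ζ ∈ ball (0:ℂ) 1 := fun ζ hζ =>
    closedBall_subset_ball (by norm_num) hζ
  have hz' : z ∈ closedBall (0:ℂ) (1 / 2) := mem_closedBall_zero_iff.2 hz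
  have hw' : w ∈ closedBall (0:ℂ) (1 / 2) := mem_closedBall_zero_iff.2 hw
  have h3 : ∀ ζ ∈ closedBall (0:ℂ) (1 / 2), ‖deriv F ζ - deriv F z‖ ≤ 64 * M * ‖ζ - z‖ :=
    fun ζ hζ => (convex_closedBall (0:ℂ) (1 / 2)).norm_image_sub_le_of_norm_deriv_le
      (fun x hx => hF'.differentiableAt (isOpen_ball.mem_nhds (hb x hx)))
      (fun x hx => h2 x (mem_closedBall_zero_iff.1 hx)) hz' hζ
  have hseg : segment ℝ z w ⊆ closedBall (0:ℂ) (1 / 2) :=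
    (convex_closedBall (0:ℂ) (1 / 2)).segment_subset hz' hw'
  have h4 := (convex_segment z w).norm_image_sub_le_of_norm_hasDerivWithin_le
    (f := fun ζ => F ζ - deriv F z * ζ) (f' := fun ζ => deriv F ζ - deriv F z)
    (C := 64 * M * ‖w - z‖) (𝕜 := ℂ) (fun x hx => by
      have hx' := (hF.differentiableAt (isOpen_ball.mem_nhds (hb x (hseg hx)))).hasDerivAt
      refine HasDerivAt.hasDerivWithinAt ((hx'.fun_sub
        ((hasDerivAt_id x).const_mul (deriv F z))).congr_deriv ?_)
      simp) (fun x hx => (h3 x (hseg hx)).trans (by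
        have : ‖x - z‖ ≤ ‖w - z‖ := by
          obtain ⟨a, b, ha, hb, hab, rfl⟩ := hx
          have : a • z + b • w - z = b • (w - z) := by
            rw [← sub_eq_zero]
            rw [show a = 1 - b by linarith]; module
          rw [this, norm_smul, Real.norm_eq_abs, abs_of_nonneg hb]
          nlinarith [norm_nonneg (w - z)]
        gcongr)) (left_mem_segment ℝ z w) (right_mem_segment ℝ z w)
  refine le_trans (le_of_eq ?_) (h4.trans (le_of_eq ?_))
  · congr 1; ring
  · ring

theorem InV.bound {u T : ℝ} {v : ℂ → ℂ} (h : InV u v) (hT : 0 < T) (hu : u ≤ T) {z : ℂ} {r : ℝ}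
    (hr : r < 1) (hz : ‖z‖ ≤ r) : ‖v z‖ ≤ T * (1 + 2 * r / (1 - r)) := by
  have hz1 : z ∈ ball (0:ℂ) 1 := mem_ball_zero_iff.2 (by linarith)
  have h1 := norm_sub_le_of_re_nonneg h.diff h.re_nonneg h.zero hT hu hz1
  have h2 : ‖v z‖ ≤ ‖v z - u‖ + ‖(u : ℂ)‖ := by
    simpa using norm_add_le (v z - u) (u : ℂ)
  rw [Complex.norm_real, Real.norm_eq_abs, abs_of_nonneg h.nonneg] at h2
  have h3 : 2 * T * ‖z‖ / (1 - ‖z‖) ≤ 2 * T * r / (1 - r) := by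
    have : 0 < 1 - r := by linarith
    have : 0 ≤ r := (norm_nonneg z).trans hz
    gcongr
  have h4 : T * (1 + 2 * r / (1 - r)) = T + 2 * T * r / (1 - r) := by ring
  linarith

theorem InV.cf_le {u T : ℝ} {v : ℂ → ℂ} (h : InV u v) (hT : 0 < T) (hu : u ≤ T) (k : ℕ) :
    ‖cf v k‖ ≤ 3 * T * 2 ^ k :=
  cf_bound h.diff (fun z hz => (h.bound hT hu (r := 1 / 2) (by norm_num) hz.le).trans
    (le_of_eq (by ring))) k

/-- The remainder of the first-order expansion of `v₁ ∘ ω + v₂` in `v₂`. -/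
theorem remainder_bound {u₁ s T : ℝ} {v v₁ v₂ : ℂ → ℂ} (h₁ : InV u₁ v₁) (h₂ : InV s v₂)
    (hv : VComp v v₁ v₂) (hT : 0 < T) (hu : u₁ ≤ T) (hs : 0 < s) (hs1 : s ≤ 1 / 3) {z : ℂ}
    (hz : ‖z‖ = 1 / 2) :
    ‖v z - (v₁ z + v₂ z - v₂ z * (z * deriv v₁ z))‖ ≤ 5000 * T * s ^ 2 := by
  have hz1 : z ∈ ball (0:ℂ) 1 := mem_ball_zero_iff.2 (by rw [hz]; norm_num)
  have b2 : ‖v₂ z‖ ≤ 3 * s :=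
    (h₂.bound hs le_rfl (r := 1 / 2) (by norm_num) hz.le).trans (le_of_eq (by ring))
  have b1 : ∀ ζ : ℂ, ‖ζ‖ ≤ 3 / 4 → ‖v₁ ζ‖ ≤ 7 * T := fun ζ hζ =>
    (h₁.bound hT hu (r := 3 / 4) (by norm_num) hζ).trans (le_of_eq (by ring))
  have bd : ‖deriv v₁ z‖ ≤ 28 * T := (deriv_bound h₁.diff (by norm_num) (by norm_num) b1
    hz.le).trans (le_of_eq (by ring))
  have hw : ‖vMap v₂ z‖ ≤ 1 / 2 := hz ▸ h₂.norm_le hz1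
  have ht := taylor_two h₁.diff b1 hz.le hw
  have b2' : ‖-v₂ z‖ ≤ 1 := by rw [norm_neg]; linarith
  have e1 := Complex.norm_exp_sub_one_le b2'
  have e2 := Complex.norm_exp_sub_one_sub_id_le b2'
  rw [norm_neg] at e1 e2
  have hwz : vMap v₂ z - z = z * (Complex.exp (-v₂ z) - 1) := by rw [vMap]; ring
  have b3 : ‖vMap v₂ z - z‖ ≤ 3 * s := by
    rw [hwz, norm_mul, hz]; linarith
  have hdec : v z - (v₁ z + v₂ z - v₂ z * (z * deriv v₁ z)) =
      (v₁ (vMap v₂ z) - v₁ z - deriv v₁ z * (vMap v₂ z - z)) +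
        deriv v₁ z * (z * (Complex.exp (-v₂ z) - 1 - -v₂ z)) := by
    rw [hv z hz1, hwz]; ring
  rw [hdec]
  refine (norm_add_le _ _).trans ?_
  have t1 : 64 * (7 * T) * ‖vMap v₂ z - z‖ ^ 2 ≤ 64 * (7 * T) * (3 * s) ^ 2 := by gcongr
  have t2 : ‖deriv v₁ z * (z * (Complex.exp (-v₂ z) - 1 - -v₂ z))‖ ≤
      28 * T * (1 / 2 * (3 * s) ^ 2) := by
    rw [norm_mul, norm_mul, hz]
    have : ‖v₂ z‖ ^ 2 ≤ (3 * s) ^ 2 := by gcongr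
    gcongr
    exact e2.trans this
  have : 0 ≤ T * s ^ 2 := by positivity
  nlinarith

/-- First-order change of the Taylor coefficients under composition with an inner factor `v₂`. -/
theorem cf_step {u₁ s T : ℝ} {v v₁ v₂ : ℂ → ℂ} (h₁ : InV u₁ v₁) (h₂ : InV s v₂)
    (hv : VComp v v₁ v₂) (hT : 0 < T) (hu : u₁ ≤ T) (hs : 0 < s) (hs1 : s ≤ 1 / 3) (i : ℕ) :
    ‖cf v (i + 1) - (cf v₁ (i + 1) + xf (fun j => (j + 1) * cf v₁ (j + 1)) (cf v₂) i)‖ ≤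
      5000 * T * s ^ 2 * 2 ^ (i + 1) := by
  have hvd : DifferentiableOn ℂ v (ball 0 1) := (hv.inV h₁ h₂).diff
  have hd1 : DifferentiableOn ℂ (fun z => z * deriv v₁ z) (ball 0 1) :=
    differentiableOn_id.mul (h₁.diff.deriv isOpen_ball)
  have hd2 := h₂.diff.fun_mul hd1
  have hd3 := h₁.diff.fun_add h₂.diff
  have hb := cf_bound (hvd.fun_sub (hd3.fun_sub hd2)) (fun z hz =>
    remainder_bound h₁ h₂ hv hT hu hs hs1 hz) (i + 1)
  rw [cf_sub hvd (hd3.fun_sub hd2), cf_sub hd3 hd2, cf_add h₁.diff h₂.diff,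
    cf_mul h₂.diff hd1, Finset.sum_range_succ] at hb
  refine le_trans (le_of_eq ?_) hb
  congr 1
  simp only [cf_euler h₁.diff, xf, Nat.sub_self, Nat.cast_zero, zero_mul, mul_zero, add_zero]
  have : ∑ m ∈ Finset.range (i + 1), ((i - m : ℕ) + 1 : ℂ) * cf v₁ (i - m + 1) * cf v₂ m =
      ∑ m ∈ Finset.range (i + 1), cf v₂ m * ((i + 1 - m : ℕ) * cf v₁ (i + 1 - m)) := by
    refine Finset.sum_congr rfl fun m hm => ?_
    have hm := Finset.mem_range.1 hm
    rw [show i + 1 - m = i - m + 1 by omega]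
    push_cast
    ring
  rw [this]
  ring

theorem xf_bound {u₁ s T : ℝ} {v₁ v₂ : ℂ → ℂ} (h₁ : InV u₁ v₁) (h₂ : InV s v₂)
    (hT : 0 < T) (hu : u₁ ≤ T) (hs : 0 < s) (i : ℕ) :
    ‖xf (fun j => (j + 1) * cf v₁ (j + 1)) (cf v₂) i‖ ≤
      (3 * 2 ^ (i + 1) + ∑ m ∈ Finset.range (i + 1),
        ((i - m : ℕ) + 1) * (3 * T * 2 ^ (i - m + 1)) * (3 * 2 ^ m)) * s := by
  rw [xf, add_mul, Finset.sum_mul]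
  refine (norm_sub_le _ _).trans (add_le_add ?_ ((norm_sum_le _ _).trans (Finset.sum_le_sum ?_)))
  · exact (h₂.cf_le hs le_rfl _).trans (le_of_eq (by ring))
  · intro m _
    have c1 := h₁.cf_le hT hu (i - m + 1)
    have c2 := h₂.cf_le hs le_rfl m
    have c3 : ‖(((i - m : ℕ) : ℂ) + 1)‖ = ((i - m : ℕ) : ℝ) + 1 := by
      rw [← Nat.cast_one, ← Nat.cast_add, Complex.norm_natCast]; push_cast; rfl
    rw [norm_mul, norm_mul, c3]
    refine (mul_le_mul (mul_le_mul_of_nonneg_left c1 (by positivity)) c2 (norm_nonneg _)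
      (by positivity)).trans (le_of_eq (by ring))

/-! ### De Branges' weight systems and one step of the chain -/

/-- Polynomial solutions of de Branges' weight system, with shifted index: `τ i` and `Λ i` are the
weights attached to the coefficient of index `i + 1`. -/
structure Weights (N : ℕ) (τ Λ : ℕ → Polynomial ℝ) : Prop where
  step : ∀ i, τ i = τ (i + 1) + Λ i + Λ (i + 1)
  tauN : ∀ i, N ≤ i → τ i = 0
  lamN : ∀ i, N ≤ i → Λ i = 0
  deriv : ∀ i : ℕ, Polynomial.X * Polynomial.derivative (τ i) = Polynomial.C ((i : ℝ) + 1) * Λ i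
  pos : ∀ i (q : ℝ), 0 < q → q ≤ 1 → 0 ≤ (Λ i).eval q

theorem Weights.tau_nonneg {N : ℕ} {τ Λ : ℕ → Polynomial ℝ} (W : Weights N τ Λ) (i : ℕ) {q : ℝ}
    (hq : 0 < q) (hq1 : q ≤ 1) : 0 ≤ (τ i).eval q := by
  by_cases hi : N ≤ i
  · rw [W.tauN i hi]; simp
  · push Not at hi
    induction hm : N - i generalizing i with
    | zero => omega
    | succ m ih =>
      rw [W.step i, Polynomial.eval_add, Polynomial.eval_add]
      have h3 : 0 ≤ (τ (i + 1)).eval q := by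
        by_cases h : N ≤ i + 1
        · rw [W.tauN _ h]; simp
        · exact ih (i + 1) (by omega) (by omega)
      linarith [W.pos i q hq hq1, W.pos (i + 1) q hq hq1]

theorem exp_neg_second_order {x : ℝ} (hx : 0 ≤ x) : |Real.exp (-x) - 1 + x| ≤ x ^ 2 := by
  rw [abs_le]
  constructor
  · nlinarith [Real.add_one_le_exp (-x), sq_nonneg x]
  · by_cases h : x ≤ 1
    · have := Real.abs_exp_sub_one_sub_id_le (x := -x) (by rwa [abs_neg, abs_of_nonneg hx])
      have := (abs_le.1 this).2
      nlinarith
    · have : Real.exp (-x) ≤ 1 := Real.exp_le_one_iff.2 (by linarith)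
      nlinarith

/-- Second-order Taylor estimate for `s ↦ p (q e^{-s})`, uniform in `q`. -/
theorem poly_second_order (p : Polynomial ℝ) : ∃ K, 0 ≤ K ∧ ∀ q s : ℝ, 0 ≤ q → q ≤ 1 → 0 ≤ s →
    |p.eval (q * Real.exp (-s)) - p.eval q +
      s * (Polynomial.X * Polynomial.derivative p).eval q| ≤ K * s ^ 2 := by
  induction p using Polynomial.induction_on' with
  | add p r hp hr =>
    obtain ⟨K, hK, h⟩ := hp
    obtain ⟨K', hK', h'⟩ := hr
    refine ⟨K + K', by positivity, fun q s hq hq1 hs => ?_⟩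
    have a := h q s hq hq1 hs
    have b := h' q s hq hq1 hs
    refine le_trans (le_of_eq ?_) ((abs_add_le _ _).trans ((add_le_add a b).trans (by linarith)))
    congr 1
    simp only [Polynomial.derivative_add, mul_add, Polynomial.eval_add]
    ring
  | monomial n a =>
    refine ⟨|a| * n ^ 2, by positivity, fun q s hq hq1 hs => ?_⟩
    have e : (Polynomial.X * Polynomial.derivative (Polynomial.monomial n a)).eval q
        = a * n * q ^ n := by
      rw [Polynomial.derivative_monomial, Polynomial.eval_mul, Polynomial.eval_X,
        Polynomial.eval_monomial]
      cases n with
      | zero => simp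
      | succ n => simp [pow_succ]; ring
    rw [e, Polynomial.eval_monomial, Polynomial.eval_monomial, mul_pow, ← Real.exp_nat_mul]
    have h := exp_neg_second_order (x := n * s) (by positivity)
    have : a * (q ^ n * Real.exp (n * -s)) - a * q ^ n + s * (a * n * q ^ n) =
        a * q ^ n * (Real.exp (-(n * s)) - 1 + n * s) := by
      rw [show (n:ℝ) * -s = -(n * s) by ring]; ring
    rw [this, abs_mul, abs_mul, abs_of_nonneg (pow_nonneg hq n)]
    have hqn : q ^ n ≤ 1 := pow_le_one₀ hq hq1
    calc |a| * q ^ n * |Real.exp (-(n * s)) - 1 + n * s| ≤ |a| * 1 * (n * s) ^ 2 := by gcongr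
      _ = _ := by ring

theorem poly_bound (p : Polynomial ℝ) : ∃ B, 0 ≤ B ∧ ∀ q : ℝ, 0 ≤ q → q ≤ 1 → |p.eval q| ≤ B := by
  obtain ⟨B, hB⟩ := (isCompact_Icc (a := (0:ℝ)) (b := 1)).exists_bound_of_continuousOn
    p.continuous.continuousOn
  exact ⟨B, (abs_nonneg _).trans (hB 0 (by simp)), fun q h0 h1 => hB q ⟨h0, h1⟩⟩

/-- Second-order bookkeeping for a single term `t (k |a|² - 4 / k)` when the coefficient moves by
`x + r` with `x = O(s)`, `r = O(s²)` and the weight moves by `- s k l + O(s²)`. -/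
theorem term_step {a x r : ℂ} {t t' l s k A X R B K : ℝ} (ha : ‖a‖ ≤ A) (hx : ‖x‖ ≤ X * s)
    (hr : ‖r‖ ≤ R * s ^ 2) (hs : 0 ≤ s) (hs1 : s ≤ 1) (ht : 0 ≤ t) (htB : t ≤ B)
    (hX : 0 ≤ X) (hR : 0 ≤ R)
    (hK : |t' - t + s * (k * l)| ≤ K * s ^ 2) (hk : 1 ≤ k) :
    t * (k * ‖a + x + r‖ ^ 2 - 4 / k) ≤ t' * (k * ‖a‖ ^ 2 - 4 / k) +
      (s * l * ((k * ‖a‖) ^ 2 - 4) + 2 * t * k * ((starRingEnd ℂ) a * x).re) +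
      (B * k * (X ^ 2 + 2 * (A + X) * R + R ^ 2) + K * (k * A ^ 2 + 4)) * s ^ 2 := by
  have hA : 0 ≤ A := (norm_nonneg _).trans ha
  have h1 : ‖a + x + r‖ ^ 2 ≤ ‖a‖ ^ 2 + 2 * ((starRingEnd ℂ) a * x).re +
      (X ^ 2 + 2 * (A + X) * R + R ^ 2) * s ^ 2 := by
    have e1 : ‖a + x‖ ^ 2 = ‖a‖ ^ 2 + 2 * ((starRingEnd ℂ) a * x).re + ‖x‖ ^ 2 := by
      simp only [← Complex.normSq_eq_norm_sq, Complex.normSq_apply, Complex.mul_re, Complex.conj_re,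
        Complex.conj_im, Complex.add_re, Complex.add_im]
      ring
    have e2 : ‖a + x + r‖ ≤ ‖a + x‖ + ‖r‖ := norm_add_le _ _
    have e3 : ‖a + x‖ ≤ A + X := (norm_add_le _ _).trans
      (add_le_add ha (hx.trans (mul_le_of_le_one_right hX hs1)))
    have e4 : ‖a + x + r‖ ^ 2 ≤ (‖a + x‖ + ‖r‖) ^ 2 := by gcongr
    have e5 : ‖a + x‖ * ‖r‖ ≤ (A + X) * (R * s ^ 2) := by gcongr
    have e6 : ‖r‖ ^ 2 ≤ (R * s ^ 2) ^ 2 := by gcongr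
    have e7 : (R * s ^ 2) ^ 2 ≤ R ^ 2 * s ^ 2 := by
      have : s ^ 2 ≤ 1 := pow_le_one₀ hs hs1
      nlinarith [mul_nonneg (sq_nonneg R) (sq_nonneg s)]
    have e8 : ‖x‖ ^ 2 ≤ (X * s) ^ 2 := by gcongr
    nlinarith
  set D := X ^ 2 + 2 * (A + X) * R + R ^ 2 with hD
  have hD0 : 0 ≤ D := by positivity
  set ρ := t' - t + s * (k * l) with hρ
  have h2 : t * (k * ‖a + x + r‖ ^ 2 - 4 / k) ≤
      t * (k * (‖a‖ ^ 2 + 2 * ((starRingEnd ℂ) a * x).re + D * s ^ 2) - 4 / k) := by gcongr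
  have h3 : t * (k * (D * s ^ 2)) ≤ B * (k * (D * s ^ 2)) := by gcongr
  have h4 : -ρ * (k * ‖a‖ ^ 2 - 4 / k) ≤ K * s ^ 2 * (k * A ^ 2 + 4) := by
    refine (le_abs_self _).trans ?_
    rw [abs_mul, abs_neg]
    refine mul_le_mul hK ?_ (abs_nonneg _) ((abs_nonneg _).trans hK)
    have h5 : 4 / k ≤ 4 := by rw [div_le_iff₀ (by linarith)]; linarith
    have h6 : 0 ≤ 4 / k := by positivity
    have h7 : k * ‖a‖ ^ 2 ≤ k * A ^ 2 := by gcongr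
    have h8 : 0 ≤ k * ‖a‖ ^ 2 := by positivity
    rw [abs_le]
    constructor <;> linarith
  have h9 : t * (k * ‖a‖ ^ 2 - 4 / k) = t' * (k * ‖a‖ ^ 2 - 4 / k) +
      s * l * ((k * ‖a‖) ^ 2 - 4) + -ρ * (k * ‖a‖ ^ 2 - 4 / k) := by
    rw [hρ]; field_simp; ring
  linarith

/-- Milin-type functional with weights `w` on the Taylor coefficients of `v`. -/
noncomputable def Phi (N : ℕ) (w : ℕ → ℝ) (v : ℂ → ℂ) : ℝ :=
  ∑ i ∈ Finset.range N, w i * ((i + 1) * ‖cf v (i + 1)‖ ^ 2 - 4 / (i + 1))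

/-- Splitting off an inner factor `v₂` of parameter `s`: the functional of `v` is at most that of
the outer factor `v₁` with weights moved to `q * exp (-s)`, up to `O(s²)` uniformly. -/
theorem one_step {N : ℕ} {τ Λ : ℕ → Polynomial ℝ} (W : Weights N τ Λ) {T : ℝ} (hT : 0 < T) :
    ∃ C, 0 ≤ C ∧ ∀ (u₁ s q : ℝ) (v v₁ v₂ : ℂ → ℂ), InV u₁ v₁ → InV s v₂ → VComp v v₁ v₂ → u₁ ≤ T →
      0 < s → s ≤ 1 / 3 → 0 < q → q ≤ 1 →
      Phi N (fun i => (τ i).eval q) v ≤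
        Phi N (fun i => (τ i).eval (q * Real.exp (-s))) v₁ + C * s ^ 2 := by
  choose B hB0 hB using fun i => poly_bound (τ i)
  choose K hK0 hK using fun i => poly_second_order (τ i)
  set X : ℕ → ℝ := fun i => 3 * 2 ^ (i + 1) + ∑ m ∈ Finset.range (i + 1),
        ((i - m : ℕ) + 1) * (3 * T * 2 ^ (i - m + 1)) * (3 * 2 ^ m) with hX
  have hX0 : ∀ i, 0 ≤ X i := fun i => by
    rw [hX]
    exact add_nonneg (by positivity) (Finset.sum_nonneg fun m _ => by positivity)
  set A : ℕ → ℝ := fun i => 3 * T * 2 ^ (i + 1) with hA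
  set R : ℕ → ℝ := fun i => 5000 * T * 2 ^ (i + 1) with hR
  have hA0 : ∀ i, 0 ≤ A i := fun i => by rw [hA]; positivity
  have hR0 : ∀ i, 0 ≤ R i := fun i => by rw [hR]; positivity
  refine ⟨∑ i ∈ Finset.range N, (B i * (i + 1) * (X i ^ 2 + 2 * (A i + X i) * R i + R i ^ 2) +
    K i * ((i + 1) * A i ^ 2 + 4)), Finset.sum_nonneg fun i _ => ?_, ?_⟩
  · have := hX0 i
    have := hA0 i
    have := hR0 i
    have := hB0 i
    have := hK0 i
    positivity
  intro u₁ s q v v₁ v₂ h₁ h₂ hv hu hs hs1 hq hq1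
  have key := step_nonneg h₂.diff h₂.re_nonneg h₂.zero N (fun i => (τ i).eval q)
    (fun i => (Λ i).eval q) (fun i => by
      rw [W.step i, Polynomial.eval_add, Polynomial.eval_add])
    (by simp [W.tauN N le_rfl]) (by simp [W.lamN N le_rfl]) (fun i => W.pos i q hq hq1)
    (fun j => (j + 1) * cf v₁ (j + 1))
  have hterm : ∀ i ∈ Finset.range N, (τ i).eval q * ((i + 1) * ‖cf v (i + 1)‖ ^ 2 - 4 / (i + 1)) ≤
      (τ i).eval (q * Real.exp (-s)) * ((i + 1) * ‖cf v₁ (i + 1)‖ ^ 2 - 4 / (i + 1)) +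
      (s * (Λ i).eval q * (((i + 1) * ‖cf v₁ (i + 1)‖) ^ 2 - 4) + 2 * (τ i).eval q * (i + 1) *
        ((starRingEnd ℂ) (cf v₁ (i + 1)) *
          xf (fun j => (j + 1) * cf v₁ (j + 1)) (cf v₂) i).re) +
      (B i * (i + 1) * (X i ^ 2 + 2 * (A i + X i) * R i + R i ^ 2) +
    K i * ((i + 1) * A i ^ 2 + 4)) * s ^ 2 := by
    intro i _
    have hc := cf_step h₁ h₂ hv hT hu hs hs1 i
    have hh := term_step (a := cf v₁ (i + 1))
      (x := xf (fun j => (j + 1) * cf v₁ (j + 1)) (cf v₂) i)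
      (r := cf v (i + 1) - (cf v₁ (i + 1) + xf (fun j => (j + 1) * cf v₁ (j + 1)) (cf v₂) i))
      (t := (τ i).eval q) (t' := (τ i).eval (q * Real.exp (-s))) (l := (Λ i).eval q) (s := s)
      (k := i + 1) (A := A i) (X := X i) (R := R i) (B := B i) (K := K i)
      (h₁.cf_le hT hu _) (xf_bound h₁ h₂ hT hu hs i) (hc.trans (le_of_eq (by rw [hR]; ring)))
      hs.le (by linarith) (W.tau_nonneg i hq hq1) ((le_abs_self _).trans (hB i q hq.le hq1))
      (hX0 i) (hR0 i) (by
        have := hK i q s hq.le hq1 hs.le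
        rwa [W.deriv i, Polynomial.eval_mul, Polynomial.eval_C] at this)
      (by linarith [(Nat.cast_nonneg i : (0:ℝ) ≤ i)])
    rwa [add_sub_cancel] at hh
  have hsum := Finset.sum_le_sum hterm
  rw [Finset.sum_add_distrib, Finset.sum_add_distrib, ← Finset.sum_mul] at hsum
  have hbr : ∑ i ∈ Finset.range N, (s * (Λ i).eval q * (((i + 1) * ‖cf v₁ (i + 1)‖) ^ 2 - 4) +
      2 * (τ i).eval q * (i + 1) * ((starRingEnd ℂ) (cf v₁ (i + 1)) *
          xf (fun j => (j + 1) * cf v₁ (j + 1)) (cf v₂) i).re) ≤ 0 := by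
    rw [← neg_nonneg]
    refine key.trans (le_of_eq ?_)
    rw [Complex.re_sum, Finset.mul_sum, ← Finset.sum_add_distrib, ← Finset.sum_neg_distrib]
    refine Finset.sum_congr rfl fun i _ => ?_
    have n1 : ‖((i : ℂ) + 1) * cf v₁ (i + 1)‖ = (i + 1) * ‖cf v₁ (i + 1)‖ := by
      rw [norm_mul, ← Nat.cast_one, ← Nat.cast_add, Complex.norm_natCast]; push_cast; rfl
    have n2 : ∀ y : ℂ, ((-2 * (τ i).eval q : ℝ) : ℂ) *
        (starRingEnd ℂ) (((i : ℂ) + 1) * cf v₁ (i + 1)) * y =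
        ((-2 * (τ i).eval q * (i + 1) : ℝ) : ℂ) * ((starRingEnd ℂ) (cf v₁ (i + 1)) * y) := by
      intro y
      rw [map_mul, map_add, map_natCast, map_one]; push_cast; ring
    rw [n1, n2, Complex.re_ofReal_mul]
    ring
  unfold Phi
  linarith

/-! ### From weight systems to logarithmic coefficients -/

theorem iteratedDeriv_diff {v : ℂ → ℂ} (h : DifferentiableOn ℂ v (ball 0 1)) (k : ℕ) :
    DifferentiableOn ℂ (iteratedDeriv k v) (ball 0 1) := by
  induction k with
  | zero => simpa using h
  | succ k ih => rw [iteratedDeriv_succ]; exact ih.deriv isOpen_ball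

theorem cf_tendsto {F : ℕ → ℂ → ℂ} {f : ℂ → ℂ} (hF : ∀ n, DifferentiableOn ℂ (F n) (ball 0 1))
    (h : TendstoLocallyUniformlyOn F f Filter.atTop (ball 0 1)) (k : ℕ) :
    Filter.Tendsto (fun n => cf (F n) k) Filter.atTop (nhds (cf f k)) := by
  have : TendstoLocallyUniformlyOn (fun n => iteratedDeriv k (F n)) (iteratedDeriv k f)
      Filter.atTop (ball 0 1) := by
    induction k with
    | zero => simpa using h
    | succ k ih =>
      simp only [iteratedDeriv_succ]
      exact ih.deriv (Filter.Eventually.of_forall fun n => iteratedDeriv_diff (hF n) k) isOpen_ball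
  exact (this.tendsto_at zero_mem_disc).div_const _

theorem Phi_tendsto {N : ℕ} {w : ℕ → ℕ → ℝ} {w' : ℕ → ℝ} {F : ℕ → ℂ → ℂ} {f : ℂ → ℂ}
    (hw : ∀ i, Filter.Tendsto (fun n => w n i) Filter.atTop (nhds (w' i)))
    (hF : ∀ k, Filter.Tendsto (fun n => cf (F n) k) Filter.atTop (nhds (cf f k))) :
    Filter.Tendsto (fun n => Phi N (w n) (F n)) Filter.atTop (nhds (Phi N w' f)) := by
  unfold Phi
  refine tendsto_finsetSum _ fun i _ => (hw i).mul ?_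
  exact (((hF (i + 1)).norm.pow 2).const_mul _).sub_const _

/-- Letting the step of the peeling go to zero: a discrete Löwner chain. -/
theorem chain_bound {N : ℕ} {τ Λ : ℕ → Polynomial ℝ} (W : Weights N τ Λ) {T : ℝ} (hT : 0 < T)
    {v : ℂ → ℂ} (hv : InV T v) : Phi N (fun i => (τ i).eval 1) v ≤ 0 := by
  obtain ⟨C, hC, hstep⟩ := one_step W hT
  have main : ∀ h : ℝ, 0 < h → h ≤ 1 / 3 → Phi N (fun i => (τ i).eval 1) v ≤ C * h * T := by
    intro h hh hh1
    -- `S` is the set of times reached by a chain of steps shorter than `h`; its supremum is `T`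
    let S : Set ℝ := {t | 0 ≤ t ∧ t ≤ T ∧ ∃ v₁, InV (T - t) v₁ ∧
      Phi N (fun i => (τ i).eval 1) v ≤ Phi N (fun i => (τ i).eval (Real.exp (-t))) v₁ + C * h * t}
    have hS0 : (0:ℝ) ∈ S := ⟨le_rfl, hT.le, v, by simpa using hv, by simp⟩
    have hSb : BddAbove S := ⟨T, fun t ht => ht.2.1⟩
    obtain ⟨ts, -, hts, htS⟩ := exists_seq_tendsto_sSup ⟨0, hS0⟩ hSb
    set t := sSup S with htdef
    choose hts0 htsT vs hvs hPhi using htS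
    obtain ⟨φ, hφ, u, v₁, hu, hv₁, hconv⟩ := InV.compact (T := T) hvs (fun n => by
      linarith [hts0 n])
    have hts' := hts.comp hφ.tendsto_atTop
    have hut : u = T - t := tendsto_nhds_unique hu (hts'.const_sub T)
    have ht0 : 0 ≤ t := ge_of_tendsto' hts hts0
    have htT : t ≤ T := le_of_tendsto' hts htsT
    subst hut
    have hPt : Phi N (fun i => (τ i).eval 1) v ≤
        Phi N (fun i => (τ i).eval (Real.exp (-t))) v₁ + C * h * t := by
      refine ge_of_tendsto' (f := fun n => Phi N (fun i => (τ i).eval (Real.exp (-(ts (φ n)))))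
        (vs (φ n)) + C * h * ts (φ n)) (x := Filter.atTop) ?_ (fun n => hPhi (φ n))
      refine (Phi_tendsto (fun i => ?_) (cf_tendsto (fun n => (hvs (φ n)).diff) hconv)).add
        (hts'.const_mul _)
      exact ((τ i).continuous.tendsto _).comp ((Real.continuous_exp.tendsto _).comp hts'.neg)
    have htT' : t = T := by
      by_contra hne
      have hlt : t < T := lt_of_le_of_ne htT hne
      obtain ⟨s, w₁, w₂, hs, hsh, hw1, hw2, hcomp⟩ := hv₁.peel (by linarith) hh
      have hmem : t + s ∈ S := by
        refine ⟨by linarith, by linarith [hw1.nonneg], w₁, by rwa [← sub_sub], ?_⟩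
        have := hstep (T - t - s) s (Real.exp (-t)) v₁ w₁ w₂ hw1 hw2 hcomp (by linarith) hs
          (by linarith) (Real.exp_pos _) (Real.exp_le_one_iff.2 (by linarith))
        rw [← Real.exp_add, ← neg_add] at this
        have h2 : C * s ^ 2 ≤ C * h * s := by
          rw [mul_assoc]
          exact mul_le_mul_of_nonneg_left (by nlinarith) hC
        linarith
      have := le_csSup hSb hmem
      linarith
    rw [htT'] at hPt hv₁
    rw [sub_self] at hv₁
    have hz : Phi N (fun i => (τ i).eval (Real.exp (-T))) v₁ ≤ 0 := by
      refine Finset.sum_nonpos fun i _ => ?_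
      rw [cf_congr (w := fun _ => 0) hv₁.eq_zero]
      have h0 : cf (fun _ => 0) (i + 1) = 0 := by simp [cf]
      have := W.tau_nonneg i (Real.exp_pos (-T)) (Real.exp_le_one_iff.2 (by linarith))
      have h4 : (0:ℝ) ≤ 4 / (i + 1) := by positivity
      rw [h0, norm_zero]
      nlinarith
    linarith
  refine le_of_forall_pos_le_add fun ε hε => ?_
  have h1 : 0 < min (1 / 3) (ε / (C * T + 1)) := lt_min (by norm_num) (by positivity)
  refine (main _ h1 (min_le_left _ _)).trans ?_
  have h2 : min (1 / 3) (ε / (C * T + 1)) * (C * T + 1) ≤ ε := by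
    rw [← le_div_iff₀ (by positivity)]
    exact min_le_right _ _
  nlinarith

theorem cf_scale {g : ℂ → ℂ} (hg : DifferentiableOn ℂ g (ball 0 1)) {r : ℝ} (hr : 0 < r)
    (hr1 : r < 1) (k : ℕ) : cf (fun z => g (r * z)) k = (r:ℂ) ^ k * cf g k := by
  have hr0 : (r:ℂ) ≠ 0 := by exact_mod_cast hr.ne'
  have hd : DifferentiableOn ℂ (fun z => g (r * z)) (ball 0 1) := by
    refine hg.comp (differentiableOn_id.const_mul _) fun z hz => ?_
    rw [mem_ball_zero_iff] at hz ⊢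
    change ‖(r:ℂ) * z‖ < 1
    rw [norm_mul, Complex.norm_real, Real.norm_of_nonneg hr.le]
    nlinarith [norm_nonneg z]
  rw [← cf_average hd (r := 1 / 2) (by norm_num) (by norm_num),
    ← cf_average hg (r := r * (1 / 2)) (by positivity) (by linarith)]
  have e : ∀ θ : ℝ, g (r * circleMap 0 (1 / 2) θ) / circleMap 0 (1 / 2) θ ^ k =
      (r:ℂ) ^ k * (g (circleMap 0 (r * (1 / 2)) θ) / circleMap 0 (r * (1 / 2)) θ ^ k) := by
    intro θ
    have : circleMap 0 (r * (1 / 2)) θ = r * circleMap 0 (1 / 2) θ := by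
      simp [circleMap]; ring
    rw [this, mul_pow]
    field_simp
  simp only [circleAverage, e]
  rw [intervalIntegral.integral_const_mul, mul_smul_comm]

/-- The weighted inequality for logarithmic coefficients attached to a solution of de Branges'
weight system. -/
theorem milin_of_weights {N : ℕ} {τ Λ : ℕ → Polynomial ℝ} (W : Weights N τ Λ) {f : ℂ → ℂ}
    {γ : ℕ → ℂ} (hf : InClassS f) (hγ : IsLogCoeffs f γ) :
    ∑ i ∈ Finset.range N, (τ i).eval 1 * ((i + 1) * ‖γ (i + 1)‖ ^ 2 - 1 / (i + 1)) ≤ 0 := by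
  obtain ⟨g, hga, hg0, hge, hgc⟩ := hγ
  obtain ⟨hfa, hfi, hf0, -⟩ := hf
  have hg := hga.differentiableOn
  have hfe : ∀ z ∈ ball (0:ℂ) 1, f z = z * Complex.exp (g z) := by
    intro z hz
    by_cases h : z = 0
    · rw [h, hf0, zero_mul]
    · rw [hge z hz h]; field_simp
  have hcf : ∀ i : ℕ, cf g (i + 1) = 2 * γ (i + 1) := fun i => by
    rw [cf, hgc _ (by omega)]
    have : ((i + 1).factorial : ℂ) ≠ 0 := by exact_mod_cast Nat.factorial_ne_zero _
    field_simp
  have hr : ∀ r : ℝ, 0 < r → r < 1 → ∑ i ∈ Finset.range N,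
      (τ i).eval 1 * ((i + 1) * (r ^ (i + 1) * ‖γ (i + 1)‖) ^ 2 - 1 / (i + 1)) ≤ 0 := by
    intro r hr hr1
    have hrb : ∀ z ∈ ball (0:ℂ) 1, (r:ℂ) * z ∈ closedBall (0:ℂ) r := by
      intro z hz
      rw [mem_ball_zero_iff] at hz
      rw [mem_closedBall_zero_iff, norm_mul, Complex.norm_real, Real.norm_of_nonneg hr.le]
      nlinarith
    have hrb' : ∀ z ∈ ball (0:ℂ) 1, (r:ℂ) * z ∈ ball (0:ℂ) 1 := fun z hz =>
      closedBall_subset_ball hr1 (hrb z hz)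
    obtain ⟨m, hm⟩ := (isCompact_closedBall (0:ℂ) r).exists_bound_of_continuousOn
      (hg.continuousOn.mono (closedBall_subset_ball hr1))
    set T := max m 0 + 1 with hT
    have hT0 : 0 < T := by positivity
    have hmT : m ≤ T := by rw [hT]; linarith [le_max_left m 0]
    have hgr : DifferentiableOn ℂ (fun z => g (r * z)) (ball 0 1) :=
      hg.comp (differentiableOn_id.const_mul _) hrb'
    have hc : DifferentiableOn ℂ (fun _ : ℂ => (T:ℂ)) (ball 0 1) := differentiableOn_const _
    have hv : InV T (fun z => (T:ℂ) - g (r * z)) := by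
      refine ⟨hc.fun_sub hgr, fun z hz => ?_, by simp [hg0], fun x hx y hy hxy => ?_⟩
      · have := (Complex.re_le_norm _).trans (hm _ (hrb z hz))
        simp only [Complex.sub_re, Complex.ofReal_re]
        linarith
      · have hr0 : (r:ℂ) ≠ 0 := by exact_mod_cast hr.ne'
        have e : ∀ z ∈ ball (0:ℂ) 1, f (r * z) = r * Complex.exp T *
            (z * Complex.exp (-((T:ℂ) - g (r * z)))) := by
          intro z hz
          rw [hfe _ (hrb' z hz), neg_sub, Complex.exp_sub]
          field_simp
        have hxy' : x * Complex.exp (-((T:ℂ) - g (r * x))) =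
          y * Complex.exp (-((T:ℂ) - g (r * y))) := hxy
        have := hfi (hrb' x hx) (hrb' y hy) (by rw [e x hx, e y hy, hxy'])
        exact mul_left_cancel₀ hr0 this
    have := chain_bound W hT0 hv
    have e : Phi N (fun i => (τ i).eval 1) (fun z => (T:ℂ) - g (r * z)) = 4 * ∑ i ∈ Finset.range N,
        (τ i).eval 1 * ((i + 1) * (r ^ (i + 1) * ‖γ (i + 1)‖) ^ 2 - 1 / (i + 1)) := by
      rw [Phi, Finset.mul_sum]
      refine Finset.sum_congr rfl fun i _ => ?_
      have h0 : cf (fun _ : ℂ => (T:ℂ)) (i + 1) = 0 := by simp [cf, iteratedDeriv_const]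
      rw [cf_sub hc hgr, h0, zero_sub, norm_neg, cf_scale hg hr hr1, hcf, norm_mul, norm_mul,
        norm_pow, Complex.norm_real, Real.norm_of_nonneg hr.le]
      simp only [Complex.norm_ofNat]
      ring
    rw [e] at this
    linarith
  have hlim : Filter.Tendsto (fun r : ℝ => ∑ i ∈ Finset.range N,
      (τ i).eval 1 * ((i + 1) * (r ^ (i + 1) * ‖γ (i + 1)‖) ^ 2 - 1 / (i + 1)))
      (nhdsWithin 1 (Set.Iio 1)) (nhds (∑ i ∈ Finset.range N,
      (τ i).eval 1 * ((i + 1) * ((1:ℝ) ^ (i + 1) * ‖γ (i + 1)‖) ^ 2 - 1 / (i + 1)))) := by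
    refine Filter.Tendsto.mono_left (Continuous.tendsto ?_ 1) nhdsWithin_le_nhds
    fun_prop
  simp only [one_pow, one_mul] at hlim
  refine le_of_tendsto hlim ?_
  filter_upwards [Ioo_mem_nhdsLT (show (0:ℝ) < 1 by norm_num)] with r hr'
  exact hr r hr'.1 hr'.2

/-! ### Symmetric powers and Chebyshev polynomials -/

/-- Entry `(j, k)` of the `n`-th symmetric power of the matrix `!![a, b; c, d]`: the coefficient of
`x ^ k * y ^ (n - k)` in `(a x + b y) ^ j * (c x + d y) ^ (n - j)`. -/
noncomputable def symM (n : ℕ) (a b c d : ℝ) (j k : ℕ) : ℝ :=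
  ∑ i ∈ Finset.range (j + 1), ∑ l ∈ Finset.range (n - j + 1),
    if i + l = k then (a ^ i * b ^ (j - i) * j.choose i) *
      (c ^ l * d ^ (n - j - l) * (n - j).choose l) else 0

theorem symM_spec {n j : ℕ} (hj : j ≤ n) (a b c d x y : ℝ) :
    (a * x + b * y) ^ j * (c * x + d * y) ^ (n - j) =
      ∑ k ∈ Finset.range (n + 1), symM n a b c d j k * (x ^ k * y ^ (n - k)) := by
  have hs : ∀ k, symM n a b c d j k * (x ^ k * y ^ (n - k)) =
      ∑ i ∈ Finset.range (j + 1), ∑ l ∈ Finset.range (n - j + 1),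
      if i + l = k then (a ^ i * b ^ (j - i) * j.choose i) *
      (c ^ l * d ^ (n - j - l) * (n - j).choose l) * (x ^ k * y ^ (n - k)) else 0 := by
    intro k
    rw [symM, Finset.sum_mul]
    refine Finset.sum_congr rfl fun i _ => ?_
    rw [Finset.sum_mul]
    refine Finset.sum_congr rfl fun l _ => ?_
    split_ifs <;> ring
  simp only [hs]
  rw [Finset.sum_comm, add_pow, add_pow, Finset.sum_mul]
  refine Finset.sum_congr rfl fun i hi => ?_
  rw [Finset.sum_comm, Finset.mul_sum]
  refine Finset.sum_congr rfl fun l hl => ?_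
  have hi := Finset.mem_range.1 hi
  have hl := Finset.mem_range.1 hl
  rw [Finset.sum_ite_eq, if_pos (Finset.mem_range.2 (by omega)),
    show n - (i + l) = (j - i) + (n - j - l) by omega]
  simp only [mul_pow, pow_add]
  ring

theorem sum_pow_unique {n : ℕ} {p r : ℕ → ℝ} (h : ∀ x : ℝ, ∑ k ∈ Finset.range (n + 1), p k * x ^ k =
    ∑ k ∈ Finset.range (n + 1), r k * x ^ k) {k : ℕ} (hk : k ≤ n) : p k = r k := by
  have e : (∑ k ∈ Finset.range (n + 1), Polynomial.C (p k) * Polynomial.X ^ k) =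
      ∑ k ∈ Finset.range (n + 1), Polynomial.C (r k) * Polynomial.X ^ k := by
    refine Polynomial.funext fun x => ?_
    simpa [Polynomial.eval_finsetSum] using h x
  have := congrArg (fun P => Polynomial.coeff P k) e
  simpa [Polynomial.finsetSum_coeff, Polynomial.coeff_C_mul, Polynomial.coeff_X_pow,
    Nat.lt_succ_iff, hk] using this

theorem symM_unique {n j k : ℕ} (hj : j ≤ n) (hk : k ≤ n) {a b c d : ℝ} {p : ℕ → ℝ}
    (h : ∀ x : ℝ, (a * x + b) ^ j * (c * x + d) ^ (n - j) =
      ∑ k ∈ Finset.range (n + 1), p k * x ^ k) : symM n a b c d j k = p k := by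
  refine sum_pow_unique (n := n) (fun x => ?_) hk
  rw [← h x]
  have := symM_spec hj a b c d x 1
  simp only [mul_one, one_pow] at this
  exact this.symm

/-- Symmetric powers are multiplicative. -/
theorem symM_mul {n j l : ℕ} (hj : j ≤ n) (hl : l ≤ n) (a b c d a' b' c' d' : ℝ) :
    symM n (a * a' + b * c') (a * b' + b * d') (c * a' + d * c') (c * b' + d * d') j l =
      ∑ k ∈ Finset.range (n + 1), symM n a b c d j k * symM n a' b' c' d' k l := by
  refine symM_unique hj hl (p := fun l => ∑ k ∈ Finset.range (n + 1),
    symM n a b c d j k * symM n a' b' c' d' k l) fun x => ?_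
  have h1 := symM_spec hj a b c d (a' * x + b') (c' * x + d')
  rw [show (a * a' + b * c') * x + (a * b' + b * d') = a * (a' * x + b') + b * (c' * x + d') by ring,
    show (c * a' + d * c') * x + (c * b' + d * d') = c * (a' * x + b') + d * (c' * x + d') by ring,
    h1]
  simp only [Finset.sum_mul]
  rw [Finset.sum_comm]
  refine Finset.sum_congr rfl fun k hk => ?_
  have h2 := symM_spec (Nat.lt_succ_iff.1 (Finset.mem_range.1 hk)) a' b' c' d' x 1
  simp only [mul_one, one_pow] at h2
  rw [h2, Finset.mul_sum]
  exact Finset.sum_congr rfl fun l _ => by ring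

/-- In the basis scaled by square roots of binomial coefficients, transposition commutes with
symmetric powers. -/
theorem symM_transpose {n j k : ℕ} (hj : j ≤ n) (hk : k ≤ n) (a b c d : ℝ) :
    n.choose j * symM n a b c d j k = n.choose k * symM n a c b d k j := by
  have key : ∀ s x : ℝ, ∑ j ∈ Finset.range (n + 1), (∑ k ∈ Finset.range (n + 1),
      n.choose j * symM n a b c d j k * x ^ k) * s ^ j = ∑ j ∈ Finset.range (n + 1),
      (∑ k ∈ Finset.range (n + 1), n.choose k * symM n a c b d k j * x ^ k) * s ^ j := by
    intro s x
    have e1 : (s * (a * x + b) + (c * x + d)) ^ n = ∑ j ∈ Finset.range (n + 1),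
        (∑ k ∈ Finset.range (n + 1), n.choose j * symM n a b c d j k * x ^ k) * s ^ j := by
      rw [add_pow]
      refine Finset.sum_congr rfl fun j hj => ?_
      have h2 := symM_spec (Nat.lt_succ_iff.1 (Finset.mem_range.1 hj)) a b c d x 1
      simp only [mul_one, one_pow] at h2
      simp only [mul_assoc, ← Finset.mul_sum]
      rw [← h2, mul_pow]
      ring
    have e2 : (x * (a * s + c) + (b * s + d)) ^ n = ∑ j ∈ Finset.range (n + 1),
        (∑ k ∈ Finset.range (n + 1), n.choose k * symM n a c b d k j * x ^ k) * s ^ j := by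
      rw [add_pow]
      simp only [Finset.sum_mul]
      rw [Finset.sum_comm]
      refine Finset.sum_congr rfl fun k hk => ?_
      have h2 := symM_spec (Nat.lt_succ_iff.1 (Finset.mem_range.1 hk)) a c b d s 1
      simp only [mul_one, one_pow] at h2
      rw [mul_pow, mul_assoc (x ^ k), h2, Finset.mul_sum, Finset.sum_mul]
      exact Finset.sum_congr rfl fun j _ => by ring
    rw [← e1, ← e2]
    congr 1
    ring
  have h1 : ∀ x : ℝ, ∑ k ∈ Finset.range (n + 1), (n.choose j * symM n a b c d j k) * x ^ k =
      ∑ k ∈ Finset.range (n + 1), (n.choose k * symM n a c b d k j) * x ^ k := fun x =>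
    sum_pow_unique (p := fun j => ∑ k ∈ Finset.range (n + 1), (n.choose j * symM n a b c d j k) * x ^ k)
      (r := fun j => ∑ k ∈ Finset.range (n + 1), (n.choose k * symM n a c b d k j) * x ^ k)
      (fun s => key s x) hj
  exact sum_pow_unique (p := fun k => n.choose j * symM n a b c d j k)
    (r := fun k => n.choose k * symM n a c b d k j) h1 hk

theorem symM_conj {n j k : ℕ} (hj : j ≤ n) (hk : k ≤ n) (a b c d : ℝ) {u : ℝ} (hu : u ≠ 0) :
    symM n a (b * u) (c / u) d j k = u ^ j / u ^ k * symM n a b c d j k := by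
  refine symM_unique hj hk (p := fun k => u ^ j / u ^ k * symM n a b c d j k) fun x => ?_
  have h2 := symM_spec hj a b c d (x / u) 1
  simp only [mul_one, one_pow] at h2
  rw [show a * x + b * u = u * (a * (x / u) + b) by field_simp,
    show c / u * x + d = c * (x / u) + d by field_simp, mul_pow, mul_assoc, h2, Finset.mul_sum]
  refine Finset.sum_congr rfl fun k _ => ?_
  rw [div_pow]
  ring

theorem symM_upper {n j : ℕ} (a b d : ℝ) :
    symM n a b 0 d j j = a ^ j * d ^ (n - j) := by
  rw [symM, Finset.sum_eq_single j, Finset.sum_eq_single 0]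
  · simp
  · intro l _ hl
    rw [if_neg (by omega)]
  · simp
  · intro i hi hij
    refine Finset.sum_eq_zero fun l hl => ?_
    split_ifs with h
    · have : l ≠ 0 := by omega
      simp [this]
    · rfl
  · simp

/-- The trace of the `n`-th symmetric power. -/
noncomputable def symTr (n : ℕ) (a b c d : ℝ) : ℝ := ∑ j ∈ Finset.range (n + 1), symM n a b c d j j

theorem symTr_mul (n : ℕ) (a b c d a' b' c' d' : ℝ) :
    symTr n (a * a' + b * c') (a * b' + b * d') (c * a' + d * c') (c * b' + d * d') =
      ∑ j ∈ Finset.range (n + 1), ∑ k ∈ Finset.range (n + 1),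
        symM n a b c d j k * symM n a' b' c' d' k j := by
  refine Finset.sum_congr rfl fun j hj => ?_
  have hj := Nat.lt_succ_iff.1 (Finset.mem_range.1 hj)
  exact symM_mul hj hj a b c d a' b' c' d'

theorem symTr_comm (n : ℕ) (a b c d a' b' c' d' : ℝ) :
    symTr n (a * a' + b * c') (a * b' + b * d') (c * a' + d * c') (c * b' + d * d') =
    symTr n (a' * a + b' * c) (a' * b + b' * d) (c' * a + d' * c) (c' * b + d' * d) := by
  rw [symTr_mul, symTr_mul, Finset.sum_comm]
  exact Finset.sum_congr rfl fun j _ => Finset.sum_congr rfl fun k _ => by ring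

/-- `chebE n` is `U_n (1 + X / 2)` for the Chebyshev polynomial `U_n` of the second kind. -/
noncomputable def chebE : ℕ → Polynomial ℝ
  | 0 => 1
  | 1 => 2 + Polynomial.X
  | (n + 2) => (2 + Polynomial.X) * chebE (n + 1) - chebE n

theorem chebE_coeff (n : ℕ) : ∀ i, (chebE n).coeff i = ((n + 1 + i).choose (2 * i + 1) : ℝ) := by
  induction n using Nat.twoStepInduction with
  | zero =>
    intro i
    rw [chebE, Polynomial.coeff_one]
    by_cases h : i = 0
    · simp [h]
    · rw [if_neg h, Nat.choose_eq_zero_of_lt (by omega)]; simp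
  | one =>
    intro i
    rw [chebE, Polynomial.coeff_add, Polynomial.coeff_X,
      show (2 : Polynomial ℝ) = Polynomial.C 2 from rfl, Polynomial.coeff_C]
    rcases i with _ | _ | i
    · simp
    · simp
    · rw [Nat.choose_eq_zero_of_lt (by omega)]; simp
  | more n h1 h2 =>
    intro i
    rw [chebE, Polynomial.coeff_sub, add_mul, Polynomial.coeff_add, Polynomial.coeff_ofNat_mul, h1, h2]
    cases i with
    | zero => simp; ring
    | succ i =>
      rw [Polynomial.coeff_X_mul, h2]
      have e1 := Nat.choose_succ_succ' (n + 3 + i) (2 * i + 2)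
      have e2 := Nat.choose_succ_succ' (n + 2 + i) (2 * i + 2)
      have e3 := Nat.choose_succ_succ' (n + 2 + i) (2 * i + 1)
      simp only [show n + 1 + 1 + 1 + (i + 1) = n + 3 + i + 1 by omega,
        show 2 * (i + 1) + 1 = 2 * i + 2 + 1 by omega, show n + 1 + 1 + (i + 1) = n + 2 + i + 1 by omega,
        show n + 1 + 1 + i = n + 2 + i by omega, show n + 1 + (i + 1) = n + 2 + i by omega]
      have f1 : ((n + 3 + i + 1).choose (2 * i + 2 + 1) : ℝ) = (n + 3 + i).choose (2 * i + 2) +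
        (n + 3 + i).choose (2 * i + 2 + 1) := by exact_mod_cast e1
      have f2 : ((n + 2 + i + 1).choose (2 * i + 2 + 1) : ℝ) = (n + 2 + i).choose (2 * i + 2) +
        (n + 2 + i).choose (2 * i + 2 + 1) := by exact_mod_cast e2
      have f3 : ((n + 2 + i + 1).choose (2 * i + 1 + 1) : ℝ) = (n + 2 + i).choose (2 * i + 1) +
        (n + 2 + i).choose (2 * i + 1 + 1) := by exact_mod_cast e3
      have g1 : n + 3 + i = n + 2 + i + 1 := by omega
      rw [g1] at f1
      rw [g1]
      rw [f1, f2] 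
      rw [show 2 * i + 1 + 1 = 2 * i + 2 by omega] at f3
      rw [f3]
      ring

theorem chebE_eval (n : ℕ) (z : ℝ) : (chebE n).eval z =
    ∑ i ∈ Finset.range (n + 1), ((n + 1 + i).choose (2 * i + 1) : ℝ) * z ^ i := by
  rw [Polynomial.eval_eq_sum_range' (n := n + 1)]
  · simp only [chebE_coeff]
  · rw [Nat.lt_succ_iff, Polynomial.natDegree_le_iff_coeff_eq_zero]
    intro m hm
    rw [chebE_coeff, Nat.choose_eq_zero_of_lt (by omega)]; simp

theorem chebE_hom (n : ℕ) {μ ν : ℝ} (h : μ * ν = 1) : (chebE n).eval (μ + ν - 2) =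
    ∑ j ∈ Finset.range (n + 1), μ ^ j * ν ^ (n - j) := by
  have hrec : ∀ n, ∑ j ∈ Finset.range (n + 2), μ ^ j * ν ^ (n + 1 - j) =
      ν * (∑ j ∈ Finset.range (n + 1), μ ^ j * ν ^ (n - j)) + μ ^ (n + 1) := by
    intro n
    rw [Finset.sum_range_succ, Finset.mul_sum, Nat.sub_self, pow_zero, mul_one]
    congr 1
    refine Finset.sum_congr rfl fun j hj => ?_
    have := Finset.mem_range.1 hj
    rw [show n + 1 - j = n - j + 1 by omega, pow_succ]
    ring
  induction n using Nat.twoStepInduction with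
  | zero => simp [chebE]
  | one => simp [chebE, Finset.sum_range_succ]; ring
  | more n h1 h2 =>
    rw [chebE, Polynomial.eval_sub, Polynomial.eval_mul, h1, h2, Polynomial.eval_add,
      Polynomial.eval_X, Polynomial.eval_ofNat, hrec (n + 1), hrec n]
    have : μ ^ (n + 2) = μ * μ ^ (n + 1) := by ring
    rw [show n + 1 + 1 = n + 2 by omega, this]
    linear_combination (∑ j ∈ Finset.range (n + 1), μ ^ j * ν ^ (n - j)) * h

/-- The trace of the symmetric power of a matrix of determinant one is a Chebyshev polynomial of its
trace. -/
theorem symTr_eq (n : ℕ) {a b c d : ℝ} (hb : b ≠ 0) (hdet : a * d - b * c = 1) (ht : 2 ≤ a + d) :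
    symTr n a b c d = (chebE n).eval (a + d - 2) := by
  -- a real root `p` of `b p² + (a - d) p - c` triangularizes the matrix
  set δ := √((a + d) ^ 2 - 4) with hδ
  have hδ2 : δ ^ 2 = (a + d) ^ 2 - 4 := Real.sq_sqrt (by nlinarith)
  set p := (d - a + δ) / (2 * b) with hp
  have hroot : c + d * p - p * (a + b * p) = 0 := by
    have : 2 * b * p = d - a + δ := by rw [hp]; field_simp
    have h4 : 4 * b * (c + d * p - p * (a + b * p)) = 0 := by
      linear_combination (-(2 * b * p) + d - a - δ) * this - hδ2 - 4 * hdet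
    rcases mul_eq_zero.1 h4 with h | h
    · exact absurd h (by positivity)
    · exact h
  clear_value p
  have hc := symTr_comm n 1 0 p 1 a b (c - p * a) (d - p * b)
  have e1 : symTr n (1 * a + 0 * (c - p * a)) (1 * b + 0 * (d - p * b)) (p * a + 1 * (c - p * a))
      (p * b + 1 * (d - p * b)) = symTr n a b c d := by congr 1 <;> ring
  have e2 : symTr n (a * 1 + b * p) (a * 0 + b * 1) ((c - p * a) * 1 + (d - p * b) * p)
      ((c - p * a) * 0 + (d - p * b) * 1) = symTr n (a + b * p) b 0 (d - p * b) := by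
    congr 1 <;> first | ring1 | linear_combination hroot
  rw [e1, e2] at hc
  rw [hc, show a + d - 2 = (a + b * p) + (d - p * b) - 2 by ring, chebE_hom n (by
    linear_combination hdet + b * hroot)]
  exact Finset.sum_congr rfl fun j _ => symM_upper _ _ _

/-! ### Milin's inequality -/

/-- The polynomial `Λ_k` of the Milin weights: the coefficient of `u ^ k` in
`U_n (1 - q + q (u + u⁻¹) / 2)`, as a polynomial in `q`. -/
noncomputable def milinL (n k : ℕ) : Polynomial ℝ :=
  ∑ i ∈ Finset.range (n + 1), Polynomial.monomial i
    (((n + 1 + i).choose (2 * i + 1) : ℝ) * ((-1) ^ (i + k) * (2 * i).choose (i + k)))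

/-- `u ^ n U_n (1 - q + q (u + u⁻¹) / 2)` as a polynomial in `u`. -/
noncomputable def milinGen (n : ℕ) (q : ℝ) : Polynomial ℝ :=
  ∑ i ∈ Finset.range (n + 1), Polynomial.C (((n + 1 + i).choose (2 * i + 1) : ℝ) * q ^ i) *
    (Polynomial.X - Polynomial.C 1) ^ (2 * i) * Polynomial.X ^ (n - i)

theorem milinGen_coeff (n k : ℕ) (q : ℝ) : (milinGen n q).coeff (n + k) = (milinL n k).eval q := by
  rw [milinGen, milinL, Polynomial.finsetSum_coeff, Polynomial.eval_finsetSum]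
  refine Finset.sum_congr rfl fun i hi => ?_
  have hi := Finset.mem_range.1 hi
  rw [show n + k = (i + k) + (n - i) by omega, Polynomial.coeff_mul_X_pow, Polynomial.coeff_C_mul,
    sub_eq_add_neg, ← Polynomial.C_neg, Polynomial.coeff_X_add_C_pow, Polynomial.eval_monomial]
  by_cases h : i + k ≤ 2 * i
  · have : ((-1:ℝ)) ^ (2 * i - (i + k)) = (-1) ^ (i + k) := by
      have e : (2 * i - (i + k)) + 2 * k = i + k := by omega
      calc ((-1:ℝ)) ^ (2 * i - (i + k)) = (-1) ^ (2 * i - (i + k) + 2 * k) := by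
            rw [pow_add, pow_mul]; simp
        _ = _ := by rw [e]
    rw [this]; ring
  · rw [Nat.choose_eq_zero_of_lt (show 2 * i < i + k by omega)]; simp

theorem milinGen_eval (n : ℕ) (q : ℝ) {u : ℝ} (hu : u ≠ 0) :
    (milinGen n q).eval u = u ^ n * (chebE n).eval (q * (u + 1 / u - 2)) := by
  rw [milinGen, chebE_eval, Polynomial.eval_finsetSum, Finset.mul_sum]
  refine Finset.sum_congr rfl fun i hi => ?_
  have hi := Finset.mem_range.1 hi
  simp only [Polynomial.eval_mul, Polynomial.eval_C, Polynomial.eval_pow, Polynomial.eval_sub,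
    Polynomial.eval_X]
  have e1 : u ^ n = u ^ i * u ^ (n - i) := by rw [← pow_add]; congr 1; omega
  have e2 : (u + 1 / u - 2) * u = (u - 1) ^ 2 := by field_simp; ring
  rw [e1, pow_mul, ← e2, mul_pow, mul_pow]
  ring

/-- The generating function is the trace of the symmetric power of a product of a rotation, its
transpose and diagonal matrices, hence has coefficients that are sums of squares. -/
theorem milinL_nonneg_of_lt {n k : ℕ} {q : ℝ} (hq : 0 < q) (hq1 : q < 1) :
    0 ≤ (milinL n k).eval q := by
  set c := √(1 - q) with hc
  set s := √q with hs
  have hc2 : c * c = 1 - q := Real.mul_self_sqrt (by linarith)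
  have hs2 : s * s = q := Real.mul_self_sqrt hq.le
  have hc0 : 0 < c := Real.sqrt_pos.2 (by linarith)
  have hs0 : 0 < s := Real.sqrt_pos.2 hq
  let P : Polynomial ℝ := ∑ j ∈ Finset.range (n + 1), ∑ k ∈ Finset.range (n + 1),
    Polynomial.C ((n.choose j : ℝ) / n.choose k * symM n c s (-s) c j k ^ 2) *
      Polynomial.X ^ (n + j - k)
  have hP : milinGen n q = P := by
    refine Polynomial.eq_of_infinite_eval_eq _ _ ((Set.Ioi_infinite (1:ℝ)).mono fun u hu => ?_)
    have hu1 : 1 < u := hu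
    have hu0 : u ≠ 0 := by positivity
    change (milinGen n q).eval u = P.eval u
    rw [milinGen_eval n q hu0]
    have htr := symTr_eq n (a := c * c + (s * u) * s) (b := c * (-s) + (s * u) * c)
      (c := (-s / u) * c + c * s) (d := (-s / u) * (-s) + c * c) (by
        have : c * -s + s * u * c = c * s * (u - 1) := by ring
        rw [this]
        have : u - 1 ≠ 0 := by linarith
        positivity) (by
        have h1 : c * c + s * s = 1 := by linarith
        field_simp
        linear_combination u * (c * c + s * s + 1) * h1) (by
        have e : c * c + s * u * s + (-s / u * -s + c * c) = 2 + q * ((u - 1) ^ 2 / u) := by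
          field_simp
          linear_combination 2 * u * hc2 + (u ^ 2 + 1) * hs2
        rw [e]
        have : 0 ≤ q * ((u - 1) ^ 2 / u) := by positivity
        linarith)
    have e : c * c + s * u * s + (-s / u * -s + c * c) - 2 = q * (u + 1 / u - 2) := by
      field_simp
      linear_combination 2 * u * hc2 + (u ^ 2 + 1) * hs2
    rw [e] at htr
    rw [← htr, symTr_mul, Polynomial.eval_finsetSum, Finset.mul_sum]
    refine Finset.sum_congr rfl fun j hj => ?_
    rw [Polynomial.eval_finsetSum, Finset.mul_sum]
    refine Finset.sum_congr rfl fun k hk => ?_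
    have hj := Nat.lt_succ_iff.1 (Finset.mem_range.1 hj)
    have hk := Nat.lt_succ_iff.1 (Finset.mem_range.1 hk)
    have ht := symM_transpose hj hk c s (-s) c
    have hck : (n.choose k : ℝ) ≠ 0 := by
      exact_mod_cast (Nat.choose_pos hk).ne'
    have ht' : symM n c (-s) s c k j = n.choose j / n.choose k * symM n c s (-s) c j k := by
      field_simp
      linarith
    have hpow : u ^ (n + j - k) = u ^ n * (u ^ j / u ^ k) := by
      rw [mul_div_assoc', eq_div_iff (by positivity), ← pow_add, ← pow_add]
      congr 1
      omega
    simp only [Polynomial.eval_mul, Polynomial.eval_C, Polynomial.eval_pow, Polynomial.eval_X]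
    rw [symM_conj hj hk _ _ _ _ hu0, ht', hpow]
    ring
  rw [← milinGen_coeff, hP, Polynomial.finsetSum_coeff]
  refine Finset.sum_nonneg fun j _ => ?_
  rw [Polynomial.finsetSum_coeff]
  refine Finset.sum_nonneg fun k _ => ?_
  rw [Polynomial.coeff_C_mul, Polynomial.coeff_X_pow]
  split_ifs <;> positivity

theorem milinL_nonneg {n k : ℕ} {q : ℝ} (hq : 0 < q) (hq1 : q ≤ 1) : 0 ≤ (milinL n k).eval q := by
  have hmem : q ∈ closure (Set.Ioo (0:ℝ) 1) := by
    rw [closure_Ioo (by norm_num)]; exact ⟨hq.le, hq1⟩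
  have hcl : IsClosed {x : ℝ | 0 ≤ (milinL n k).eval x} :=
    isClosed_le continuous_const (milinL n k).continuous
  exact closure_minimal (fun x hx => milinL_nonneg_of_lt hx.1 hx.2) hcl hmem

theorem milinL_one (n k : ℕ) : (milinL n k).eval 1 = if Even (n + k) ∧ k ≤ n then 1 else 0 := by
  have hP : milinGen n 1 = ∑ j ∈ Finset.range (n + 1), Polynomial.X ^ (2 * j) := by
    refine Polynomial.eq_of_infinite_eval_eq _ _ ((Set.Ioi_infinite (1:ℝ)).mono fun u hu => ?_)
    have hu1 : 1 < u := hu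
    have hu0 : u ≠ 0 := by positivity
    change (milinGen n 1).eval u = Polynomial.eval u _
    rw [milinGen_eval n 1 hu0, one_mul, chebE_hom n (by field_simp), Polynomial.eval_finsetSum,
      Finset.mul_sum]
    refine Finset.sum_congr rfl fun j hj => ?_
    have hj := Nat.lt_succ_iff.1 (Finset.mem_range.1 hj)
    rw [Polynomial.eval_pow, Polynomial.eval_X, one_div, inv_pow]
    have : u ^ n = u ^ j * u ^ (n - j) := by rw [← pow_add]; congr 1; omega
    rw [this]
    field_simp
    ring
  rw [← milinGen_coeff, hP, Polynomial.finsetSum_coeff]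
  simp only [Polynomial.coeff_X_pow]
  split_ifs with h
  · obtain ⟨m, hm⟩ := h.1
    rw [Finset.sum_eq_single m]
    · rw [if_pos (by omega)]
    · intro j _ hj
      rw [if_neg (by omega)]
    · intro hm'
      exact absurd (Finset.mem_range.2 (by omega)) hm'
  · refine Finset.sum_eq_zero fun j hj => if_neg fun hjk => h ?_
    have hj := Finset.mem_range.1 hj
    exact ⟨⟨j, by omega⟩, by omega⟩

theorem milinL_coeff (n k i : ℕ) : (milinL n k).coeff i =
    ((n + 1 + i).choose (2 * i + 1) : ℝ) * ((-1) ^ (i + k) * (2 * i).choose (i + k)) := by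
  rw [milinL, Polynomial.finsetSum_coeff]
  simp only [Polynomial.coeff_monomial]
  rw [Finset.sum_ite_eq']
  split_ifs with h
  · rfl
  · rw [Finset.mem_range] at h
    rw [Nat.choose_eq_zero_of_lt (by omega)]; simp

theorem milinL_zero {n k : ℕ} (h : n < k) : milinL n k = 0 := by
  ext i
  rw [milinL_coeff]
  by_cases hi : i ≤ n
  · rw [Nat.choose_eq_zero_of_lt (show 2 * i < i + k by omega)]; simp
  · rw [Nat.choose_eq_zero_of_lt (show n + 1 + i < 2 * i + 1 by omega)]; simp

/-- The differential recursion of de Branges' weights. -/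
theorem milinL_rel (n k : ℕ) :
    Polynomial.X * (Polynomial.derivative (milinL n k) + Polynomial.derivative (milinL n (k + 1))) =
      Polynomial.C (k : ℝ) * milinL n k - Polynomial.C ((k : ℝ) + 1) * milinL n (k + 1) := by
  have hX : ∀ (p : Polynomial ℝ) (i : ℕ),
      (Polynomial.X * Polynomial.derivative p).coeff i = i * p.coeff i := by
    intro p i
    cases i with
    | zero => simp
    | succ i => rw [Polynomial.coeff_X_mul, Polynomial.coeff_derivative]; push_cast; ring
  ext i
  rw [mul_add, Polynomial.coeff_add, Polynomial.coeff_sub, hX, hX, Polynomial.coeff_C_mul,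
    Polynomial.coeff_C_mul, milinL_coeff, milinL_coeff]
  have key : ((i:ℝ) - k) * (2 * i).choose (i + k) = (i + k + 1) * (2 * i).choose (i + (k + 1)) := by
    by_cases h : k ≤ i
    · have e := Nat.choose_succ_right_eq (2 * i) (i + k)
      rw [show 2 * i - (i + k) = i - k by omega] at e
      have e' : ((2 * i).choose (i + k + 1) : ℝ) * (i + k + 1) = (2 * i).choose (i + k) * (i - k) := by
        rw [← Nat.cast_sub h]; exact_mod_cast e
      rw [← add_assoc]
      linarith
    · rw [Nat.choose_eq_zero_of_lt (show 2 * i < i + k by omega),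
        Nat.choose_eq_zero_of_lt (show 2 * i < i + (k + 1) by omega)]
      simp
  have : (-1:ℝ) ^ (i + (k + 1)) = -(-1) ^ (i + k) := by ring
  rw [this]
  linear_combination ((n + 1 + i).choose (2 * i + 1) : ℝ) * (-1) ^ (i + k) * key

/-- The weights `τ` determined by `Λ`. -/
noncomputable def tauOf (N : ℕ) (Λ : ℕ → Polynomial ℝ) (i : ℕ) : Polynomial ℝ :=
  Λ i + 2 * ∑ j ∈ Finset.range N, Λ (i + 1 + j)

/-- It suffices to check the recursion for the `Λ` and their positivity: the weights `τ` are then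
determined by summation from the top. -/
theorem weights_of_lam {N : ℕ} {Λ : ℕ → Polynomial ℝ} (h0 : ∀ i, N ≤ i → Λ i = 0)
    (hrel : ∀ i : ℕ, Polynomial.X * (Polynomial.derivative (Λ i) + Polynomial.derivative (Λ (i + 1)))
      = Polynomial.C ((i : ℝ) + 1) * Λ i - Polynomial.C ((i : ℝ) + 1 + 1) * Λ (i + 1))
    (hpos : ∀ i (q : ℝ), 0 < q → q ≤ 1 → 0 ≤ (Λ i).eval q) : Weights N (tauOf N Λ) Λ := by
  have hstep : ∀ i, tauOf N Λ i = tauOf N Λ (i + 1) + Λ i + Λ (i + 1) := by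
    intro i
    have e1 := Finset.sum_range_succ (fun j => Λ (i + 1 + j)) N
    have e2 := Finset.sum_range_succ' (fun j => Λ (i + 1 + j)) N
    rw [h0 (i + 1 + N) (by omega), add_zero] at e1
    rw [e1] at e2
    rw [tauOf, tauOf, e2, add_zero,
      Finset.sum_congr rfl fun j _ => by rw [show i + 1 + (j + 1) = i + 1 + 1 + j by omega]]
    ring
  have htau : ∀ i, N ≤ i → tauOf N Λ i = 0 := by
    intro i hi
    rw [tauOf, h0 i hi, Finset.sum_eq_zero fun j _ => h0 _ (by omega)]
    simp
  refine ⟨hstep, htau, h0, ?_, hpos⟩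
  intro i
  by_cases hi : N ≤ i
  · rw [htau i hi, h0 i hi]; simp
  · push Not at hi
    induction hm : N - i generalizing i with
    | zero => omega
    | succ m ih =>
      have h3 : Polynomial.X * Polynomial.derivative (tauOf N Λ (i + 1)) =
          Polynomial.C ((i : ℝ) + 1 + 1) * Λ (i + 1) := by
        by_cases h : N ≤ i + 1
        · rw [htau _ h, h0 _ h]; simp
        · have := ih (i + 1) (by omega) (by omega)
          push_cast at this
          exact this
      rw [hstep i, Polynomial.derivative_add, Polynomial.derivative_add]
      linear_combination h3 + hrel i

theorem milin_weights (N : ℕ) : Weights N (tauOf N fun i => milinL N (i + 1))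
    (fun i => milinL N (i + 1)) := by
  refine weights_of_lam (fun i hi => milinL_zero (by omega)) (fun i => ?_)
    (fun i q hq hq1 => milinL_nonneg hq hq1)
  have := milinL_rel N (i + 1)
  push_cast at this ⊢
  exact this

theorem milin_tau_one {N i : ℕ} (hi : i ≤ N) :
    (tauOf N (fun i => milinL N (i + 1)) i).eval 1 = N - i := by
  have W := milin_weights N
  induction hm : N - i generalizing i with
  | zero =>
    have : i = N := by omega
    rw [W.tauN i (by omega), this]; simp
  | succ m ih =>
    rw [W.step i, Polynomial.eval_add, Polynomial.eval_add, ih (by omega) (by omega), milinL_one,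
      milinL_one]
    have hlt : i < N := by omega
    rcases Nat.even_or_odd (N + (i + 1)) with h | h
    · rw [if_pos ⟨h, by omega⟩, if_neg (fun h' => by
        have h1 := h'.1
        rw [show N + (i + 1 + 1) = N + (i + 1) + 1 by omega, Nat.even_add_one] at h1
        exact h1 h)]
      push_cast; ring
    · have hne : i + 1 ≠ N := by
        rintro rfl
        rcases h with ⟨m, hm⟩; omega
      rw [if_neg (fun h' => (Nat.not_even_iff_odd.2 h) h'.1), if_pos ⟨by
        rw [show N + (i + 1 + 1) = N + (i + 1) + 1 by omega]; exact h.add_one, by omega⟩]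
      push_cast; ring

/-- Milin's inequality. -/
theorem milin {f : ℂ → ℂ} {γ : ℕ → ℂ} (hf : InClassS f) (hγ : IsLogCoeffs f γ) (N : ℕ) :
    ∑ i ∈ Finset.range N, ((N:ℝ) - i) * ((i + 1) * ‖γ (i + 1)‖ ^ 2 - 1 / (i + 1)) ≤ 0 := by
  refine le_trans (le_of_eq ?_) (milin_of_weights (milin_weights N) hf hγ)
  refine Finset.sum_congr rfl fun i hi => ?_
  rw [milin_tau_one (Finset.mem_range.1 hi).le]

/-- A solution of the weight system with `N = 3` whose `τ` take the values `9 / 2, 3, 1` at `q = 1`,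
as opposed to the values `3, 2, 1` of Milin's weights. -/
noncomputable def lam3 : ℕ → Polynomial ℝ
  | 0 => Polynomial.C (27 / 2) * Polynomial.X - Polynomial.C 28 * Polynomial.X ^ 2 +
      Polynomial.C 15 * Polynomial.X ^ 3
  | 1 => Polynomial.C 7 * Polynomial.X ^ 2 - Polynomial.C 6 * Polynomial.X ^ 3
  | 2 => Polynomial.X ^ 3
  | _ => 0

theorem lam3_weights : Weights 3 (tauOf 3 lam3) lam3 := by
  refine weights_of_lam ?_ ?_ ?_
  · intro i hi
    obtain ⟨j, rfl⟩ := Nat.exists_eq_add_of_le hi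
    rw [show 3 + j = j + 3 by omega]; rfl
  · intro i
    rcases i with _ | _ | _ | i
    · refine Polynomial.funext fun x => ?_
      simp [lam3]; ring
    · refine Polynomial.funext fun x => ?_
      simp [lam3]; ring
    · refine Polynomial.funext fun x => ?_
      simp [lam3]; ring
    · refine Polynomial.funext fun x => ?_
      simp [lam3]
  · intro i q hq hq1
    rcases i with _ | _ | _ | i
    · simp [lam3]
      nlinarith [mul_nonneg hq.le (sq_nonneg (15 * q - 14))]
    · simp [lam3]
      nlinarith [mul_nonneg (sq_nonneg q) (sub_nonneg.2 hq1)]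
    · simp [lam3]; positivity
    · simp [lam3]

/-- With `a, b, c` the three brackets, equality in `milin` for `N = 2, 3` means `b = -2 a` and `c =
a`, so that this inequality reads `-a / 2 ≤ 0`; as `a ≤ 0`, it forces `a = 0`. -/
theorem milin_three {f : ℂ → ℂ} {γ : ℕ → ℂ} (hf : InClassS f) (hγ : IsLogCoeffs f γ) :
    9 / 2 * (‖γ 1‖ ^ 2 - 1) + 3 * (2 * ‖γ 2‖ ^ 2 - 1 / 2) + (3 * ‖γ 3‖ ^ 2 - 1 / 3) ≤ 0 := by
  refine le_trans (le_of_eq ?_) (milin_of_weights lam3_weights hf hγ)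
  simp [Finset.sum_range_succ, tauOf, lam3]
  ring

/-! ### Areas of images of annuli -/

open MeasureTheory in
/-- Polar coordinates on a rotation invariant set. -/
theorem lintegral_annulus {F : ℂ → ENNReal} (hF : Measurable F) {S : Set ℝ} (hS : MeasurableSet S)
    (hS0 : S ⊆ Set.Ioi 0) :
    ∫⁻ z in (fun z : ℂ => ‖z‖) ⁻¹' S, F z =
      ∫⁻ ρ in S, ENNReal.ofReal ρ * ∫⁻ θ in Set.Ioo (-π) π, F (circleMap 0 ρ θ) := by
  have hm : MeasurableSet ((fun z : ℂ => ‖z‖) ⁻¹' S) := measurable_norm hS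
  rw [← lintegral_indicator hm, ← Complex.lintegral_comp_polarCoord_symm]
  have e1 : ∫⁻ p in polarCoord.target, ENNReal.ofReal p.1 •
      (((fun z : ℂ => ‖z‖) ⁻¹' S).indicator F) (Complex.polarCoord.symm p) =
      ∫⁻ p in polarCoord.target, (S.indicator (fun ρ => ENNReal.ofReal ρ) p.1) *
        F (circleMap 0 p.1 p.2) := by
    refine setLIntegral_congr_fun polarCoord.open_target.measurableSet fun p hp => ?_
    have hp1 : 0 < p.1 := hp.1
    have hc : Complex.polarCoord.symm p = circleMap 0 p.1 p.2 := by
      rw [Complex.polarCoord_symm_apply, circleMap, Complex.exp_mul_I]; simp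
    simp only [smul_eq_mul, hc]
    by_cases h : p.1 ∈ S
    · rw [Set.indicator_of_mem h, Set.indicator_of_mem]
      simpa [abs_of_pos hp1] using h
    · rw [Set.indicator_of_notMem h, Set.indicator_of_notMem]
      · simp
      · simpa [abs_of_pos hp1] using h
  have hcm : Measurable fun p : ℝ × ℝ => circleMap 0 p.1 p.2 := by
    unfold circleMap; fun_prop
  have hmeas : Measurable fun p : ℝ × ℝ => (S.indicator (fun ρ => ENNReal.ofReal ρ) p.1) *
        F (circleMap 0 p.1 p.2) := by
    refine Measurable.mul ?_ (hF.comp hcm)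
    exact (ENNReal.measurable_ofReal.indicator hS).comp measurable_fst
  rw [e1]
  have e2 : polarCoord.target = Set.Ioi (0:ℝ) ×ˢ Set.Ioo (-π) π := rfl
  rw [e2, Measure.volume_eq_prod, ← Measure.prod_restrict, lintegral_prod _ hmeas.aemeasurable]
  have e3 : ∀ ρ : ℝ, ∫⁻ θ in Set.Ioo (-π) π, (S.indicator (fun ρ => ENNReal.ofReal ρ) ρ) *
        F (circleMap 0 ρ θ) = S.indicator (fun ρ => ENNReal.ofReal ρ *
          ∫⁻ θ in Set.Ioo (-π) π, F (circleMap 0 ρ θ)) ρ := by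
    intro ρ
    have hcρ : Measurable fun θ : ℝ => F (circleMap 0 ρ θ) :=
      hF.comp (continuous_circleMap 0 ρ).measurable
    rw [lintegral_const_mul _ hcρ]
    by_cases h : ρ ∈ S <;> simp [h]
  simp only [e3]
  rw [lintegral_indicator hS, Measure.restrict_restrict hS, Set.inter_eq_left.2 hS0]

open MeasureTheory in
theorem lintegral_circle {D : ℂ → ℂ} {ρ : ℝ} (hρ : 0 < ρ) (hD : ContinuousOn D (sphere 0 ρ)) :
    ENNReal.ofReal ρ * ∫⁻ θ in Set.Ioo (-π) π, ENNReal.ofReal (‖D (circleMap 0 ρ θ)‖ ^ 2) =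
      ENNReal.ofReal (2 * π * ρ * circleAverage (fun z => ‖D z‖ ^ 2) 0 ρ) := by
  have hc : Continuous fun θ : ℝ => ‖D (circleMap 0 ρ θ)‖ ^ 2 := by
    refine Continuous.pow (Continuous.norm ?_) 2
    exact hD.comp_continuous (continuous_circleMap 0 ρ) fun θ => circleMap_mem_sphere 0 hρ.le θ
  rw [← ofReal_integral_eq_lintegral_ofReal, ← ENNReal.ofReal_mul hρ.le]
  · congr 1
    rw [circleAverage, ← integral_Ioc_eq_integral_Ioo,
      ← intervalIntegral.integral_of_le (by linarith [Real.pi_pos])]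
    have hper : Function.Periodic (fun θ : ℝ => ‖D (circleMap 0 ρ θ)‖ ^ 2) (2 * π) := fun θ => by
      simp only [periodic_circleMap 0 ρ θ]
    have := hper.intervalIntegral_add_eq (-π) 0
    rw [show -π + 2 * π = π by ring, zero_add] at this
    rw [this, smul_eq_mul]
    field_simp
  · exact (hc.integrableOn_Icc (a := -π) (b := π)).mono_set Set.Ioo_subset_Icc_self
  · exact Filter.Eventually.of_forall fun θ => by positivity

/-- Multiplication by `c` has real determinant `|c|²`. -/
theorem det_smulRight (c : ℂ) :
    ((ContinuousLinearMap.toSpanSingleton ℂ c).restrictScalars ℝ).det = ‖c‖ ^ 2 := by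
  have h : (((ContinuousLinearMap.toSpanSingleton ℂ c).restrictScalars ℝ : ℂ →L[ℝ] ℂ) : ℂ →ₗ[ℝ] ℂ) =
      (ContinuousLinearMap.toSpanSingleton ℂ c : ℂ →ₗ[ℂ] ℂ).restrictScalars ℝ := rfl
  rw [ContinuousLinearMap.det, h, LinearMap.det_restrictScalars, Algebra.norm_complex_eq]
  simp [Complex.normSq_eq_norm_sq]

open MeasureTheory in
/-- The area of the image of a round annulus under an injective holomorphic map. -/
theorem area_eq {G : ℂ → ℂ} {S : Set ℝ} (hS : MeasurableSet S) (hS0 : S ⊆ Set.Ioi 0)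
    (hG : ∀ z : ℂ, ‖z‖ ∈ S → DifferentiableAt ℂ G z)
    (hc : ∀ ρ ∈ S, ContinuousOn (deriv G) (sphere 0 ρ))
    (hinj : Set.InjOn G ((fun z : ℂ => ‖z‖) ⁻¹' S)) :
    volume (G '' ((fun z : ℂ => ‖z‖) ⁻¹' S)) =
      ∫⁻ ρ in S, ENNReal.ofReal (2 * π * ρ * circleAverage (fun z => ‖deriv G z‖ ^ 2) 0 ρ) := by
  rw [← lintegral_abs_det_fderiv_eq_addHaar_image volume (measurable_norm hS)
    (fun z hz => ((hG z hz).hasDerivAt.hasFDerivAt.restrictScalars ℝ).hasFDerivWithinAt) hinj]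
  simp only [det_smulRight, abs_pow, abs_norm]
  rw [lintegral_annulus (by fun_prop) hS hS0]
  exact setLIntegral_congr_fun hS fun ρ hρ => lintegral_circle (hS0 hρ) (hc ρ hρ)

open MeasureTheory in
theorem area_le {G : ℂ → ℂ} {S : Set ℝ} (hS : MeasurableSet S) (hS0 : S ⊆ Set.Ioi 0)
    (hG : ∀ z : ℂ, ‖z‖ ∈ S → DifferentiableAt ℂ G z)
    (hc : ∀ ρ ∈ S, ContinuousOn (deriv G) (sphere 0 ρ)) :
    volume (G '' ((fun z : ℂ => ‖z‖) ⁻¹' S)) ≤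
      ∫⁻ ρ in S, ENNReal.ofReal (2 * π * ρ * circleAverage (fun z => ‖deriv G z‖ ^ 2) 0 ρ) := by
  refine (addHaar_image_le_lintegral_abs_det_fderiv volume (measurable_norm hS)
    (fun z hz => ((hG z hz).hasDerivAt.hasFDerivAt.restrictScalars ℝ).hasFDerivWithinAt)).trans ?_
  simp only [det_smulRight, abs_pow, abs_norm]
  rw [lintegral_annulus (by fun_prop) hS hS0]
  exact (setLIntegral_congr_fun hS fun ρ hρ => lintegral_circle (hS0 hρ) (hc ρ hρ)).le

/-! ### Bessel's inequality on circles -/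

theorem cf_pow (k : ℕ) : ∀ j, cf (fun z => z ^ k) j = if j = k then 1 else 0 := by
  induction k with
  | zero =>
    intro j
    rcases j with _ | j
    · simp [cf]
    · simp [cf, iteratedDeriv_succ']
  | succ k ih =>
    intro j
    have h : (fun z : ℂ => z ^ (k + 1)) = fun z => z * z ^ k := by ext z; ring
    rw [h]
    rcases j with _ | j
    · simp [cf]
    · rw [cf_id_mul (by fun_prop), ih]; simp

theorem cf_const_mul (v : ℂ → ℂ) (c : ℂ) (k : ℕ) :
    cf (fun z => c * v z) k = c * cf v k := by
  rw [cf, iteratedDeriv_const_mul_field c v, cf, mul_div_assoc]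

/-- Splitting off one monomial orthogonally. -/
theorem bessel_step {Q : ℂ → ℂ} (hQ : DifferentiableOn ℂ Q (ball 0 1)) {ρ : ℝ} (hρ : 0 < ρ)
    (hρ1 : ρ < 1) (k : ℕ) :
    circleAverage (fun z => ‖Q z‖ ^ 2) 0 ρ = ‖cf Q k‖ ^ 2 * ρ ^ (2 * k) +
      circleAverage (fun z => ‖Q z - cf Q k * z ^ k‖ ^ 2) 0 ρ := by
  set c := cf Q k with hc
  clear_value c
  have hne : ∀ z ∈ sphere (0:ℂ) ρ, z ≠ 0 := by
    rintro z hz rfl; simp at hz; linarith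
  have hQc : ContinuousOn Q (sphere 0 ρ) := hQ.continuousOn.mono fun z hz => by
    rw [mem_sphere_zero_iff_norm] at hz
    rw [mem_ball_zero_iff]; linarith
  have i1 : CircleIntegrable (fun z => ‖Q z - c * z ^ k‖ ^ 2) 0 ρ :=
    ContinuousOn.circleIntegrable hρ.le (by fun_prop)
  have i2 : CircleIntegrable (fun z => (2 * (starRingEnd ℂ c * ρ ^ (2 * k))) * (Q z / z ^ k)) 0 ρ :=
    ContinuousOn.circleIntegrable hρ.le (by
      refine continuousOn_const.mul (hQc.div (by fun_prop) fun z hz => pow_ne_zero _ (hne z hz)))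
  have i2' : CircleIntegrable (fun z => ((2 * (starRingEnd ℂ c * ρ ^ (2 * k))) * (Q z / z ^ k)).re)
      0 ρ := ContinuousOn.circleIntegrable hρ.le (by
        refine Complex.continuous_re.comp_continuousOn (continuousOn_const.mul
          (hQc.div (by fun_prop) fun z hz => pow_ne_zero _ (hne z hz))))
  have a2 : circleAverage (fun z => ((2 * (starRingEnd ℂ c * ρ ^ (2 * k))) * (Q z / z ^ k)).re) 0 ρ
      = 2 * ‖c‖ ^ 2 * ρ ^ (2 * k) := by
    have := Complex.reCLM.circleAverage_comp_comm i2
    have e : circleAverage (fun z => (2 * (starRingEnd ℂ c * ρ ^ (2 * k))) * (Q z / z ^ k)) 0 ρ =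
        (2 * (starRingEnd ℂ c * ρ ^ (2 * k))) * c := by
      have h := circleAverage_fun_smul (𝕜 := ℂ) (a := 2 * (starRingEnd ℂ c * ρ ^ (2 * k)))
        (f := fun z => Q z / z ^ k) (c := 0) (R := ρ)
      simp only [smul_eq_mul] at h
      rw [h, cf_average hQ hρ hρ1, ← hc]
    rw [e] at this
    refine Eq.trans this ?_
    have e2 : (2 * (starRingEnd ℂ c * ρ ^ (2 * k))) * c = ((2 * ‖c‖ ^ 2 * ρ ^ (2 * k) : ℝ) : ℂ) := by
      push_cast
      rw [← Complex.conj_mul']; ring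
    rw [e2]; exact Complex.ofReal_re _
  have key : circleAverage (fun z => ‖Q z‖ ^ 2) 0 ρ = circleAverage
      (fun z => (‖Q z - c * z ^ k‖ ^ 2 + ((2 * (starRingEnd ℂ c * ρ ^ (2 * k))) * (Q z / z ^ k)).re) -
        ‖c‖ ^ 2 * ρ ^ (2 * k)) 0 ρ := by
    refine circleAverage_congr_sphere fun z hz => ?_
    rw [abs_of_pos hρ] at hz
    have hz0 := hne z hz
    have hzn : ‖z‖ = ρ := by simpa using hz
    have e1 : (starRingEnd ℂ (c * z ^ k)) * Q z = starRingEnd ℂ c * ρ ^ (2 * k) * (Q z / z ^ k) := by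
      have : (ρ:ℂ) ^ (2 * k) = (starRingEnd ℂ z) ^ k * z ^ k := by
        rw [← mul_pow, Complex.conj_mul', hzn, pow_mul]
      rw [this, map_mul, map_pow]
      field_simp
    have e2 : ‖c * z ^ k‖ ^ 2 = ‖c‖ ^ 2 * ρ ^ (2 * k) := by
      rw [norm_mul, norm_pow, hzn]; ring
    have e3 : ‖Q z - c * z ^ k‖ ^ 2 = ‖Q z‖ ^ 2 + ‖c * z ^ k‖ ^ 2 -
        2 * ((starRingEnd ℂ (c * z ^ k)) * Q z).re := by
      rw [← Complex.normSq_eq_norm_sq, Complex.normSq_sub, Complex.normSq_eq_norm_sq,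
        Complex.normSq_eq_norm_sq, mul_comm (Q z)]
    have e4 : ((2 * (starRingEnd ℂ c * ρ ^ (2 * k))) * (Q z / z ^ k)).re =
        2 * ((starRingEnd ℂ (c * z ^ k)) * Q z).re := by
      rw [e1, mul_assoc, ← Complex.ofReal_ofNat, Complex.re_ofReal_mul]
    simp only [e3, e4, e2]; ring
  rw [key, circleAverage_fun_sub (i1.fun_add i2') (circleIntegrable_const _ _ _),
    circleAverage_fun_add i1 i2', a2, circleAverage_const]
  ring

theorem bessel (s : Finset ℕ) {ρ : ℝ} (hρ : 0 < ρ) (hρ1 : ρ < 1) :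
    ∀ {Q : ℂ → ℂ}, DifferentiableOn ℂ Q (ball 0 1) →
    ∑ k ∈ s, ‖cf Q k‖ ^ 2 * ρ ^ (2 * k) ≤ circleAverage (fun z => ‖Q z‖ ^ 2) 0 ρ := by
  induction s using Finset.induction_on with
  | empty =>
    intro Q hQ
    simp only [Finset.sum_empty]
    refine circleAverage_nonneg_of_nonneg fun z _ => by positivity
  | insert k s hk ih =>
    intro Q hQ
    have hp : DifferentiableOn ℂ (fun z => cf Q k * z ^ k) (ball 0 1) := by fun_prop
    rw [Finset.sum_insert hk, bessel_step hQ hρ hρ1 k]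
    refine add_le_add le_rfl (le_trans (le_of_eq ?_) (ih (hQ.fun_sub hp)))
    refine Finset.sum_congr rfl fun j hj => ?_
    rw [cf_sub hQ hp, cf_const_mul, cf_pow, if_neg (by rintro rfl; exact hk hj)]
    simp

/-! ### The Joukowski map as a comparison function -/

/-- The two roots of `b u² - w u + 1` have product of modulus one, so one of them is in the closed
disc. -/
theorem joukowski_root {b : ℂ} (hb : ‖b‖ = 1) (w : ℂ) :
    ∃ u : ℂ, u ≠ 0 ∧ ‖u‖ ≤ 1 ∧ w = 1 / u + b * u := by
  have hb0 : b ≠ 0 := by rintro rfl; simp at hb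
  obtain ⟨s, hs⟩ := IsAlgClosed.exists_pow_nat_eq (w ^ 2 - 4 * b) (n := 2) (by norm_num)
  have key : ∀ u : ℂ, b * u ^ 2 - w * u + 1 = 0 → ‖u‖ ≤ 1 →
      ∃ u : ℂ, u ≠ 0 ∧ ‖u‖ ≤ 1 ∧ w = 1 / u + b * u := by
    intro u hu hu1
    have hu0 : u ≠ 0 := by rintro rfl; simp at hu
    refine ⟨u, hu0, hu1, ?_⟩
    field_simp
    linear_combination -hu
  set p := (w + s) / (2 * b) with hp
  set q := (w - s) / (2 * b) with hq
  have hpr : b * p ^ 2 - w * p + 1 = 0 := by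
    rw [hp]; field_simp; linear_combination hs
  have hqr : b * q ^ 2 - w * q + 1 = 0 := by
    rw [hq]; field_simp; linear_combination hs
  have hpq : b * (p * q) = 1 := by
    rw [hp, hq]; field_simp; linear_combination -hs
  have hn : ‖p‖ * ‖q‖ = 1 := by
    have := congrArg norm hpq
    rwa [norm_mul, hb, one_mul, norm_mul, norm_one] at this
  by_cases h : ‖p‖ ≤ 1
  · exact key p hpr h
  · refine key q hqr ?_
    push Not at h
    nlinarith [norm_nonneg q]

/-- The values of `H z / z` off the disc of radius `ε` are attained by `1 / u + b u` essentially
off that disc, because the two functions differ by `O(z³)`. -/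
theorem exterior_image {H : ℂ → ℂ} {b : ℂ} {K : ℝ} (hH : DifferentiableOn ℂ H (ball 0 1))
    (hne : ∀ z ∈ ball (0:ℂ) 1, H z ≠ 0)
    (hinj : Set.InjOn (fun z => z / H z) (ball 0 1)) (hb : ‖b‖ = 1) (h0 : H 0 = 1)
    (hK : ∀ z : ℂ, ‖z‖ ≤ 1 / 2 → ‖H z - 1 - b * z ^ 2‖ ≤ K * ‖z‖ ^ 4) :
    ∃ C ε₀ : ℝ, 0 < ε₀ ∧ 0 < C ∧ ∀ ε, 0 < ε → ε ≤ ε₀ → ε ≤ 1 / 2 ∧ C * ε ^ 4 ≤ 1 / 2 ∧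
      ∀ z : ℂ, ε < ‖z‖ → ‖z‖ < 1 →
        ∃ u : ℂ, ε - C * ε ^ 5 ≤ ‖u‖ ∧ ‖u‖ ≤ 1 ∧ 1 / u + b * u = H z / z := by
  have hK0 : 0 ≤ K := by
    have := (norm_nonneg _).trans (hK (1 / 2) (by norm_num))
    have h2 : (0:ℝ) < ‖(1 / 2 : ℂ)‖ ^ 4 := by norm_num
    exact nonneg_of_mul_nonneg_left this h2
  set g : ℂ → ℂ := fun z => z / H z with hg
  have hgd : DifferentiableOn ℂ g (ball 0 1) := differentiableOn_id.fun_div hH hne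
  have hsd : HasStrictDerivAt g 1 0 := by
    have hda : HasDerivAt g 1 0 := by
      have h1 := (hasDerivAt_id (0:ℂ)).fun_div
        (hH.differentiableAt (isOpen_ball.mem_nhds zero_mem_disc)).hasDerivAt (hne 0 zero_mem_disc)
      refine h1.congr_deriv ?_
      simp [h0]
    have := (hgd.analyticAt (isOpen_ball.mem_nhds zero_mem_disc)).hasStrictDerivAt
    rwa [hda.deriv] at this
  have hlin : ∃ r₀ > 0, ∀ x ∈ ball (0:ℂ) r₀, ∀ y ∈ ball (0:ℂ) r₀,
      ‖g x - g y - (x - y)‖ ≤ 1 / 2 * ‖x - y‖ := by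
    have h1 := hsd.hasStrictFDerivAt.isLittleO.def (c := 1 / 2) (by norm_num)
    rw [nhds_prod_eq] at h1
    obtain ⟨t, ht, h⟩ := Filter.mem_prod_self_iff.1 h1
    obtain ⟨r₀, hr₀, hr⟩ := Metric.mem_nhds_iff.1 ht
    refine ⟨r₀, hr₀, fun x hx y hy => ?_⟩
    have := h (Set.mk_mem_prod (hr hx) (hr hy))
    simpa using this
  obtain ⟨r₀, hr₀, hlin⟩ := hlin
  set C := 16 * K + 1 with hC
  have hC0 : 0 < C := by positivity
  have hC1 : 1 ≤ C := by linarith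
  refine ⟨C, min r₀ (1 / (2 * C)), by positivity, hC0, fun ε hε hε0 => ?_⟩
  have hεr : ε ≤ r₀ := hε0.trans (min_le_left _ _)
  have hεC : C * ε ≤ 1 / 2 := by
    have := hε0.trans (min_le_right _ _)
    rw [le_div_iff₀ (by positivity)] at this
    linarith
  have hε2 : ε ≤ 1 / 2 := by nlinarith
  have hεp : ε ^ 4 ≤ ε := by
    have := pow_le_pow_of_le_one hε.le (by linarith : ε ≤ 1) (show 1 ≤ 4 by norm_num)
    simpa using this
  have hC4 : C * ε ^ 4 ≤ 1 / 2 := by nlinarith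
  refine ⟨hε2, hC4, fun z hz hz1 => ?_⟩
  obtain ⟨u, hu0, hu1, hw⟩ := joukowski_root hb (H z / z)
  refine ⟨u, ?_, hu1, hw.symm⟩
  by_contra hlt
  push Not at hlt
  set δ := C * ε ^ 5 with hδ
  have hδ0 : 0 < δ := by positivity
  have huε : ‖u‖ < ε := by linarith
  have hsub : ∀ x ∈ closedBall u δ, ‖x‖ < ε := by
    intro x hx
    rw [mem_closedBall, dist_eq_norm] at hx
    have := norm_add_le u (x - u)
    rw [add_sub_cancel] at this
    linarith
  have hmem : ∀ x : ℂ, ‖x‖ < ε → x ∈ ball (0:ℂ) 1 := fun x hx => by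
    rw [mem_ball_zero_iff]; linarith
  have hmem' : ∀ x : ℂ, ‖x‖ < ε → x ∈ ball (0:ℂ) r₀ := fun x hx => by
    rw [mem_ball_zero_iff]; linarith
  have hu_b : u ∈ ball (0:ℂ) 1 := hmem u huε
  have hz_b : z ∈ ball (0:ℂ) 1 := by simpa using hz1
  have hz0 : z ≠ 0 := by rintro rfl; simp at hz; linarith
  have hcover := DiffContOnCl.ball_subset_image_closedBall (f := g) (z₀ := u) (r := δ) (ε := δ / 2)
    (by
      refine DifferentiableOn.diffContOnCl ?_
      rw [closure_ball u hδ0.ne']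
      exact hgd.mono fun x hx => hmem x (hsub x hx)) hδ0
    (by
      intro x hx
      have h1 := hlin x (hmem' x (hsub x (sphere_subset_closedBall hx))) u (hmem' u huε)
      have h2 : ‖x - u‖ = δ := by rwa [mem_sphere, dist_eq_norm] at hx
      have h3 := norm_sub_norm_le (x - u) (-(g x - g u - (x - u)))
      rw [norm_neg, show x - u - -(g x - g u - (x - u)) = g x - g u by ring] at h3
      linarith)
    (by
      have h1 : ∀ᶠ x in nhdsWithin u {u}ᶜ, g x ≠ g u := by
        filter_upwards [self_mem_nhdsWithin, mem_nhdsWithin_of_mem_nhds (isOpen_ball.mem_nhds hu_b)]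
          with x hx hxb h
        exact hx (hinj hxb hu_b h)
      exact h1.frequently.filter_mono nhdsWithin_le_nhds)
  -- the value `z / H z` lies within `δ / 4` of `g u`
  have hq : ‖b * u ^ 2‖ ≤ 1 / 4 := by
    rw [norm_mul, hb, one_mul, norm_pow]; nlinarith [norm_nonneg u]
  have hqq : 1 / 2 ≤ ‖1 + b * u ^ 2‖ := by
    have := norm_sub_norm_le (1:ℂ) (-(b * u ^ 2))
    rw [norm_neg, sub_neg_eq_add, norm_one] at this
    linarith
  have hHu := hK u (by linarith)
  have hu4 : ‖u‖ ^ 4 ≤ ε ^ 4 := pow_le_pow_left₀ (norm_nonneg _) huε.le 4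
  have hu5 : ‖u‖ ^ 5 ≤ ε ^ 5 := pow_le_pow_left₀ (norm_nonneg _) huε.le 5
  have hHn : 1 / 2 ≤ ‖H u‖ := by
    have h1 := norm_sub_norm_le (1 + b * u ^ 2) (-(H u - 1 - b * u ^ 2))
    rw [norm_neg, show (1:ℂ) + b * u ^ 2 - -(H u - 1 - b * u ^ 2) = H u by ring] at h1
    have h2 := norm_sub_norm_le (1:ℂ) (-(b * u ^ 2))
    rw [norm_neg, sub_neg_eq_add, norm_one] at h2
    have h3 : K * ‖u‖ ^ 4 ≤ K * ε ^ 4 := mul_le_mul_of_nonneg_left hu4 hK0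
    have h4 : 16 * (K * ε ^ 4) ≤ C * ε ^ 4 := by rw [hC]; nlinarith [pow_pos hε 4]
    linarith
  have hq0 : 1 + b * u ^ 2 ≠ 0 := norm_pos_iff.1 (by linarith)
  have hHu0 : H u ≠ 0 := norm_pos_iff.1 (by linarith)
  have hHz0 := hne z hz_b
  have hgz : g z = u / (1 + b * u ^ 2) := by
    have : H z = z * (1 / u + b * u) := by rw [← hw]; field_simp
    have h2 : 1 / u + b * u = (1 + b * u ^ 2) / u := by field_simp
    simp only [hg]
    rw [this, h2]
    field_simp
  have hclose : g z ∈ ball (g u) (δ / 2 / 2) := by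
    rw [mem_ball, dist_eq_norm, hgz]
    have e : u / (1 + b * u ^ 2) - g u = u * (H u - 1 - b * u ^ 2) / ((1 + b * u ^ 2) * H u) := by
      simp only [hg]
      rw [div_sub_div _ _ hq0 hHu0]
      congr 1; ring
    rw [e, norm_div, norm_mul, norm_mul]
    have h1 : 1 / 4 ≤ ‖1 + b * u ^ 2‖ * ‖H u‖ := by nlinarith
    rw [div_lt_iff₀ (by linarith)]
    have h2 : ‖u‖ * ‖H u - 1 - b * u ^ 2‖ ≤ K * ε ^ 5 := by
      calc ‖u‖ * ‖H u - 1 - b * u ^ 2‖ ≤ ‖u‖ * (K * ‖u‖ ^ 4) :=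
            mul_le_mul_of_nonneg_left hHu (norm_nonneg _)
        _ = K * ‖u‖ ^ 5 := by ring
        _ ≤ K * ε ^ 5 := mul_le_mul_of_nonneg_left hu5 hK0
    have h3 : 16 * (K * ε ^ 5) < δ := by rw [hδ, hC]; nlinarith [pow_pos hε 5]
    nlinarith
  obtain ⟨x, hx, hxz⟩ := hcover hclose
  have hxε := hsub x hx
  have := hinj (hmem x hxε) hz_b hxz
  rw [this] at hxε
  linarith

/-! ### The equality case of the area theorem -/

theorem average_div_sq {D Q : ℂ → ℂ} {ρ : ℝ} (hρ : 0 < ρ)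
    (h : ∀ z : ℂ, ‖z‖ = ρ → D z = Q z / z ^ 2) :
    circleAverage (fun z => ‖D z‖ ^ 2) 0 ρ = (ρ ^ 4)⁻¹ * circleAverage (fun z => ‖Q z‖ ^ 2) 0 ρ := by
  have h1 := circleAverage_fun_smul (𝕜 := ℝ) (a := (ρ ^ 4)⁻¹)
        (f := fun z => ‖Q z‖ ^ 2) (c := 0) (R := ρ)
  simp only [smul_eq_mul] at h1
  rw [← h1]
  refine circleAverage_congr_sphere fun z hz => ?_
  rw [abs_of_pos hρ, mem_sphere_zero_iff_norm] at hz
  simp only [h z hz, norm_div, norm_pow, hz]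
  field_simp

theorem average_joukowski {b : ℂ} (hb : ‖b‖ = 1) {ρ : ℝ} (hρ : 0 < ρ) (hρ1 : ρ < 1) :
    circleAverage (fun z => ‖-1 + b * z ^ 2‖ ^ 2) 0 ρ = 1 + ρ ^ 4 := by
  rw [bessel_step (Q := fun z => -1 + b * z ^ 2) (by fun_prop) hρ hρ1 0, cf_zero]
  have : circleAverage (fun z : ℂ => ‖-1 + b * z ^ 2 - (-1 + b * 0 ^ 2) * z ^ 0‖ ^ 2) 0 ρ =
      circleAverage (fun _ : ℂ => ρ ^ 4) 0 ρ := by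
    refine circleAverage_congr_sphere fun z hz => ?_
    rw [abs_of_pos hρ, mem_sphere_zero_iff_norm] at hz
    have : -1 + b * z ^ 2 - (-1 + b * 0 ^ 2) * z ^ 0 = b * z ^ 2 := by ring
    simp only [this, norm_mul, hb, norm_pow, hz]; ring
  rw [this, circleAverage_const]
  simp

open MeasureTheory in
theorem setLIntegral_ofReal_le {p : ℝ → ℝ} {S : Set ℝ} (hS : MeasurableSet S) {M l : ℝ} (hM : 0 ≤ M)
    (h : ∀ ρ ∈ S, p ρ ≤ M) (hl : volume S = ENNReal.ofReal l) :
    ∫⁻ ρ in S, ENNReal.ofReal (p ρ) ≤ ENNReal.ofReal (M * l) := by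
  calc ∫⁻ ρ in S, ENNReal.ofReal (p ρ) ≤ ∫⁻ _ in S, ENNReal.ofReal M :=
        setLIntegral_mono' hS fun ρ hρ => ENNReal.ofReal_le_ofReal (h ρ hρ)
    _ = ENNReal.ofReal (M * l) := by rw [setLIntegral_const, hl, ENNReal.ofReal_mul hM]

open MeasureTheory in
theorem le_setLIntegral_ofReal {p : ℝ → ℝ} {S : Set ℝ} (hS : MeasurableSet S) {M l : ℝ} (hM : 0 ≤ M)
    (h : ∀ ρ ∈ S, M ≤ p ρ) (hl : volume S = ENNReal.ofReal l) :
    ENNReal.ofReal (M * l) ≤ ∫⁻ ρ in S, ENNReal.ofReal (p ρ) := by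
  calc ∫⁻ ρ in S, ENNReal.ofReal (p ρ) ≥ ∫⁻ _ in S, ENNReal.ofReal M :=
        setLIntegral_mono' hS fun ρ hρ => ENNReal.ofReal_le_ofReal (h ρ hρ)
    _ = ENNReal.ofReal (M * l) := by rw [setLIntegral_const, hl, ENNReal.ofReal_mul hM]

open MeasureTheory in
/-- The equality case of the area theorem: if `H z / z = 1 / z + b z + …` is injective and
`|b| = 1`, there are no further coefficients. -/
theorem area_rigidity {H : ℂ → ℂ} {b : ℂ} {K : ℝ} (hH : DifferentiableOn ℂ H (ball 0 1))
    (hne : ∀ z ∈ ball (0:ℂ) 1, H z ≠ 0)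
    (hinj : Set.InjOn (fun z => z / H z) (ball 0 1)) (hb : ‖b‖ = 1) (h0 : H 0 = 1)
    (h2 : cf H 2 = b)
    (hK : ∀ z : ℂ, ‖z‖ ≤ 1 / 2 → ‖H z - 1 - b * z ^ 2‖ ≤ K * ‖z‖ ^ 4) {m : ℕ} (hm : 3 ≤ m) :
    cf H m = 0 := by
  obtain ⟨C, ε₀, hε₀, hC, hext⟩ := exterior_image hH hne hinj hb h0 hK
  set Q : ℂ → ℂ := fun z => z * deriv H z - H z with hQ
  have hzH : DifferentiableOn ℂ (fun z => z * deriv H z) (ball 0 1) :=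
    differentiableOn_id.fun_mul (hH.deriv isOpen_ball)
  have hQd : DifferentiableOn ℂ Q (ball 0 1) := hzH.fun_sub hH
  have hQc : ∀ j, cf Q j = (j - 1) * cf H j := fun j => by
    rw [hQ, cf_sub hzH hH, cf_euler hH]; ring
  set κ := ‖cf Q m‖ ^ 2 with hκ
  have hκ0 : 0 ≤ κ := by positivity
  set G : ℂ → ℂ := fun z => H z / z with hG
  set E : ℂ → ℂ := fun z => 1 / z + b * z with hE
  have hGd : ∀ z ∈ ball (0:ℂ) 1, z ≠ 0 → HasDerivAt G (Q z / z ^ 2) z := by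
    intro z hz hz0
    have := (hH.differentiableAt (isOpen_ball.mem_nhds hz)).hasDerivAt.fun_div (hasDerivAt_id z) hz0
    refine this.congr_deriv ?_
    simp only [hQ, id]; ring
  have hEd : ∀ z : ℂ, z ≠ 0 → HasDerivAt E ((-1 + b * z ^ 2) / z ^ 2) z := by
    intro z hz0
    have := ((hasDerivAt_const z (1:ℂ)).fun_div (hasDerivAt_id z) hz0).fun_add
      ((hasDerivAt_id z).const_mul b)
    refine this.congr_deriv ?_
    simp only [id]
    field_simp
    ring
  have hball : ∀ z : ℂ, 0 < ‖z‖ → ‖z‖ < 1 → z ∈ ball (0:ℂ) 1 ∧ z ≠ 0 := fun z h h' =>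
    ⟨by simpa using h', norm_pos_iff.1 h⟩
  -- radial densities of the areas
  set p : ℝ → ℝ := fun ρ => 2 * π * ρ * ((ρ ^ 4)⁻¹ * (1 + ρ ^ 4)) with hp
  set e : ℝ → ℝ := fun ρ => 2 * π * ρ * ((ρ ^ 4)⁻¹ * (κ * ρ ^ (2 * m))) with he
  have hpi := Real.pi_pos
  have hp_le : ∀ c ρ : ℝ, 0 < c → c ≤ ρ → ρ ≤ 1 → p ρ ≤ 4 * π / c ^ 3 := by
    intro c ρ hc hcρ hρ
    have hρ0 : 0 < ρ := by linarith
    have h1 : p ρ = 2 * π * (1 + ρ ^ 4) / ρ ^ 3 := by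
      simp only [hp]; field_simp
    rw [h1]
    have h2 : c ^ 3 ≤ ρ ^ 3 := pow_le_pow_left₀ hc.le hcρ 3
    have h3 : ρ ^ 4 ≤ 1 := pow_le_one₀ hρ0.le hρ
    have h4 : (0:ℝ) < c ^ 3 := by positivity
    refine div_le_div₀ (by positivity) ?_ h4 h2
    nlinarith
  have hp0 : ∀ ρ : ℝ, 0 < ρ → 0 ≤ p ρ := fun ρ h => by simp only [hp]; positivity
  have he0 : ∀ ρ : ℝ, 0 < ρ → 0 ≤ e ρ := fun ρ h => by simp only [he]; positivity
  have hpm : Measurable p := by simp only [hp]; fun_prop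
  have main : ∀ ε r : ℝ, 0 < ε → ε ≤ ε₀ → ε ≤ 1 / 4 → 3 / 4 ≤ r → r < 1 →
      2 * π * κ * (1 / 2) ^ (2 * m + 1) * (1 / 4) ≤ 32 * π * C * ε ^ 2 + 32 * π * (1 - r) := by
    intro ε r hε hεε hε4 hr hr1
    obtain ⟨-, hC4, hinc⟩ := hext ε hε hεε
    set ε' := ε - C * ε ^ 5 with hε'
    have hε'2 : ε / 2 ≤ ε' := by
      have : C * ε ^ 5 = (C * ε ^ 4) * ε := by ring
      rw [hε', this]; nlinarith
    have hε'0 : 0 < ε' := by linarith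
    have hε'le : ε' ≤ ε := by
      have : 0 < C * ε ^ 5 := by positivity
      linarith
    have hIoo : Set.Ioo ε r ⊆ Set.Ioi 0 := fun ρ hρ => hε.trans hρ.1
    have hIcc : Set.Icc ε' 1 ⊆ Set.Ioi 0 := fun ρ hρ => hε'0.trans_le hρ.1
    have A1 := area_eq (G := G) (S := Set.Ioo ε r) measurableSet_Ioo hIoo
      (fun z hz => (hGd z (hball z (hε.trans hz.1) (hz.2.trans hr1)).1
        (hball z (hε.trans hz.1) (hz.2.trans hr1)).2).differentiableAt)
      (by
        intro ρ hρ z hz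
        rw [mem_sphere_zero_iff_norm] at hz
        have hρ0 : 0 < ρ := hIoo hρ
        have hb := hball z (by rw [hz]; exact hρ0) (by rw [hz]; exact hρ.2.trans hr1)
        have han : DifferentiableOn ℂ G (ball 0 1 \ {0}) := fun w hw =>
          (hGd w hw.1 hw.2).differentiableAt.differentiableWithinAt
        have hop : IsOpen (ball (0:ℂ) 1 \ {0}) := isOpen_ball.sdiff isClosed_singleton
        exact ((han.deriv hop).differentiableAt (hop.mem_nhds ⟨hb.1, hb.2⟩)).continuousAt.continuousWithinAt)
      (by
        intro x hx y hy hxy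
        have hx' := hball x (hε.trans hx.1) (hx.2.trans hr1)
        have hy' := hball y (hε.trans hy.1) (hy.2.trans hr1)
        refine hinj hx'.1 hy'.1 ?_
        have h3 : (H x / x)⁻¹ = (H y / y)⁻¹ := congrArg _ hxy
        simpa [inv_div] using h3)
    have A2 := area_le (G := E) (S := Set.Icc ε' 1) measurableSet_Icc hIcc
      (fun z hz => (hEd z (norm_pos_iff.1 (hIcc hz))).differentiableAt)
      (by
        intro ρ hρ
        have hρ0 : 0 < ρ := hIcc hρ
        have hz0 : ∀ z ∈ sphere (0:ℂ) ρ, z ≠ 0 := fun z hz => by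
          rintro rfl; simp at hz; linarith
        refine ContinuousOn.congr (f := fun z => (-1 + b * z ^ 2) / z ^ 2) ?_
          fun z hz => (hEd z (hz0 z hz)).deriv
        exact ContinuousOn.div (by fun_prop) (by fun_prop) fun z hz => pow_ne_zero _ (hz0 z hz))
    have hsub : G '' ((fun z : ℂ => ‖z‖) ⁻¹' Set.Ioo ε r) ⊆
        E '' ((fun z : ℂ => ‖z‖) ⁻¹' Set.Icc ε' 1) := by
      rintro _ ⟨z, hz, rfl⟩
      obtain ⟨u, hu1, hu2, hu⟩ := hinc z hz.1 (hz.2.trans hr1)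
      exact ⟨u, ⟨hu1, hu2⟩, hu⟩
    have A3 := (A1.symm.le.trans (measure_mono hsub)).trans A2
    have B1 : ∫⁻ ρ in Set.Ioo ε r, (ENNReal.ofReal (p ρ) + ENNReal.ofReal (e ρ)) ≤
        ∫⁻ ρ in Set.Ioo ε r, ENNReal.ofReal
          (2 * π * ρ * circleAverage (fun z => ‖deriv G z‖ ^ 2) 0 ρ) := by
      refine setLIntegral_mono' measurableSet_Ioo fun ρ hρ => ?_
      have hρ0 : 0 < ρ := hIoo hρ
      have hρ1 : ρ < 1 := hρ.2.trans hr1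
      rw [← ENNReal.ofReal_add (hp0 ρ hρ0) (he0 ρ hρ0)]
      refine ENNReal.ofReal_le_ofReal ?_
      rw [average_div_sq (Q := Q) hρ0 fun z hz => (hGd z (hball z (hz ▸ hρ0) (hz ▸ hρ1)).1
        (hball z (hz ▸ hρ0) (hz ▸ hρ1)).2).deriv]
      have hbes := bessel {0, 2, m} hρ0 hρ1 hQd
      rw [Finset.sum_insert (by simp; omega), Finset.sum_insert (by simp; omega),
        Finset.sum_singleton, hQc 0, hQc 2, h2, cf_zero, h0, ← hκ] at hbes
      simp only [Nat.cast_zero, Nat.cast_ofNat, zero_sub, mul_one, norm_neg, norm_one, mul_zero,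
        pow_zero, one_pow, norm_mul, hb] at hbes
      norm_num at hbes
      have : p ρ + e ρ = 2 * π * ρ * ((ρ ^ 4)⁻¹ * (1 + (ρ ^ 4 + κ * ρ ^ (2 * m)))) := by
        simp only [hp, he]; ring
      rw [this]
      gcongr
    have B2 : ∫⁻ ρ in Set.Icc ε' 1, ENNReal.ofReal
          (2 * π * ρ * circleAverage (fun z => ‖deriv E z‖ ^ 2) 0 ρ) =
        ∫⁻ ρ in Set.Ico ε' 1, ENNReal.ofReal (p ρ) := by
      rw [setLIntegral_congr Ico_ae_eq_Icc.symm]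
      refine setLIntegral_congr_fun measurableSet_Ico fun ρ hρ => ?_
      have hρ0 : 0 < ρ := hε'0.trans_le hρ.1
      rw [average_div_sq (Q := fun z => -1 + b * z ^ 2) hρ0 fun z hz =>
        (hEd z (norm_pos_iff.1 (hz ▸ hρ0))).deriv, average_joukowski hb hρ0 hρ.2]
    have B3 : ∫⁻ ρ in Set.Ico ε' 1, ENNReal.ofReal (p ρ) ≤
        (∫⁻ ρ in Set.Ioo ε r, ENNReal.ofReal (p ρ)) +
          (ENNReal.ofReal (32 * π * C * ε ^ 2) + ENNReal.ofReal (32 * π * (1 - r))) := by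
      have hcov : Set.Ico ε' 1 ⊆ Set.Ioo ε r ∪ (Set.Icc ε' ε ∪ Set.Icc r 1) := by
        intro ρ hρ
        by_cases h3 : ρ ≤ ε
        · exact Or.inr (Or.inl ⟨hρ.1, h3⟩)
        · by_cases h4 : r ≤ ρ
          · exact Or.inr (Or.inr ⟨h4, hρ.2.le⟩)
          · exact Or.inl ⟨by linarith, by linarith⟩
      refine (lintegral_mono_set hcov).trans ((lintegral_union_le _ _ _).trans ?_)
      refine add_le_add le_rfl ((lintegral_union_le _ _ _).trans (add_le_add ?_ ?_))
      · refine (setLIntegral_ofReal_le measurableSet_Icc (M := 4 * π / (ε / 2) ^ 3) (by positivity)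
          (fun ρ hρ => hp_le _ ρ (by linarith) (hε'2.trans hρ.1) (by linarith [hρ.2]))
          Real.volume_Icc).trans (le_of_eq ?_)
        congr 1
        rw [hε']; field_simp; ring
      · refine (setLIntegral_ofReal_le measurableSet_Icc (M := 4 * π / (1 / 2) ^ 3) (by positivity)
          (fun ρ hρ => hp_le _ ρ (by norm_num) (by linarith [hρ.1]) hρ.2)
          Real.volume_Icc).trans (le_of_eq ?_)
        congr 1
        ring
    have hfin : ∫⁻ ρ in Set.Ioo ε r, ENNReal.ofReal (p ρ) ≠ ⊤ :=
      ((setLIntegral_ofReal_le measurableSet_Ioo (M := 4 * π / ε ^ 3) (by positivity)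
          (fun ρ hρ => hp_le _ ρ hε hρ.1.le (by linarith [hρ.2]))
          Real.volume_Ioo).trans_lt ENNReal.ofReal_lt_top).ne
    have hpm' : Measurable fun ρ => ENNReal.ofReal (p ρ) := ENNReal.measurable_ofReal.comp hpm
    rw [lintegral_add_left hpm'] at B1
    have B4 := (B1.trans A3).trans (B2.le.trans B3)
    have B5 := (ENNReal.add_le_add_iff_left hfin).1 B4
    have B6 : ENNReal.ofReal (2 * π * κ * (1 / 2) ^ (2 * m + 1) * (1 / 4)) ≤
        ∫⁻ ρ in Set.Ioo ε r, ENNReal.ofReal (e ρ) := by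
      refine le_trans ?_ (lintegral_mono_set (s := Set.Ioo (1 / 2) (3 / 4))
        (Set.Ioo_subset_Ioo (by linarith) hr))
      refine le_setLIntegral_ofReal measurableSet_Ioo (by positivity) ?_ ?_
      · intro ρ hρ
        have hρ0 : 0 < ρ := by linarith [hρ.1]
        have hρ1 : ρ ≤ 1 := by linarith [hρ.2]
        have h3 : (1 / 2 : ℝ) ^ (2 * m + 1) ≤ ρ ^ (2 * m + 1) :=
          pow_le_pow_left₀ (by norm_num) hρ.1.le _
        have h4 : 1 ≤ (ρ ^ 4)⁻¹ := (one_le_inv₀ (by positivity)).2 (pow_le_one₀ hρ0.le hρ1)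
        have h5 : e ρ = 2 * π * κ * ρ ^ (2 * m + 1) * (ρ ^ 4)⁻¹ := by simp only [he]; ring
        rw [h5]
        calc 2 * π * κ * (1 / 2) ^ (2 * m + 1) ≤ 2 * π * κ * ρ ^ (2 * m + 1) := by gcongr
          _ = 2 * π * κ * ρ ^ (2 * m + 1) * 1 := by ring
          _ ≤ _ := by gcongr
      · rw [Real.volume_Ioo]; norm_num
    have B7 := B6.trans B5
    rw [← ENNReal.ofReal_add (by positivity) (by
      have : 0 ≤ 1 - r := by linarith
      positivity)] at B7
    refine (ENNReal.ofReal_le_ofReal_iff ?_).1 B7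
    have : 0 ≤ 1 - r := by linarith
    positivity
  have hlim : 2 * π * κ * (1 / 2) ^ (2 * m + 1) * (1 / 4) ≤ 0 := by
    have ht : Filter.Tendsto (fun s : ℝ => 32 * π * C * s ^ 2 + 32 * π * (1 - (1 - s)))
        (nhdsWithin 0 (Set.Ioi 0)) (nhds 0) := by
      have : Continuous fun s : ℝ => 32 * π * C * s ^ 2 + 32 * π * (1 - (1 - s)) := by fun_prop
      have := (this.tendsto 0).mono_left (nhdsWithin_le_nhds (s := Set.Ioi (0:ℝ)))
      simpa using this
    refine ge_of_tendsto ht ?_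
    filter_upwards [Ioc_mem_nhdsGT (show (0:ℝ) < min ε₀ (1 / 4) by positivity)] with s hs
    have h1 := hs.2.trans (min_le_left _ _)
    have h2 := hs.2.trans (min_le_right _ _)
    exact main s (1 - s) hs.1 h1 h2 (by linarith) (by linarith [hs.1])
  have hκz : κ = 0 := by
    have : 0 < 2 * π * (1 / 2) ^ (2 * m + 1) * (1 / 4 : ℝ) := by positivity
    nlinarith
  have hQm : cf Q m = 0 := by
    rw [hκ] at hκz
    exact norm_eq_zero.1 (pow_eq_zero_iff (by norm_num) |>.1 hκz)
  rw [hQc] at hQm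
  rcases mul_eq_zero.1 hQm with h | h
  · exfalso
    have : (m:ℂ) = ((1:ℕ):ℂ) := by push_cast; linear_combination h
    have := Nat.cast_injective this
    omega
  · exact h

/-! ### The extremal case `|γ₁| = 1` -/

/-- The extremal case of `|γ₁| ≤ 1`: apply the area theorem to `1 / √(f(z²))`. -/
theorem koebe_of_norm_one {f : ℂ → ℂ} {γ : ℕ → ℂ} (hf : InClassS f) (hγ : IsLogCoeffs f γ)
    (h1 : ‖γ 1‖ = 1) : IsKoebeRotation f := by
  obtain ⟨g, hga, hg0, hge, hgc⟩ := hγ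
  obtain ⟨hfa, hfi, hf0, -⟩ := hf
  have hg := hga.differentiableOn
  have hfe : ∀ z ∈ ball (0:ℂ) 1, f z = z * Complex.exp (g z) := by
    intro z hz
    by_cases h : z = 0
    · rw [h, hf0, zero_mul]
    · rw [hge z hz h]; field_simp
  have hg1 : deriv g 0 = 2 * γ 1 := by
    have := hgc 1 le_rfl
    simpa using this
  set P : ℂ → ℂ := fun z => Complex.exp (-(g z) / 2) with hP
  have hPd : DifferentiableOn ℂ P (ball 0 1) := (hg.fun_neg.div_const 2).cexp
  have hP0 : P 0 = 1 := by simp [hP, hg0]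
  have hP1 : deriv P 0 = -γ 1 := by
    have h := ((((hg.differentiableAt (isOpen_ball.mem_nhds zero_mem_disc)).hasDerivAt).fun_neg.div_const
      2).cexp).deriv
    refine h.trans ?_
    rw [hg0, hg1]; simp; ring
  have hPf : ∀ z ∈ ball (0:ℂ) 1, f z = z / P z ^ 2 := by
    intro z hz
    have : P z ^ 2 = Complex.exp (-(g z)) := by
      simp only [hP]; rw [← Complex.exp_nat_mul]; congr 1; push_cast; ring
    rw [hfe z hz, this, Complex.exp_neg, div_inv_eq_mul]
  have hPne : ∀ z, P z ≠ 0 := fun z => Complex.exp_ne_zero _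
  have hsq : ∀ z ∈ ball (0:ℂ) 1, z ^ 2 ∈ ball (0:ℂ) 1 := fun z hz => by
    rw [mem_ball_zero_iff] at hz ⊢
    rw [norm_pow]; nlinarith [norm_nonneg z]
  set H : ℂ → ℂ := fun z => P (z ^ 2) with hH
  have hHd : DifferentiableOn ℂ H (ball 0 1) :=
    hPd.fun_comp (differentiableOn_id.fun_pow 2) hsq
  have hinj : Set.InjOn (fun z => z / H z) (ball 0 1) := by
    intro x hx y hy hxy
    have hxy' : x / H x = y / H y := hxy
    have h2 : f (x ^ 2) = f (y ^ 2) := by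
      rw [hPf _ (hsq x hx), hPf _ (hsq y hy), ← div_pow, ← div_pow]
      exact congrArg (· ^ 2) hxy'
    have h3 := hfi (hsq x hx) (hsq y hy) h2
    have h4 : H x = H y := by simp only [hH, h3]
    rw [h4] at hxy'
    exact (div_left_inj' (hPne _)).1 hxy'
  obtain ⟨M, hM⟩ := (isCompact_closedBall (0:ℂ) (3 / 4)).exists_bound_of_continuousOn
      (hPd.continuousOn.mono (closedBall_subset_ball (by norm_num)))
  have hK : ∀ z : ℂ, ‖z‖ ≤ 1 / 2 → ‖H z - 1 - -γ 1 * z ^ 2‖ ≤ 64 * M * ‖z‖ ^ 4 := by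
    intro z hz
    have h2 := taylor_two hPd (fun w hw => hM w (mem_closedBall_zero_iff.2 hw)) (z := 0) (w := z ^ 2)
      (by simp) (by rw [norm_pow]; nlinarith [norm_nonneg z])
    rw [hP0, hP1, sub_zero, norm_pow] at h2
    refine h2.trans (le_of_eq ?_)
    ring
  have hHder : ∀ z ∈ ball (0:ℂ) 1, deriv H z = z * (2 * deriv P (z ^ 2)) := by
    intro z hz
    have h2 := (hPd.differentiableAt (isOpen_ball.mem_nhds (hsq z hz))).hasDerivAt.comp z
      (hasDerivAt_pow 2 z)
    refine h2.deriv.trans ?_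
    simp; ring
  have hcomp : DifferentiableOn ℂ (fun z => 2 * deriv P (z ^ 2)) (ball 0 1) :=
    ((hPd.deriv isOpen_ball).fun_comp (differentiableOn_id.fun_pow 2) hsq).const_mul 2
  have hc0 : cf H 0 = 1 := by rw [cf_zero]; simp [hH, hP0]
  have hc1 : cf H 1 = 0 := by
    have := hHder 0 zero_mem_disc
    simp [cf, this]
  have hc2 : cf H 2 = -γ 1 := by
    have h2 := cf_deriv H 1
    rw [cf_congr hHder, cf_id_mul hcomp 0, cf_zero] at h2
    simp only [ne_eq, OfNat.ofNat_ne_zero, not_false_eq_true, zero_pow, hP1] at h2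
    push_cast at h2
    linear_combination -h2 / 2
  have hH2 : ∀ z ∈ ball (0:ℂ) 1, H z = 1 - γ 1 * z ^ 2 := by
    intro z hz
    rw [← Complex.taylorSeries_eq_on_ball' hz hHd, tsum_eq_sum (s := Finset.range 3)]
    · have hcf : ∀ n, ((n.factorial : ℂ))⁻¹ * iteratedDeriv n H 0 = cf H n := fun n => by
        rw [cf, inv_mul_eq_div]
      simp only [hcf, Finset.sum_range_succ, Finset.sum_range_zero, hc0, hc1, hc2]
      ring
    · intro n hn
      have h3 : cf H n = 0 := area_rigidity hHd (fun z _ => hPne _) hinj (by rwa [norm_neg])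
        (by simp [hH, hP0]) hc2 hK (by simpa using hn)
      rw [cf, div_eq_inv_mul] at h3
      rw [h3, zero_mul]
  refine ⟨Complex.arg (γ 1), fun z hz => ?_⟩
  have harg : Complex.exp (Complex.arg (γ 1) * Complex.I) = γ 1 := by
    have := Complex.norm_mul_exp_arg_mul_I (γ 1)
    rwa [h1, Complex.ofReal_one, one_mul] at this
  obtain ⟨s, hs⟩ := IsAlgClosed.exists_pow_nat_eq z (n := 2) (by norm_num)
  have hsb : s ∈ ball (0:ℂ) 1 := by
    rw [mem_ball_zero_iff] at hz ⊢
    rw [← hs, norm_pow] at hz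
    nlinarith [norm_nonneg s]
  have hPz : P z = 1 - γ 1 * z := by
    have := hH2 s hsb
    simpa only [hH, hs] using this
  simp only [harg]
  rw [hPf z hz, hPz]

/-! ### Convex weights and summation by parts -/

/-- The weights `w k = k / ((k + α) (k + β))`, shifted so that `i` stands for `k = i + 1`. -/
noncomputable def wt (α β : ℝ) (i : ℕ) : ℝ := ((i:ℝ) + 1) / (((i:ℝ) + 1 + α) * ((i:ℝ) + 1 + β))

/-- Second differences of the weights. -/
noncomputable def wt2 (α β : ℝ) (n : ℕ) : ℝ := wt α β n - 2 * wt α β (n + 1) + wt α β (n + 2)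

/-- Weights truncated at `N` by subtracting the secant line through `N` and `N + 1`. -/
noncomputable def wtTrunc (α β : ℝ) (N i : ℕ) : ℝ :=
  wt α β i - wt α β N - ((N:ℝ) - i) * (wt α β N - wt α β (N + 1))

theorem wtTrunc_succ (α β : ℝ) (N i : ℕ) :
    wtTrunc α β (N + 1) i = wtTrunc α β N i + ((N:ℝ) + 1 - i) * wt2 α β N := by
  simp only [wtTrunc, wt2]; push_cast; ring

theorem wtTrunc_self (α β : ℝ) (N : ℕ) : wtTrunc α β N N = 0 := by simp [wtTrunc]

/-- Summation by parts, twice. -/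
theorem abel_twice (α β : ℝ) (t : ℕ → ℝ) (N : ℕ) :
    ∑ i ∈ Finset.range N, wtTrunc α β N i * t i =
      ∑ n ∈ Finset.range N, wt2 α β n * ∑ i ∈ Finset.range (n + 1), (((n + 1 : ℕ) : ℝ) - i) * t i := by
  induction N with
  | zero => simp
  | succ N ih =>
    rw [Finset.sum_range_succ (fun n => wt2 α β n * _), ← ih]
    have h : ∑ i ∈ Finset.range N, wtTrunc α β N i * t i =
        ∑ i ∈ Finset.range (N + 1), wtTrunc α β N i * t i := by
      rw [Finset.sum_range_succ, wtTrunc_self]; simp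
    rw [h, Finset.mul_sum, ← Finset.sum_add_distrib]
    refine Finset.sum_congr rfl fun i _ => ?_
    rw [wtTrunc_succ]; push_cast; ring

section
variable {α β : ℝ}

theorem prod_le (hα : α > -1) (hβ : β > -1) (h1 : (α + β + 6) * (α * β) ≤ 6) :
    α * β ≤ 3 / 2 := by
  by_contra h
  push Not at h
  nlinarith

theorem wt_pos (hα : α > -1) (hβ : β > -1) (i : ℕ) : 0 < wt α β i := by
  have hi : (0:ℝ) ≤ i := Nat.cast_nonneg i
  have : 0 < (i:ℝ) + 1 + α := by linarith
  have : 0 < (i:ℝ) + 1 + β := by linarith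
  rw [wt]; positivity

theorem wt_anti (hα : α > -1) (hβ : β > -1) (h : α * β ≤ 3 / 2) (i : ℕ) :
    wt α β (i + 1) ≤ wt α β i := by
  have hi : (0:ℝ) ≤ i := Nat.cast_nonneg i
  have a1 : 0 < (i:ℝ) + 1 + α := by linarith
  have a2 : 0 < (i:ℝ) + 1 + β := by linarith
  have a3 : 0 < (i:ℝ) + 1 + 1 + α := by linarith
  have a4 : 0 < (i:ℝ) + 1 + 1 + β := by linarith
  rw [wt, wt]
  push_cast
  rw [div_le_div_iff₀ (by positivity) (by positivity)]
  nlinarith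

/-- Second difference in closed form; its numerator at `n = 0` is `6 - (α + β + 6) α β`, up to a
factor of two. -/
theorem wt2_eq (hα : α > -1) (hβ : β > -1) (n : ℕ) :
    wt2 α β n = 2 * (((n:ℝ) + 1) * (n + 2) * (n + 3) - α * β * (3 * n + 6 + α + β)) /
      ((((n:ℝ) + 1 + α) * (n + 1 + β)) * ((n + 2 + α) * (n + 2 + β)) *
        ((n + 3 + α) * (n + 3 + β))) := by
  have hi : (0:ℝ) ≤ n := Nat.cast_nonneg n
  have a1 : (n:ℝ) + 1 + α ≠ 0 := by linarith
  have a2 : (n:ℝ) + 1 + β ≠ 0 := by linarith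
  have a3 : (n:ℝ) + 2 + α ≠ 0 := by linarith
  have a4 : (n:ℝ) + 2 + β ≠ 0 := by linarith
  have a5 : (n:ℝ) + 3 + α ≠ 0 := by linarith
  have a6 : (n:ℝ) + 3 + β ≠ 0 := by linarith
  rw [wt2, wt, wt, wt]
  push_cast
  rw [show (n:ℝ) + 1 + 1 = n + 2 by ring, show (n:ℝ) + 2 + 1 = n + 3 by ring]
  field_simp
  ring

theorem wt2_num (hα : α > -1) (hβ : β > -1) (h1 : (α + β + 6) * (α * β) ≤ 6) (n : ℕ) :
    (n:ℝ) ≤ ((n:ℝ) + 1) * (n + 2) * (n + 3) - α * β * (3 * n + 6 + α + β) := by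
  have h := prod_le hα hβ h1
  have hi : (0:ℝ) ≤ n := Nat.cast_nonneg n
  nlinarith [mul_nonneg hi (sub_nonneg.2 h), mul_nonneg hi hi, mul_nonneg hi (mul_nonneg hi hi)]

theorem wt2_nonneg (hα : α > -1) (hβ : β > -1) (h1 : (α + β + 6) * (α * β) ≤ 6) (n : ℕ) :
    0 ≤ wt2 α β n := by
  have hi : (0:ℝ) ≤ n := Nat.cast_nonneg n
  have a1 : 0 < (n:ℝ) + 1 + α := by linarith
  have a2 : 0 < (n:ℝ) + 1 + β := by linarith
  have a3 : 0 < (n:ℝ) + 2 + α := by linarith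
  have a4 : 0 < (n:ℝ) + 2 + β := by linarith
  have a5 : 0 < (n:ℝ) + 3 + α := by linarith
  have a6 : 0 < (n:ℝ) + 3 + β := by linarith
  have := wt2_num hα hβ h1 n
  rw [wt2_eq hα hβ]
  exact div_nonneg (by linarith) (by positivity)

theorem wt2_pos (hα : α > -1) (hβ : β > -1) (h1 : (α + β + 6) * (α * β) ≤ 6) {n : ℕ} (hn : 0 < n) :
    0 < wt2 α β n := by
  have hi : (0:ℝ) < n := Nat.cast_pos.2 hn
  have a1 : 0 < (n:ℝ) + 1 + α := by linarith
  have a2 : 0 < (n:ℝ) + 1 + β := by linarith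
  have a3 : 0 < (n:ℝ) + 2 + α := by linarith
  have a4 : 0 < (n:ℝ) + 2 + β := by linarith
  have a5 : 0 < (n:ℝ) + 3 + α := by linarith
  have a6 : 0 < (n:ℝ) + 3 + β := by linarith
  have := wt2_num hα hβ h1 n
  rw [wt2_eq hα hβ]
  exact div_pos (by linarith) (by positivity)

theorem wtTrunc_nonneg (hα : α > -1) (hβ : β > -1) (h1 : (α + β + 6) * (α * β) ≤ 6) {N i : ℕ}
    (h : i ≤ N) : 0 ≤ wtTrunc α β N i := by
  induction N, h using Nat.le_induction with
  | base => rw [wtTrunc_self]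
  | succ N hN ih =>
    rw [wtTrunc_succ]
    have : (i:ℝ) ≤ N := Nat.cast_le.2 hN
    exact add_nonneg ih (mul_nonneg (by linarith) (wt2_nonneg hα hβ h1 N))

theorem wtTrunc_le (hα : α > -1) (hβ : β > -1) (h1 : (α + β + 6) * (α * β) ≤ 6) {N i : ℕ}
    (h : i ≤ N) : wtTrunc α β N i ≤ wt α β i := by
  have h2 := wt_anti hα hβ (prod_le hα hβ h1) N
  have h3 := wt_pos hα hβ N
  have : (i:ℝ) ≤ N := Nat.cast_le.2 h
  rw [wtTrunc]
  nlinarith [mul_nonneg (sub_nonneg.2 this) (sub_nonneg.2 h2)]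

theorem tendsto_shift_div (c d : ℝ) :
    Filter.Tendsto (fun n : ℕ => ((n:ℝ) + c) / (n + d)) Filter.atTop (nhds 1) := by
  have h1 := tendsto_natCast_div_add_atTop (𝕜 := ℝ) d
  have h2 : Filter.Tendsto (fun n : ℕ => c / ((n:ℝ) + d)) Filter.atTop (nhds 0) :=
    Filter.Tendsto.const_div_atTop (Filter.tendsto_atTop_add_const_right _ d
      tendsto_natCast_atTop_atTop) c
  have h3 := h1.add h2
  rw [add_zero] at h3
  refine h3.congr fun n => ?_
  rw [add_div]

theorem wtTrunc_tendsto (α β : ℝ) (i : ℕ) :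
    Filter.Tendsto (fun N => wtTrunc α β N i) Filter.atTop (nhds (wt α β i)) := by
  have hz : ∀ c : ℝ, Filter.Tendsto (fun n : ℕ => 1 / ((n:ℝ) + c)) Filter.atTop (nhds 0) := fun c =>
    Filter.Tendsto.const_div_atTop (Filter.tendsto_atTop_add_const_right _ c
      tendsto_natCast_atTop_atTop) 1
  have w0 : Filter.Tendsto (fun N => wt α β N) Filter.atTop (nhds 0) := by
    have := (tendsto_shift_div 1 (1 + α)).mul (hz (1 + β))
    rw [mul_zero] at this
    refine this.congr fun N => ?_
    rw [wt, div_mul_div_comm, mul_one]; ring_nf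
  have w1 : Filter.Tendsto (fun N : ℕ => ((N:ℝ) - i) * wt α β N) Filter.atTop (nhds 1) := by
    have := (tendsto_shift_div 1 (1 + α)).mul (tendsto_shift_div (-i) (1 + β))
    rw [mul_one] at this
    refine this.congr fun N => ?_
    rw [wt, div_mul_div_comm, ← mul_div_assoc]; ring_nf
  have w2 : Filter.Tendsto (fun N : ℕ => ((N:ℝ) - i) * wt α β (N + 1)) Filter.atTop (nhds 1) := by
    have := (tendsto_shift_div 2 (2 + α)).mul (tendsto_shift_div (-i) (2 + β))
    rw [mul_one] at this
    refine this.congr fun N => ?_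
    rw [wt, div_mul_div_comm, ← mul_div_assoc]; push_cast; ring_nf
  have := ((tendsto_const_nhds (x := wt α β i)).sub w0).sub (w1.sub w2)
  simp only [sub_zero, sub_self] at this
  refine this.congr fun N => ?_
  rw [wtTrunc]; ring

theorem rhs_summable (hα : α > -1) (hβ : β > -1) :
    Summable fun n : ℕ => 1 / ((((n : ℝ) + 1) + α) * (((n : ℝ) + 1) + β)) := by
  have key : ∀ a : ℝ, a > -1 → ∃ m : ℝ, 0 < m ∧ ∀ x : ℝ, 1 ≤ x → m * x ≤ x + a := by
    intro a ha
    refine ⟨min 1 (1 + a), lt_min one_pos (by linarith), fun x hx => ?_⟩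
    rcases le_total 0 a with h | h
    · have := min_le_left 1 (1 + a)
      nlinarith
    · have := min_le_right 1 (1 + a)
      nlinarith
  obtain ⟨m, hm, hm'⟩ := key α hα
  obtain ⟨k, hk, hk'⟩ := key β hβ
  have hs : Summable fun n : ℕ => (1 / (m * k)) * (1 / ((n + 1 : ℕ) : ℝ) ^ 2) :=
    ((summable_nat_add_iff (f := fun n : ℕ => 1 / (n:ℝ) ^ 2) 1).2
      (Real.summable_one_div_nat_pow.2 (by norm_num))).mul_left _
  refine Summable.of_nonneg_of_le (fun n => ?_) (fun n => ?_) hs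
  · have hi : (0:ℝ) ≤ n := Nat.cast_nonneg n
    have a1 : 0 < (n:ℝ) + 1 + α := by linarith
    have a2 : 0 < (n:ℝ) + 1 + β := by linarith
    positivity
  · have hi : (0:ℝ) ≤ n := Nat.cast_nonneg n
    have a1 := hm' ((n:ℝ) + 1) (by linarith)
    have a2 := hk' ((n:ℝ) + 1) (by linarith)
    have p1 : 0 < m * ((n:ℝ) + 1) := by positivity
    have p2 : 0 < k * ((n:ℝ) + 1) := by positivity
    have e : (1 / (m * k)) * (1 / ((n + 1 : ℕ) : ℝ) ^ 2) =
        1 / ((m * ((n:ℝ) + 1)) * (k * ((n:ℝ) + 1))) := by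
      push_cast; field_simp
    rw [e]
    exact one_div_le_one_div_of_le (by positivity) (mul_le_mul a1 a2 p2.le (p1.le.trans a1))

end

/-- The inequality for partial sums, with the nonpositive terms `(Δ² w)_2 Φ_2 + (Δ² w)_3 Φ_3` of the
summation by parts kept for the discussion of equality. The term of index one is discarded because
`(Δ² w)_1` may vanish. -/
theorem partial_sum_le {α β : ℝ} (hα : α > -1) (hβ : β > -1) (h1 : (α + β + 6) * (α * β) ≤ 6)
    {f : ℂ → ℂ} {γ : ℕ → ℂ} (hf : InClassS f) (hγ : IsLogCoeffs f γ) (K : ℕ) :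
    ∑ n ∈ Finset.range K, (((n : ℝ) + 1) ^ 2 / ((((n : ℝ) + 1) + α) * (((n : ℝ) + 1) + β))) *
      ‖γ (n + 1)‖ ^ 2 ≤ ∑' n : ℕ, 1 / ((((n : ℝ) + 1) + α) * (((n : ℝ) + 1) + β)) +
        (wt2 α β 1 * (2 * (‖γ 1‖ ^ 2 - 1) + (2 * ‖γ 2‖ ^ 2 - 1 / 2)) +
          wt2 α β 2 * (3 * (‖γ 1‖ ^ 2 - 1) + 2 * (2 * ‖γ 2‖ ^ 2 - 1 / 2) +
            (3 * ‖γ 3‖ ^ 2 - 1 / 3))) := by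
  set t : ℕ → ℝ := fun i => (i + 1) * ‖γ (i + 1)‖ ^ 2 - 1 / (i + 1) with ht
  set η := wt2 α β 1 * (2 * (‖γ 1‖ ^ 2 - 1) + (2 * ‖γ 2‖ ^ 2 - 1 / 2)) +
          wt2 α β 2 * (3 * (‖γ 1‖ ^ 2 - 1) + 2 * (2 * ‖γ 2‖ ^ 2 - 1 / 2) +
            (3 * ‖γ 3‖ ^ 2 - 1 / 3)) with hη
  have hsum := rhs_summable hα hβ
  have hN : ∀ N, max K 3 ≤ N → ∑ i ∈ Finset.range K, wtTrunc α β N i * ((i + 1) * ‖γ (i + 1)‖ ^ 2) ≤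
      ∑' n : ℕ, 1 / ((((n : ℝ) + 1) + α) * (((n : ℝ) + 1) + β)) + η := by
    intro N hN
    have hKN : K ≤ N := (le_max_left _ _).trans hN
    have h3N : 3 ≤ N := (le_max_right _ _).trans hN
    have s1 : ∑ i ∈ Finset.range K, wtTrunc α β N i * ((i + 1) * ‖γ (i + 1)‖ ^ 2) ≤
        ∑ i ∈ Finset.range N, wtTrunc α β N i * ((i + 1) * ‖γ (i + 1)‖ ^ 2) := by
      refine Finset.sum_le_sum_of_subset_of_nonneg (Finset.range_subset_range.2 hKN) fun i hi _ => ?_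
      have := wtTrunc_nonneg hα hβ h1 (Finset.mem_range.1 hi).le
      positivity
    have s2 : ∑ i ∈ Finset.range N, wtTrunc α β N i * ((i + 1) * ‖γ (i + 1)‖ ^ 2) =
        ∑ i ∈ Finset.range N, wtTrunc α β N i * t i +
          ∑ i ∈ Finset.range N, wtTrunc α β N i * (1 / ((i:ℝ) + 1)) := by
      rw [← Finset.sum_add_distrib]
      refine Finset.sum_congr rfl fun i _ => ?_
      simp only [ht]; ring
    have s3 : ∑ i ∈ Finset.range N, wtTrunc α β N i * (1 / ((i:ℝ) + 1)) ≤
        ∑' n : ℕ, 1 / ((((n : ℝ) + 1) + α) * (((n : ℝ) + 1) + β)) := by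
      refine le_trans (Finset.sum_le_sum fun i hi => ?_)
        (hsum.sum_le_tsum (Finset.range N) fun i _ => ?_)
      · have h2 := wtTrunc_le hα hβ h1 (Finset.mem_range.1 hi).le
        have hi : (0:ℝ) ≤ i := Nat.cast_nonneg i
        refine (mul_le_mul_of_nonneg_right h2 (by positivity)).trans (le_of_eq ?_)
        rw [wt]; field_simp
      · have hi : (0:ℝ) ≤ i := Nat.cast_nonneg i
        have a1 : 0 < (i:ℝ) + 1 + α := by linarith
        have a2 : 0 < (i:ℝ) + 1 + β := by linarith
        positivity
    have s4 : ∑ i ∈ Finset.range N, wtTrunc α β N i * t i ≤ η := by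
      rw [abel_twice]
      have hneg : ∀ n, wt2 α β n *
          ∑ i ∈ Finset.range (n + 1), (((n + 1 : ℕ) : ℝ) - i) * t i ≤ 0 := fun n =>
        mul_nonpos_of_nonneg_of_nonpos (wt2_nonneg hα hβ h1 n) (milin hf hγ (n + 1))
      obtain ⟨M, rfl⟩ := Nat.exists_eq_add_of_le h3N
      rw [Finset.sum_range_add]
      have e1 : ∑ x ∈ Finset.range M, wt2 α β (3 + x) *
          ∑ i ∈ Finset.range (3 + x + 1), (((3 + x + 1 : ℕ) : ℝ) - i) * t i ≤ 0 :=
        Finset.sum_nonpos fun x _ => hneg (3 + x)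
      have e2 := hneg 0
      have e3 : ∑ x ∈ Finset.range 3, wt2 α β x *
          ∑ i ∈ Finset.range (x + 1), (((x + 1 : ℕ) : ℝ) - i) * t i =
          wt2 α β 0 * ∑ i ∈ Finset.range (0 + 1), (((0 + 1 : ℕ) : ℝ) - i) * t i + η := by
        rw [Finset.sum_range_succ', add_comm]
        congr 1
        simp only [ht, hη, Finset.sum_range_succ, Finset.sum_range_zero]
        push_cast
        norm_num
      linarith
    linarith
  have hlim : Filter.Tendsto (fun N => ∑ i ∈ Finset.range K, wtTrunc α β N i *
      ((i + 1) * ‖γ (i + 1)‖ ^ 2)) Filter.atTop (nhds (∑ i ∈ Finset.range K, wt α β i *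
      ((i + 1) * ‖γ (i + 1)‖ ^ 2))) :=
    tendsto_finsetSum _ fun i _ => (wtTrunc_tendsto α β i).mul_const _
  refine le_trans (le_of_eq ?_) (le_of_tendsto hlim
    (Filter.eventually_atTop.2 ⟨max K 3, hN⟩))
  refine Finset.sum_congr rfl fun i _ => ?_
  rw [wt]; ring

theorem logcoeff_nsq_over_product
    (α β : ℝ) (hα : α > -1) (hβ : β > -1)
    (h1 : (α + β + 6) * (α * β) ≤ 6) (h2 : α * β ≤ 6) (f : ℂ → ℂ) (γ : ℕ → ℂ) (hf : InClassS f) (hγ : IsLogCoeffs f γ) :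
    (∑' n : ℕ, (((n : ℝ) + 1) ^ 2 / ((((n : ℝ) + 1) + α) * (((n : ℝ) + 1) + β))) * ‖γ (n + 1)‖ ^ 2 ≤ ∑' n : ℕ, 1 / ((((n : ℝ) + 1) + α) * (((n : ℝ) + 1) + β))) ∧
    (∑' n : ℕ, (((n : ℝ) + 1) ^ 2 / ((((n : ℝ) + 1) + α) * (((n : ℝ) + 1) + β))) * ‖γ (n + 1)‖ ^ 2 = ∑' n : ℕ, 1 / ((((n : ℝ) + 1) + α) * (((n : ℝ) + 1) + β)) → IsKoebeRotation f) := by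
  have hnn : ∀ n : ℕ, 0 ≤ (((n : ℝ) + 1) ^ 2 / ((((n : ℝ) + 1) + α) * (((n : ℝ) + 1) + β))) *
      ‖γ (n + 1)‖ ^ 2 := fun n => by
    have hi : (0:ℝ) ≤ n := Nat.cast_nonneg n
    have a1 : 0 < (n:ℝ) + 1 + α := by linarith
    have a2 : 0 < (n:ℝ) + 1 + β := by linarith
    positivity
  have hle := Real.tsum_le_of_sum_range_le hnn (partial_sum_le hα hβ h1 hf hγ)
  have m1 := milin hf hγ 1
  have m2 := milin hf hγ 2
  have m3 := milin hf hγ 3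
  have m4 := milin_three hf hγ
  simp only [Finset.sum_range_succ, Finset.sum_range_zero] at m1 m2 m3
  norm_num at m1 m2 m3
  have d1 := wt2_pos hα hβ h1 (n := 1) (by norm_num)
  have d2 := wt2_pos hα hβ h1 (n := 2) (by norm_num)
  have p1 : wt2 α β 1 * (2 * (‖γ 1‖ ^ 2 - 1) + (2 * ‖γ 2‖ ^ 2 - 1 / 2)) ≤ 0 :=
    mul_nonpos_of_nonneg_of_nonpos d1.le (by linarith)
  have p2 : wt2 α β 2 * (3 * (‖γ 1‖ ^ 2 - 1) + 2 * (2 * ‖γ 2‖ ^ 2 - 1 / 2) +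
      (3 * ‖γ 3‖ ^ 2 - 1 / 3)) ≤ 0 := mul_nonpos_of_nonneg_of_nonpos d2.le (by linarith)
  refine ⟨by linarith, fun heq => koebe_of_norm_one hf hγ ?_⟩
  have q1 : 2 * (‖γ 1‖ ^ 2 - 1) + (2 * ‖γ 2‖ ^ 2 - 1 / 2) = 0 :=
    (mul_eq_zero.1 (le_antisymm p1 (by linarith))).resolve_left d1.ne'
  have q2 : 3 * (‖γ 1‖ ^ 2 - 1) + 2 * (2 * ‖γ 2‖ ^ 2 - 1 / 2) + (3 * ‖γ 3‖ ^ 2 - 1 / 3) = 0 :=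
    (mul_eq_zero.1 (le_antisymm p2 (by linarith))).resolve_left d2.ne'
  have hsq : ‖γ 1‖ ^ 2 = 1 := by
    refine le_antisymm ?_ (by linarith)
    by_contra hlt
    push Not at hlt
    nlinarith [norm_nonneg (γ 1)]
  nlinarith [norm_nonneg (γ 1)]
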